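/- arXiv:1011.5707 — 2 statements merged into one kernel-verified Lean document; each statement's English description precedes it below -/
import Mathlib

section
/- Let n ≥ 2 be an integer. The map β_n : π_n^top(ℋ_n, 0) → ∏_{i≥1} π_n^top(Y_i^{(n)}, 0), γ ↦ ((R_i)_*(γ))_{i≥1}, is a homeomorphism onto the inverse limit subspace {(γ_i)_{i≥1} : (r_k^i)_*(γ_i) = γ_k for all k ≤ i}, where each π_n^top(Y_i^{(n)}, 0) carries its quotient topology and the product carries the product topology. -/
open scoped Topology Topology.Homotopy unitInterval

noncomputable section

/-- The quotient topology on the `N`-th homotopy group, induced from the compact-open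
topology on the space of generalized loops. -/
instance homotopyGroupTopology (N X : Type*) [TopologicalSpace X] (x : X) :
    TopologicalSpace (HomotopyGroup N X x) :=
  inferInstanceAs (TopologicalSpace (Quotient (GenLoop.Homotopic.setoid N x)))

/-- The `n`-sphere of radius `1/j` centered at `(1/j, 0, …, 0)` in `ℝ^{n+1}`
(it passes through the origin). -/
def hawSphere (n j : ℕ) : Set (EuclideanSpace ℝ (Fin (n+1))) :=
  Metric.sphere (EuclideanSpace.single (0 : Fin (n+1)) ((1 : ℝ)/j)) (1/j)

/-- The `n`-dimensional Hawaiian earring: the union of the spheres `hawSphere n j`, `j ≥ 1`. -/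
def hawaiian (n : ℕ) : Set (EuclideanSpace ℝ (Fin (n+1))) :=
  ⋃ j ∈ {j : ℕ | 1 ≤ j}, hawSphere n j

/-- The union `Y_i^{(n)}` of the first `i` spheres of the `n`-dimensional Hawaiian earring. -/
def Ysub (n i : ℕ) : Set (EuclideanSpace ℝ (Fin (n+1))) :=
  ⋃ j ∈ Finset.Icc 1 i, hawSphere n j

lemma zero_mem_hawSphere (n j : ℕ) : (0 : EuclideanSpace ℝ (Fin (n+1))) ∈ hawSphere n j := by
  have : dist (0 : EuclideanSpace ℝ (Fin (n+1)))
      (EuclideanSpace.single (0 : Fin (n+1)) ((1 : ℝ)/j)) = 1/j := by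
    rw [dist_zero_left, EuclideanSpace.norm_single, Real.norm_eq_abs,
      abs_of_nonneg (one_div_nonneg.mpr (Nat.cast_nonneg j))]
  exact Metric.mem_sphere.mpr this

lemma zero_mem_hawaiian (n : ℕ) : (0 : EuclideanSpace ℝ (Fin (n+1))) ∈ hawaiian n :=
  Set.mem_biUnion (by simp : (1 : ℕ) ∈ {j : ℕ | 1 ≤ j}) (zero_mem_hawSphere n 1)

lemma zero_mem_Ysub (n i : ℕ) : (0 : EuclideanSpace ℝ (Fin (n+1))) ∈ Ysub n (i+1) :=
  Set.mem_biUnion (by simp : (1 : ℕ) ∈ Finset.Icc 1 (i+1)) (zero_mem_hawSphere n 1)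

/-- The basepoint (the origin) of the Hawaiian earring. -/
def hawaiianPt (n : ℕ) : ↥(hawaiian n) := ⟨0, zero_mem_hawaiian n⟩

/-- The basepoint (the origin) of `Y_{i+1}^{(n)}`. -/
def YsubPt (n i : ℕ) : ↥(Ysub n (i+1)) := ⟨0, zero_mem_Ysub n i⟩

/-- Composition of a generalized loop with a basepoint-preserving continuous map. -/
def GenLoop.compCM {X Y : Type*} [TopologicalSpace X] [TopologicalSpace Y] {x : X} {y : Y}
    {N : Type*} (φ : C(X, Y)) (hφ : φ x = y) (p : Ω^ N X x) : Ω^ N Y y :=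
  ⟨φ.comp p.1, fun t ht => by
    simp only [ContinuousMap.comp_apply]
    rw [p.2 t ht, hφ]⟩

/-- The homomorphism `φ_*` induced on `N`-th homotopy groups by a basepoint-preserving
continuous map `φ`, sending the class of a loop `f` to the class of `φ ∘ f`. -/
def piInduced {X Y : Type*} [TopologicalSpace X] [TopologicalSpace Y] {x : X} {y : Y}
    (N : Type*) (φ : C(X, Y)) (hφ : φ x = y) :
    HomotopyGroup N X x → HomotopyGroup N Y y :=
  Quotient.map (GenLoop.compCM φ hφ) fun _ _ h =>
    h.map fun F => F.compContinuousMap φ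

/-- Collapse of the complement of a small ball around `q` to the base point `b`. -/
lemma hawaux_collapse {E : Type*} [NormedAddCommGroup E] [InnerProductSpace ℝ E]
    (q b : Metric.sphere (0 : E) 1) (hqb : b ≠ q) (r : ℝ) (hr : 0 < r) :
    ∃ D : C(I × Metric.sphere (0 : E) 1, Metric.sphere (0 : E) 1),
      (∀ y, D (0, y) = y) ∧ (∀ s, D (s, b) = b) ∧ (∀ y, r ≤ dist y q → D (1, y) = b) := by
  classical
  set st := stereographic (norm_eq_of_mem_sphere q) with hst
  have hsrc : st.source = {q}ᶜ := by simp [hst]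
  have htgt : st.target = Set.univ := by simp [hst]
  let χ : Metric.sphere (0 : E) 1 → ℝ := fun y => max 0 (min 1 (2 * dist y q / r - 1))
  have hχc : Continuous χ := by fun_prop
  let H : ℝ × Metric.sphere (0 : E) 1 → Metric.sphere (0 : E) 1 :=
    fun p => st.symm ((1 - p.1 * χ p.2) • st p.2 + (p.1 * χ p.2) • st b)
  have hχ0 : ∀ y, dist y q < r / 2 → χ y = 0 := by
    intro y hy
    have : 2 * dist y q / r - 1 ≤ 0 := by
      rw [sub_nonpos, div_le_one hr]; linarith
    simp only [χ]
    rw [max_eq_left]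
    exact (min_le_right _ _).trans this
  have hχ1 : ∀ y, r ≤ dist y q → χ y = 1 := by
    intro y hy
    have : 1 ≤ 2 * dist y q / r - 1 := by
      rw [le_sub_iff_add_le, le_div_iff₀ hr]; linarith
    simp only [χ]
    rw [min_eq_left this]; simp
  have hleft : ∀ y, y ≠ q → st.symm (st y) = y := fun y hy => st.left_inv (by rw [hsrc]; exact hy)
  let D : I × Metric.sphere (0 : E) 1 → Metric.sphere (0 : E) 1 :=
    fun p => if p.2 = q then q else H (p.1, p.2)
  have hD : Continuous D := by
    rw [continuous_iff_continuousAt]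
    rintro ⟨s, y⟩
    by_cases hy : y = q
    · subst hy
      have hev : ∀ᶠ p in 𝓝 (s, y), D p = p.2 := by
        have : ∀ᶠ p : I × Metric.sphere (0 : E) 1 in 𝓝 (s, y), dist p.2 y < r / 2 := by
          have hc : Continuous fun p : I × Metric.sphere (0 : E) 1 => dist p.2 y := by fun_prop
          refine hc.continuousAt.eventually_lt continuousAt_const ?_
          simp [hr]
        filter_upwards [this] with p hp
        by_cases hpy : p.2 = y
        · simp [D, hpy]
        · simp only [D, hpy, if_false, H, hχ0 _ hp]
          simp [hleft _ hpy]
      have h2 : ContinuousAt (fun p : I × Metric.sphere (0 : E) 1 => p.2) (s, y) :=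
        continuous_snd.continuousAt
      exact h2.congr (hev.mono fun p hp => hp.symm)
    · have hev : ∀ᶠ p in 𝓝 (s, y), D p = H (p.1, p.2) := by
        have : ∀ᶠ p : I × Metric.sphere (0 : E) 1 in 𝓝 (s, y), p.2 ≠ q :=
          continuous_snd.continuousAt.eventually_ne hy
        filter_upwards [this] with p hp
        simp [D, hp]
      refine ContinuousAt.congr ?_ (hev.mono fun p hp => hp.symm)
      have h1 : ContinuousAt (fun p : I × Metric.sphere (0 : E) 1 => st p.2) (s, y) := by
        refine ContinuousAt.comp (g := st) ?_ continuous_snd.continuousAt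
        exact st.continuousAt (by rw [hsrc]; exact hy)
      refine ContinuousAt.comp (g := st.symm) ?_ ?_
      · exact st.symm.continuousAt (by simp [htgt])
      · have h3 : ContinuousAt (fun p : I × Metric.sphere (0 : E) 1 => (p.1 : ℝ) * χ p.2) (s, y) := by
          apply Continuous.continuousAt; fun_prop
        exact ((continuousAt_const.sub h3).smul h1).add (h3.smul continuousAt_const)
  refine ⟨⟨D, hD⟩, ?_, ?_, ?_⟩
  · intro y
    by_cases hy : y = q
    · simp [D, hy]
    · simp [D, hy, H, hleft]
  · intro s
    simp only [ContinuousMap.coe_mk, D, hqb, if_false, H]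
    rw [← add_smul]
    simp [hleft _ hqb]
  · intro y hy
    have hyq : y ≠ q := by
      rintro rfl
      simp at hy; linarith
    simp [D, hyq, H, hχ1 _ hy, hleft _ hqb]

/-- Smooth approximation of continuous maps from compact subspaces. -/
lemma hawaux_smooth {V Z : Type*} [NormedAddCommGroup V] [NormedSpace ℝ V]
    [FiniteDimensional ℝ V] {k : ℕ}
    [TopologicalSpace Z] [CompactSpace Z] (ι : C(Z, V)) (hι : Function.Injective ι)
    (g : C(Z, EuclideanSpace ℝ (Fin k))) (ε : ℝ) (hε : 0 < ε) :
    ∃ P : V → EuclideanSpace ℝ (Fin k), ContDiff ℝ 1 P ∧ ∀ z, dist (P (ι z)) (g z) < ε := by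
  have hemb : Topology.IsClosedEmbedding ι := ι.continuous.isClosedEmbedding hι
  obtain ⟨G, hG⟩ := ContinuousMap.exists_extension (Y := EuclideanSpace ℝ (Fin k)) hemb g
  obtain ⟨P, hP1, hP2, -⟩ := Continuous.exists_contDiff_approx (n := 1) G.continuous (ε := fun _ => ε)
    continuous_const (fun _ => hε)
  refine ⟨P, hP1, fun z => ?_⟩
  have := hP2 (ι z)
  rw [← hG]
  simpa using this

/-- Radial normalization of a nowhere zero map. -/
def hawaux_nrm {E Y : Type*} [NormedAddCommGroup E] [InnerProductSpace ℝ E] [TopologicalSpace Y]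
    (w : C(Y, E)) (h : ∀ y, w y ≠ 0) : C(Y, Metric.sphere (0 : E) 1) where
  toFun y := ⟨‖w y‖⁻¹ • w y, by
    rw [mem_sphere_zero_iff_norm, norm_smul, norm_inv, norm_norm,
      inv_mul_cancel₀ (norm_ne_zero_iff.mpr (h y))]⟩
  continuous_toFun := by
    refine Continuous.subtype_mk ?_ _
    refine Continuous.smul ?_ w.continuous
    exact (w.continuous.norm).inv₀ (fun y => norm_ne_zero_iff.mpr (h y))

lemma hawaux_nrm_eq {E Y : Type*} [NormedAddCommGroup E] [InnerProductSpace ℝ E]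
    [TopologicalSpace Y] (w : C(Y, E)) (h : ∀ y, w y ≠ 0) (y : Y) (a : Metric.sphere (0 : E) 1)
    (hy : w y = a) : hawaux_nrm w h y = a := by
  apply Subtype.ext
  have : ‖(a : E)‖ = 1 := norm_eq_of_mem_sphere a
  simp [hawaux_nrm, hy, this]

lemma hawaux_nrm_dist {E Y : Type*} [NormedAddCommGroup E] [InnerProductSpace ℝ E]
    [TopologicalSpace Y] (w : C(Y, E)) (h : ∀ y, w y ≠ 0) (y : Y) (a : Metric.sphere (0 : E) 1)
    (ε : ℝ) (hy : dist (w y) a ≤ ε) : dist (hawaux_nrm w h y) a ≤ 2 * ε := by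
  have ha : ‖(a : E)‖ = 1 := norm_eq_of_mem_sphere a
  have h0 : ‖w y‖ ≠ 0 := norm_ne_zero_iff.mpr (h y)
  have h1 : dist (‖w y‖⁻¹ • w y) (w y) ≤ ε := by
    have : ‖w y‖⁻¹ • w y - w y = (‖w y‖⁻¹ - 1) • w y := by rw [sub_smul, one_smul]
    rw [dist_eq_norm, this, norm_smul]
    have h2 : ‖‖w y‖⁻¹ - 1‖ * ‖w y‖ = |1 - ‖w y‖| := by
      rw [Real.norm_eq_abs]
      nth_rewrite 2 [← abs_of_nonneg (norm_nonneg (w y))]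
      rw [← abs_mul, sub_mul, inv_mul_cancel₀ h0, one_mul]
    rw [h2, ← ha]
    refine (abs_norm_sub_norm_le _ _).trans ?_
    rwa [← dist_eq_norm, dist_comm]
  calc dist (hawaux_nrm w h y) a = dist (‖w y‖⁻¹ • w y) (a : E) := rfl
    _ ≤ dist (‖w y‖⁻¹ • w y) (w y) + dist (w y) a := dist_triangle _ _ _
    _ ≤ 2 * ε := by linarith

/-- Approximation and collapse: a map to the sphere is deformed, relative to the
preimage of the base point, to be constant near a thin set. -/
lemma hawaux_approx {V Z : Type*} [NormedAddCommGroup V] [NormedSpace ℝ V]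
    [FiniteDimensional ℝ V] {k : ℕ}
    [TopologicalSpace Z] [CompactSpace Z] (ι : C(Z, V)) (hι : Function.Injective ι)
    (b : Metric.sphere (0 : EuclideanSpace ℝ (Fin k)) 1)
    (g : C(Z, Metric.sphere (0 : EuclideanSpace ℝ (Fin k)) 1))
    (T : Set V) (hT : IsClosed T)
    (hthin : ∀ P : V → EuclideanSpace ℝ (Fin k), ContDiff ℝ 1 P →
      Dense {y : EuclideanSpace ℝ (Fin k) | ∃ (c : ℝ) (v : V), v ∈ T ∧ y = c • P v}ᶜ) :
    ∃ g' : C(Z, Metric.sphere (0 : EuclideanSpace ℝ (Fin k)) 1),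
      g.HomotopicRel g' {z | g z = b} ∧ (∀ z, g' z ≠ b → dist (g z) (-b) ≤ 1 / 2) ∧
      ∃ O : Set Z, IsOpen O ∧ ι ⁻¹' T ⊆ O ∧ ∀ z ∈ O, g' z = b := by
  obtain ⟨P, hP, hPg⟩ := hawaux_smooth ι hι
    ((⟨Subtype.val, continuous_subtype_val⟩ : C(Metric.sphere (0 : EuclideanSpace ℝ (Fin k)) 1, _)).comp g)
    (1 / 8) (by norm_num)
  simp only [ContinuousMap.comp_apply, ContinuousMap.coe_mk] at hPg
  -- the point `q`
  obtain ⟨y, hyC, hyb⟩ : ∃ y ∈ {y : EuclideanSpace ℝ (Fin k) |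
      ∃ (c : ℝ) (v : V), v ∈ T ∧ y = c • P v}ᶜ, y ∈ Metric.ball ((-b : Metric.sphere (0 : EuclideanSpace ℝ (Fin k)) 1) : EuclideanSpace ℝ (Fin k)) (1 / 16) := by
    obtain ⟨y, h1, h2⟩ := (hthin P hP).inter_open_nonempty _ Metric.isOpen_ball
      ⟨_, Metric.mem_ball_self (x := ((-b : Metric.sphere (0 : EuclideanSpace ℝ (Fin k)) 1) : EuclideanSpace ℝ (Fin k))) (ε := 1 / 16) (by norm_num)⟩
    exact ⟨y, h2, h1⟩
  have nb : ‖(b : EuclideanSpace ℝ (Fin k))‖ = 1 := norm_eq_of_mem_sphere b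
  have hnear : ∀ (a : Metric.sphere (0 : EuclideanSpace ℝ (Fin k)) 1)
      (w : EuclideanSpace ℝ (Fin k)), dist w a < 1 → w ≠ 0 := by
    rintro a w hw rfl
    rw [dist_zero_left, norm_eq_of_mem_sphere a] at hw
    exact lt_irrefl _ hw
  have hy0 : y ≠ 0 := hnear (-b) y ((Metric.mem_ball.mp hyb).trans (by norm_num))
  let q : Metric.sphere (0 : EuclideanSpace ℝ (Fin k)) 1 :=
    hawaux_nrm (ContinuousMap.const Unit y) (fun _ => hy0) ()
  have hqa : dist q (-b) ≤ 1 / 8 := by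
    have := hawaux_nrm_dist (ContinuousMap.const Unit y) (fun _ => hy0) () (-b) (1/16)
      (Metric.mem_ball.mp hyb).le
    refine this.trans (by norm_num)
  have hbb : dist b (-b) = 2 := by
    rw [Subtype.dist_eq, dist_eq_norm]
    have : (b : EuclideanSpace ℝ (Fin k)) - ((-b : Metric.sphere (0 : EuclideanSpace ℝ (Fin k)) 1) : EuclideanSpace ℝ (Fin k)) = (2 : ℝ) • (b : EuclideanSpace ℝ (Fin k)) := by
      rw [coe_neg_sphere, sub_neg_eq_add, two_smul]
    rw [this, norm_smul, nb]; norm_num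
  have hbq : 15 / 8 ≤ dist b q := by
    have := dist_triangle b q (-b)
    rw [hbb] at this; linarith
  -- the interpolation
  let w : C(I × Z, EuclideanSpace ℝ (Fin k)) :=
    ⟨fun p => (1 - (p.1 : ℝ)) • (g p.2 : EuclideanSpace ℝ (Fin k)) + (p.1 : ℝ) • P (ι p.2), by
      have := hP.continuous
      fun_prop⟩
  have hwd : ∀ p, dist (w p) (g p.2) ≤ 1 / 8 := by
    intro p
    have : w p - (g p.2 : EuclideanSpace ℝ (Fin k)) =
        (p.1 : ℝ) • (P (ι p.2) - (g p.2 : EuclideanSpace ℝ (Fin k))) := by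
      simp only [w, ContinuousMap.coe_mk]; module
    rw [dist_eq_norm, this, norm_smul, ← dist_eq_norm, Real.norm_eq_abs, abs_of_nonneg p.1.2.1]
    have h1 := p.1.2.2
    have h2 := (hPg p.2).le
    have h3 := p.1.2.1
    have h4 : (0 : ℝ) ≤ dist (P (ι p.2)) (g p.2 : EuclideanSpace ℝ (Fin k)) := dist_nonneg
    nlinarith
  have hw0 : ∀ p, w p ≠ 0 := fun p => hnear (g p.2) _ ((hwd p).trans_lt (by norm_num))
  let N := hawaux_nrm w hw0
  have hN : ∀ p, dist (N p) (g p.2) ≤ 1 / 4 := fun p =>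
    (hawaux_nrm_dist w hw0 p (g p.2) _ (hwd p)).trans (by norm_num)
  have hN0 : ∀ z, N (0, z) = g z := fun z => hawaux_nrm_eq w hw0 _ _ (by simp [w])
  have hqN : ∀ z ∈ ι ⁻¹' T, N (1, z) ≠ q := by
    intro z hz heq
    apply hyC
    have h1 : (‖w (1, z)‖⁻¹ • w (1, z) : EuclideanSpace ℝ (Fin k)) = ‖y‖⁻¹ • y :=
      congrArg Subtype.val heq
    have h2 : w (1, z) = P (ι z) := by simp [w]
    refine ⟨‖y‖ * ‖w (1, z)‖⁻¹, ι z, hz, ?_⟩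
    rw [mul_smul, ← h2, h1, smul_smul, mul_inv_cancel₀ (norm_ne_zero_iff.mpr hy0), one_smul]
  -- radius
  obtain ⟨r, hr0, hr1, hr⟩ : ∃ r : ℝ, 0 < r ∧ r ≤ 1 / 8 ∧ ∀ z ∈ ι ⁻¹' T, r < dist (N (1, z)) q := by
    have hcomp : IsCompact (ι ⁻¹' T) := (hT.preimage ι.continuous).isCompact
    rcases (ι ⁻¹' T).eq_empty_or_nonempty with he | hne
    · exact ⟨1 / 8, by norm_num, le_refl _, by simp [he]⟩
    · have hc : Continuous fun z => dist (N (1, z)) q := by fun_prop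
      obtain ⟨z0, hz0, hmin⟩ := hcomp.exists_isMinOn hne hc.continuousOn
      have hpos : 0 < dist (N (1, z0)) q := dist_pos.mpr (hqN z0 hz0)
      refine ⟨min (1 / 8) (dist (N (1, z0)) q / 2), by positivity, min_le_left _ _, ?_⟩
      intro z hz
      have h1 : dist (N (1, z0)) q ≤ dist (N (1, z)) q := hmin hz
      have h2 := min_le_right (1 / 8) (dist (N (1, z0)) q / 2)
      linarith
  have hbq' : b ≠ q := by
    intro h; rw [h, dist_self] at hbq; linarith
  obtain ⟨D, hD0, hDb, hD1⟩ := hawaux_collapse q b hbq' r hr0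
  let g1 : C(Z, Metric.sphere (0 : EuclideanSpace ℝ (Fin k)) 1) :=
    ⟨fun z => D (1, g z), by fun_prop⟩
  let g' : C(Z, Metric.sphere (0 : EuclideanSpace ℝ (Fin k)) 1) :=
    ⟨fun z => D (1, N (1, z)), by fun_prop⟩
  refine ⟨g', ?_, ?_, ⟨{z | r < dist (N (1, z)) q}, ?_, hr, ?_⟩⟩
  · have H1 : g.HomotopicRel g1 {z | g z = b} := by
      refine ⟨⟨⟨⟨fun p => D (p.1, g p.2), by fun_prop⟩, fun z => hD0 _, fun z => rfl⟩, ?_⟩⟩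
      intro t z hz
      simp only [Set.mem_ofPred_eq] at hz
      change D (t, g z) = g z
      rw [hz, hDb]
    have H2 : g1.HomotopicRel g' {z | g z = b} := by
      refine ⟨⟨⟨⟨fun p => D (1, N p), by fun_prop⟩, fun z => ?_, fun z => rfl⟩, ?_⟩⟩
      · change D (1, N (0, z)) = D (1, g z)
        rw [hN0]
      · intro t z hz
        simp only [Set.mem_ofPred_eq] at hz
        change D (1, N (t, z)) = D (1, g z)
        rw [hz, hDb, hD1]
        have h1 := hN (t, z)
        simp only [hz] at h1
        have h2 := dist_triangle b (N (t, z)) q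
        rw [dist_comm b (N (t, z))] at h2
        linarith
    exact H1.trans H2
  · intro z hz
    have h1 : dist (N (1, z)) q < r := by
      by_contra h
      exact hz (hD1 _ (not_lt.mp h))
    have h2 := hN (1, z)
    have h3 := dist_triangle (g z) (N (1, z)) q
    have h4 := dist_triangle (g z) q (-b)
    rw [dist_comm (g z) (N (1, z))] at h3
    simp only at h2
    linarith
  · exact isOpen_lt continuous_const (by fun_prop)
  · intro z hz
    exact hD1 _ (le_of_lt hz)

/-- Nearby maps to the sphere are homotopic, relative to the coincidence set. -/
lemma hawaux_near {E Z : Type*} [NormedAddCommGroup E] [InnerProductSpace ℝ E]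
    [TopologicalSpace Z] (f g : C(Z, Metric.sphere (0 : E) 1))
    (h : ∀ z, dist (f z) (g z) < 1) : f.HomotopicRel g {z | f z = g z} := by
  let w : C(I × Z, E) :=
    ⟨fun p => (1 - (p.1 : ℝ)) • (f p.2 : E) + (p.1 : ℝ) • (g p.2 : E), by fun_prop⟩
  have hw0 : ∀ p, w p ≠ 0 := by
    intro p hp
    have h1 : w p - (f p.2 : E) = (p.1 : ℝ) • ((g p.2 : E) - (f p.2 : E)) := by
      simp only [w, ContinuousMap.coe_mk]; module
    have h2 : ‖w p - (f p.2 : E)‖ = 1 := by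
      rw [hp, zero_sub, norm_neg, norm_eq_of_mem_sphere]
    have h3 : ‖(g p.2 : E) - (f p.2 : E)‖ < 1 := by
      rw [← dist_eq_norm, dist_comm]; exact h p.2
    rw [h1, norm_smul, Real.norm_eq_abs, abs_of_nonneg p.1.2.1] at h2
    have h4 := p.1.2.1
    have h5 := p.1.2.2
    have h6 := norm_nonneg ((g p.2 : E) - (f p.2 : E))
    nlinarith
  refine ⟨⟨⟨hawaux_nrm w hw0, fun z => ?_, fun z => ?_⟩, ?_⟩⟩
  · exact hawaux_nrm_eq w hw0 _ _ (by simp [w])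
  · exact hawaux_nrm_eq w hw0 _ _ (by simp [w])
  · intro t z hz
    simp only [Set.mem_ofPred_eq] at hz
    refine hawaux_nrm_eq w hw0 _ _ ?_
    simp only [w, ContinuousMap.coe_mk, ← hz]
    module

/-- points with two coordinates in `G` -/
def hawauxT1 (n : ℕ) (G : Finset ℝ) : Set ((Fin n → ℝ) × ℝ) :=
  {p | ∃ a b : Fin n, a ≠ b ∧ p.1 a ∈ G ∧ p.1 b ∈ G}

/-- points with all but one coordinates in `H` -/
def hawauxT2 (n : ℕ) (H : Finset ℝ) : Set (Fin n → ℝ) :=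
  {x | ∃ a : Fin n, ∀ i, i ≠ a → x i ∈ H}

lemma hawaux_T1_closed (n : ℕ) (G : Finset ℝ) : IsClosed (hawauxT1 n G) := by
  have : hawauxT1 n G = ⋃ a : Fin n, ⋃ b : Fin n,
      {p : (Fin n → ℝ) × ℝ | a ≠ b ∧ p.1 a ∈ G ∧ p.1 b ∈ G} := by
    ext p; simp [hawauxT1]
  rw [this]
  refine isClosed_iUnion_of_finite fun a => isClosed_iUnion_of_finite fun b => ?_
  refine IsClosed.and isClosed_const (IsClosed.and ?_ ?_)
  · exact G.finite_toSet.isClosed.preimage (f := fun p : (Fin n → ℝ) × ℝ => p.1 a) (by fun_prop)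
  · exact G.finite_toSet.isClosed.preimage (f := fun p : (Fin n → ℝ) × ℝ => p.1 b) (by fun_prop)

lemma hawaux_T2_closed (n : ℕ) (H : Finset ℝ) : IsClosed (hawauxT2 n H) := by
  have : hawauxT2 n H = ⋃ a : Fin n, ⋂ i : Fin n, ⋂ (_ : i ≠ a), {x : Fin n → ℝ | x i ∈ H} := by
    ext p; simp [hawauxT2]
  rw [this]
  refine isClosed_iUnion_of_finite fun a => isClosed_iInter fun i => isClosed_iInter fun _ => ?_
  exact H.finite_toSet.isClosed.preimage (f := fun p : (Fin n → ℝ) => p i) (by fun_prop)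

lemma hawaux_update_contDiff {n : ℕ} {V : Type*} [NormedAddCommGroup V] [NormedSpace ℝ V]
    (x : V → Fin n → ℝ) (hx : ContDiff ℝ 1 x) (a : Fin n) (s : V → ℝ) (hs : ContDiff ℝ 1 s) :
    ContDiff ℝ 1 (fun v => Function.update (x v) a (s v)) := by
  rw [contDiff_pi]
  intro i
  by_cases h : i = a
  · subst h; simpa using hs
  · simp only [Function.update_of_ne h]
    exact (contDiff_pi.mp hx) i

lemma hawaux_dense {V : Type*} [NormedAddCommGroup V] [NormedSpace ℝ V]
    [FiniteDimensional ℝ V] {κ : Type*} [Countable κ] {k : ℕ} (hk : Module.finrank ℝ V < k)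
    (F : κ → V → EuclideanSpace ℝ (Fin k)) (hF : ∀ i, ContDiff ℝ 1 (F i))
    (s : Set (EuclideanSpace ℝ (Fin k))) (hs : s ⊆ ⋃ i, Set.range (F i)) : Dense sᶜ := by
  apply dense_compl_of_dimH_lt_finrank
  calc dimH s ≤ dimH (⋃ i, Set.range (F i)) := dimH_mono hs
    _ = ⨆ i, dimH (Set.range (F i)) := dimH_iUnion _
    _ ≤ (Module.finrank ℝ V : ENNReal) := iSup_le fun i => (hF i).dimH_range_le
    _ < _ := by rw [finrank_euclideanSpace_fin]; exact_mod_cast hk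

lemma hawaux_thin1 (m : ℕ) (G : Finset ℝ)
    (P : (Fin (m + 2) → ℝ) × ℝ → EuclideanSpace ℝ (Fin (m + 3))) (hP : ContDiff ℝ 1 P) :
    Dense {y : EuclideanSpace ℝ (Fin (m + 3)) |
      ∃ (c : ℝ) (v : (Fin (m + 2) → ℝ) × ℝ), v ∈ hawauxT1 (m + 2) G ∧ y = c • P v}ᶜ := by
  refine hawaux_dense (V := Fin (m + 2) → ℝ) (κ := Fin (m + 2) × Fin (m + 2) × G × G) (by simp)
    (fun i y => y i.2.1 • P (Function.update (Function.update y i.1 i.2.2.1) i.2.1 i.2.2.2, y i.1))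
    ?_ _ ?_
  · intro i
    refine ContDiff.smul (contDiff_apply ℝ ℝ _) (hP.comp (ContDiff.prodMk ?_ (contDiff_apply ℝ ℝ _)))
    exact hawaux_update_contDiff _ (hawaux_update_contDiff _ contDiff_id _ _ contDiff_const) _ _
      contDiff_const
  · rintro y ⟨c, ⟨x, t⟩, ⟨a, b, hab, ha, hb⟩, rfl⟩
    refine Set.mem_iUnion.mpr ⟨(a, b, ⟨x a, ha⟩, ⟨x b, hb⟩),
      Function.update (Function.update x a t) b c, ?_⟩
    have h1 : Function.update (Function.update (Function.update (Function.update x a t) b c) a (x a))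
        b (x b) = x := by
      ext i
      by_cases hi : i = b
      · subst hi; simp
      · by_cases hi' : i = a
        · subst hi'; simp [hi]
        · simp [hi, hi']
    simp only [h1]
    simp [hab]

lemma hawaux_thin2 (m : ℕ) (H : Finset ℝ)
    (P : (Fin (m + 2) → ℝ) → EuclideanSpace ℝ (Fin (m + 3))) (hP : ContDiff ℝ 1 P) :
    Dense {y : EuclideanSpace ℝ (Fin (m + 3)) |
      ∃ (c : ℝ) (v : Fin (m + 2) → ℝ), v ∈ hawauxT2 (m + 2) H ∧ y = c • P v}ᶜ := by
  classical
  refine hawaux_dense (V := ℝ × ℝ) (κ := Fin (m + 2) × (Fin (m + 2) → ↥(insert 0 H)))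
    (by simp)
    (fun i y => y.2 • P (Function.update (fun l => (i.2 l : ℝ)) i.1 y.1)) ?_ _ ?_
  · intro i
    refine ContDiff.smul contDiff_snd (hP.comp ?_)
    exact hawaux_update_contDiff _ contDiff_const _ _ contDiff_fst
  · rintro y ⟨c, x, ⟨a, ha⟩, rfl⟩
    refine Set.mem_iUnion.mpr ⟨(a, fun l => if hl : l = a then ⟨0, by simp⟩ else
      ⟨x l, by simp [ha l hl]⟩), (x a, c), ?_⟩
    simp only
    congr 2
    ext l
    by_cases hl : l = a
    · subst hl; simp
    · simp [hl]

/-- the grid points -/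
def hawauxG (k : ℕ) : Finset ℝ := (Finset.range (k + 1)).image fun i : ℕ => (i : ℝ) / k

/-- the dual grid points -/
def hawauxH (k : ℕ) : Finset ℝ :=
  (Finset.range (k + 2)).image fun i : ℕ => (1 / k : ℝ) * (-(1 / 2) + i)

lemma hawaux_grid (k : ℕ) (hk : 0 < k) (ε : ℝ) (hε : 0 < ε) (hεk : ε ≤ 1 / (2 * k)) :
    ∃ τ : C(I, I), τ 0 = 0 ∧ τ 1 = 1 ∧ (∀ u, |(τ u : ℝ) - u| ≤ 1 / k) ∧
      ∀ u : I, (∀ g ∈ hawauxG k, ε ≤ |(u : ℝ) - g|) → (τ u : ℝ) ∈ hawauxH k := by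
  have hk0 : (0 : ℝ) < k := by exact_mod_cast hk
  let c : ℕ → ℝ → ℝ := fun i u => max 0 (min 1 ((u - i / k) / (2 * ε) + 1 / 2))
  have hc : ∀ i, Continuous (c i) := fun i => by fun_prop
  have hmono : ∀ i, Monotone (c i) := by
    intro i u v huv
    simp only [c]
    gcongr
  have hc1 : ∀ (i : ℕ) (u : ℝ), ε ≤ u - i / k → c i u = 1 := by
    intro i u h
    have : (1 : ℝ) ≤ (u - i / k) / (2 * ε) + 1 / 2 := by
      have : 1 / 2 ≤ (u - i / k) / (2 * ε) := by
        rw [le_div_iff₀ (by positivity)]; linarith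
      linarith
    simp only [c]
    rw [min_eq_left this]; simp
  have hc0 : ∀ (i : ℕ) (u : ℝ), ε ≤ i / k - u → c i u = 0 := by
    intro i u h
    have : (u - i / k) / (2 * ε) + 1 / 2 ≤ 0 := by
      have : (u - i / k) / (2 * ε) ≤ - (1 / 2) := by
        rw [div_le_iff₀ (by positivity)]; linarith
      linarith
    simp only [c]
    rw [max_eq_left ((min_le_right _ _).trans this)]
  let φ : ℝ → ℝ := fun u => (1 / k : ℝ) * (-(1 / 2) + ∑ i ∈ Finset.range (k + 1), c i u)
  have hφc : Continuous φ := by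
    simp only [φ]
    fun_prop
  have hφm : Monotone φ := by
    intro u v huv
    simp only [φ]
    gcongr with i hi
    exact hmono i huv
  have hε1 : ε ≤ 1 / k := by
    refine hεk.trans ?_
    gcongr; linarith
  have hφi : ∀ i : ℕ, i ≤ k → φ (i / k) = i / k := by
    intro i hi
    have h1 : ∀ l ∈ Finset.range (k + 1), c l (i / k) =
        (if l < i then 1 else 0) + (if l = i then 1 / 2 else 0) := by
      intro l _
      rcases lt_trichotomy l i with h | h | h
      · rw [hc1]
        · simp [h, h.ne]
        · have : (l : ℝ) + 1 ≤ i := by exact_mod_cast h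
          rw [← sub_div]
          refine hε1.trans ?_
          gcongr; linarith
      · subst h
        simp only [c, sub_self, zero_div, zero_add]
        norm_num
      · rw [hc0]
        · simp [h.not_gt, h.ne']
        · have : (i : ℝ) + 1 ≤ l := by exact_mod_cast h
          rw [← sub_div]
          refine hε1.trans ?_
          gcongr; linarith
    have h2 : (Finset.range (k + 1)).filter (fun l => l < i) = Finset.range i := by
      ext l; simp; omega
    simp only [φ]
    rw [Finset.sum_congr rfl h1, Finset.sum_add_distrib, Finset.sum_ite_eq' , ← Finset.sum_filter,
      h2]
    simp only [Finset.sum_const, Finset.card_range, Finset.mem_range]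
    rw [if_pos (by omega)]
    simp
    field_simp
  have hφ0 : φ 0 = 0 := by simpa using hφi 0 (by omega)
  have hφ1 : φ 1 = 1 := by simpa [hk0.ne'] using hφi k le_rfl
  have hmem : ∀ u : I, φ u ∈ I := fun u =>
    ⟨hφ0 ▸ hφm u.2.1, hφ1 ▸ hφm u.2.2⟩
  refine ⟨⟨fun u => ⟨φ u, hmem u⟩, by fun_prop⟩, ?_, ?_, ?_, ?_⟩
  · exact Subtype.ext (by simp [hφ0])
  · exact Subtype.ext (by simp [hφ1])
  · intro u
    change |φ u - u| ≤ 1 / k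
    have hu0 := u.2.1
    have hu1 := u.2.2
    rcases hu1.eq_or_lt with h1 | h1
    · rw [h1, hφ1]; simp
    set i := ⌊(k : ℝ) * u⌋₊ with hi
    have hi1 : (i : ℝ) ≤ k * u := Nat.floor_le (by positivity)
    have hi2 : (k : ℝ) * u < i + 1 := Nat.lt_floor_add_one _
    have hik : i < k := by
      have : (i : ℝ) < k := by nlinarith
      exact_mod_cast this
    have h3 : (i : ℝ) / k ≤ u := by rw [div_le_iff₀ hk0]; linarith
    have h4 : (u : ℝ) ≤ ((i + 1 : ℕ) : ℝ) / k := by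
      rw [le_div_iff₀ hk0]; push_cast; linarith
    have h5 := hφm h3
    have h6 := hφm h4
    rw [hφi i hik.le] at h5
    rw [hφi (i + 1) hik] at h6
    have h7 : ((i + 1 : ℕ) : ℝ) / k = i / k + 1 / k := by push_cast; ring
    rw [abs_le]
    constructor <;> linarith
  · intro u hu
    change φ u ∈ hawauxH k
    have h1 : ∀ l ∈ Finset.range (k + 1), c l u = if (l : ℝ) / k < u then 1 else 0 := by
      intro l hl
      have := hu (l / k) (Finset.mem_image_of_mem _ hl)
      split_ifs with h
      · apply hc1
        rwa [abs_of_pos (by linarith)] at this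
      · apply hc0
        rw [abs_of_nonpos (by linarith)] at this
        linarith
    refine Finset.mem_image.mpr ⟨((Finset.range (k + 1)).filter (fun l : ℕ => (l : ℝ) / k < u)).card,
      ?_, ?_⟩
    · have := Finset.card_filter_le (Finset.range (k + 1)) (fun l : ℕ => (l : ℝ) / k < u)
      rw [Finset.card_range] at this
      simp; omega
    · simp only [φ]
      rw [Finset.sum_congr rfl h1, ← Finset.sum_filter]
      simp

/-- Linear interpolation in the unit interval. -/
def hawauxLin (t u v : I) : I :=
  ⟨(1 - (t : ℝ)) * u + t * v, by
    have h1 := t.2.1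
    have h2 := t.2.2
    have h3 := u.2.1
    have h4 := u.2.2
    have h5 := v.2.1
    have h6 := v.2.2
    constructor
    · have : 0 ≤ 1 - (t : ℝ) := by linarith
      positivity
    · nlinarith⟩

lemma hawauxLin_continuous {Y : Type*} [TopologicalSpace Y] (t u v : Y → I)
    (ht : Continuous t) (hu : Continuous u) (hv : Continuous v) :
    Continuous fun y => hawauxLin (t y) (u y) (v y) := by
  unfold hawauxLin
  fun_prop

lemma hawauxLin_zero (u v : I) : hawauxLin 0 u v = u := Subtype.ext (by simp [hawauxLin])
lemma hawauxLin_one (u v : I) : hawauxLin 1 u v = v := Subtype.ext (by simp [hawauxLin])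
lemma hawauxLin_self (t u : I) : hawauxLin t u u = u :=
  Subtype.ext (by simp only [hawauxLin]; ring)
lemma hawauxLin_dist (t u v : I) : |(hawauxLin t u v : ℝ) - u| ≤ |(v : ℝ) - u| := by
  have : (hawauxLin t u v : ℝ) - u = t * (v - u) := by simp only [hawauxLin]; ring
  rw [this, abs_mul, abs_of_nonneg t.2.1]
  have := t.2.2
  have := abs_nonneg ((v : ℝ) - u)
  nlinarith

section
variable {N X : Type*} [TopologicalSpace X] {x : X}

/-- time slice of a homotopy of loops -/
def hawauxSl (H : C(I × (N → I), X)) (hb : ∀ t, ∀ y ∈ Cube.boundary N, H (t, y) = x) (t : I) :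
    Ω^ N X x :=
  ⟨⟨fun y => H (t, y), by fun_prop⟩, fun y hy => hb t y hy⟩

lemma hawauxSl_hom (H : C(I × (N → I), X)) (hb : ∀ t, ∀ y ∈ Cube.boundary N, H (t, y) = x) :
    GenLoop.Homotopic (hawauxSl H hb 0) (hawauxSl H hb 1) := by
  refine ⟨⟨⟨H, fun y => rfl, fun y => rfl⟩, ?_⟩⟩
  intro t y hy
  change H (t, y) = H (0, y)
  rw [hb t y hy, hb 0 y hy]

lemma hawaux_hom (f g : Ω^ N X x) (H : C(I × (N → I), X))
    (hb : ∀ t, ∀ y ∈ Cube.boundary N, H (t, y) = x) (h0 : ∀ y, H (0, y) = f y)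
    (h1 : ∀ y, H (1, y) = g y) : GenLoop.Homotopic f g := by
  have := hawauxSl_hom H hb
  rwa [show hawauxSl H hb 0 = f from GenLoop.ext _ _ h0,
    show hawauxSl H hb 1 = g from GenLoop.ext _ _ h1] at this

/-- coordinatewise reparametrization -/
def hawauxPre (τ : N → C(I, I)) (h0 : ∀ i, τ i 0 = 0) (h1 : ∀ i, τ i 1 = 1) (f : Ω^ N X x) :
    Ω^ N X x :=
  ⟨⟨fun y => f (fun i => τ i (y i)), by
    refine (f.1.continuous).comp ?_
    fun_prop⟩, fun y hy => by
      obtain ⟨i, hi⟩ := hy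
      refine f.2 _ ⟨i, ?_⟩
      rcases hi with hi | hi
      · left; simp only [hi, h0]
      · right; simp only [hi, h1]⟩

lemma hawauxPre_hom (τ : N → C(I, I)) (h0 : ∀ i, τ i 0 = 0) (h1 : ∀ i, τ i 1 = 1)
    (f : Ω^ N X x) : GenLoop.Homotopic f (hawauxPre τ h0 h1 f) := by
  refine hawaux_hom _ _ ⟨fun p => f (fun i => hawauxLin p.1 (p.2 i) (τ i (p.2 i))), ?_⟩ ?_ ?_ ?_
  · refine (f.1.continuous).comp ?_
    refine continuous_pi fun i => hawauxLin_continuous _ _ _ ?_ ?_ ?_ <;> fun_prop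
  · rintro t y ⟨i, hi⟩
    refine f.2 _ ⟨i, ?_⟩
    rcases hi with hi | hi
    · left; simp only [hi, h0, hawauxLin_self]
    · right; simp only [hi, h1, hawauxLin_self]
  · intro y
    simp [hawauxLin_zero]
  · intro y
    simp only [ContinuousMap.coe_mk, hawauxLin_one]
    rfl

end

/-- The infinite wedge, as a subspace of the product. -/
abbrev hawauxW (S : Type*) (b : S) : Type _ :=
  {w : ℕ → S // ∀ i j, i ≠ j → w i = b ∨ w j = b}

/-- base point of the infinite wedge -/
def hawauxW0 {S : Type*} (b : S) : hawauxW S b := ⟨fun _ => b, fun _ _ _ => Or.inl rfl⟩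

section
variable {S : Type*} [TopologicalSpace S] {b : S}

/-- coordinates of the wedge -/
def hawauxPc (j : ℕ) : C(hawauxW S b, S) := 
  ⟨fun w => w.1 j, (continuous_apply j).comp continuous_subtype_val⟩

/-- maps to the wedge from coordinates -/
def hawauxMk {Y : Type*} [TopologicalSpace Y] (v : ℕ → C(Y, S))
    (hv : ∀ i j, i ≠ j → ∀ y, v i y = b ∨ v j y = b) : C(Y, hawauxW S b) :=
  ⟨fun y => ⟨fun j => v j y, fun i j hij => hv i j hij y⟩, by fun_prop⟩

open Classical in
/-- retraction to a sub-wedge -/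
def hawauxRet (A : Set ℕ) : C(hawauxW S b, hawauxW S b) :=
  ⟨fun w => ⟨fun j => if j ∈ A then w.1 j else b, fun i j hij => by
    rcases w.2 i j hij with h | h
    · left; simp [h]
    · right; simp [h]⟩, by
    refine Continuous.subtype_mk (continuous_pi fun j => ?_) _
    by_cases h : j ∈ A
    · simp only [h, if_true]; exact (continuous_apply j).comp continuous_subtype_val
    · simp only [h, if_false]; fun_prop⟩

lemma hawauxRet_mem (A : Set ℕ) (w : hawauxW S b) (j : ℕ) (h : j ∈ A) :
    (hawauxRet A w).1 j = w.1 j := by simp [hawauxRet, h]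

lemma hawauxRet_notMem (A : Set ℕ) (w : hawauxW S b) (j : ℕ) (h : j ∉ A) :
    (hawauxRet A w).1 j = b := by simp [hawauxRet, h]

lemma hawauxRet_zero (A : Set ℕ) : hawauxRet A (hawauxW0 b) = hawauxW0 b := by
  apply Subtype.ext
  funext j
  simp [hawauxRet, hawauxW0]

/-- reparametrization of time -/
def hawauxSq (k : ℕ) : C(I, I) :=
  ⟨fun t => Set.projIcc (0 : ℝ) 1 zero_le_one ((k + 2) * ((k + 1) * (t : ℝ) - k)), by
    refine continuous_projIcc.comp ?_
    fun_prop⟩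

lemma hawauxSq_of_le (k : ℕ) (t : I) (h : (t : ℝ) ≤ k / (k + 1)) : hawauxSq k t = 0 := by
  refine Set.projIcc_of_le_left zero_le_one ?_
  rw [le_div_iff₀ (by positivity)] at h
  have : (0 : ℝ) ≤ k + 2 := by positivity
  nlinarith

lemma hawauxSq_of_ge (k : ℕ) (t : I) (h : ((k : ℝ) + 1) / (k + 2) ≤ t) : hawauxSq k t = 1 := by
  refine Set.projIcc_of_right_le zero_le_one ?_
  rw [div_le_iff₀ (by positivity)] at h
  have : (0 : ℝ) ≤ k := by positivity
  nlinarith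

lemma hawauxSq_zero (k : ℕ) : hawauxSq k 0 = 0 :=
  hawauxSq_of_le _ _ (by simp; positivity)

lemma hawauxSq_one (k : ℕ) : hawauxSq k 1 = 1 :=
  hawauxSq_of_ge _ _ (by rw [div_le_iff₀ (by positivity)]; simp)

open Classical in
/-- finite stages of the infinite concatenation -/
def hawauxG' {Q : Type*} [TopologicalSpace Q] (h : ℕ → C(I × Q, hawauxW S b)) :
    ℕ → I × Q → hawauxW S b
  | 0, p => h 0 (hawauxSq 0 p.1, p.2)
  | N + 1, p => if (p.1 : ℝ) ≤ ((N : ℝ) + 1) / (N + 2) then hawauxG' h N p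
      else h (N + 1) (hawauxSq (N + 1) p.1, p.2)

lemma hawaux_concat {Q : Type*} [TopologicalSpace Q] (h : ℕ → C(I × Q, hawauxW S b))
    (hh : ∀ k y, h k (1, y) = h (k + 1) (0, y)) (hz : ∀ k j, j < k → ∀ p, (h k p).1 j = b)
    (B : Set Q) (hB : ∀ k t, ∀ y ∈ B, h k (t, y) = hawauxW0 b) :
    ∃ H : C(I × Q, hawauxW S b), (∀ y, H (0, y) = h 0 (0, y)) ∧ (∀ y, H (1, y) = hawauxW0 b) ∧
      ∀ t, ∀ y ∈ B, H (t, y) = hawauxW0 b := by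
  have hlt : ∀ N : ℕ, ((N : ℝ) + 1) / (N + 2) < (((N + 1 : ℕ) : ℝ) + 1) / ((N + 1 : ℕ) + 2) := by
    intro N
    rw [div_lt_div_iff₀ (by positivity) (by positivity)]
    push_cast; nlinarith
  have hA : ∀ (N : ℕ) (p : I × Q), ((N : ℝ) + 1) / (N + 2) ≤ p.1 → hawauxG' h N p = h N (1, p.2) := by
    intro N p hp
    cases N with
    | zero => simp only [hawauxG']; rw [hawauxSq_of_ge _ _ hp]
    | succ N =>
      have := hlt N
      rw [hawauxG', if_neg (by linarith), hawauxSq_of_ge _ _ hp]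
  have hc : ∀ N, Continuous (hawauxG' h N) := by
    intro N
    induction N with
    | zero =>
      have : hawauxG' h 0 = fun p => h 0 (hawauxSq 0 p.1, p.2) := by funext p; rw [hawauxG']
      rw [this]; fun_prop
    | succ N ih =>
      have : hawauxG' h (N + 1) = fun p => if (p.1 : ℝ) ≤ ((N : ℝ) + 1) / (N + 2)
        then hawauxG' h N p else h (N + 1) (hawauxSq (N + 1) p.1, p.2) := by
        funext p; rw [hawauxG']
      rw [this]
      refine Continuous.if_le ih (by fun_prop) (by fun_prop) continuous_const ?_
      intro p hp
      rw [hA N p hp.ge, hh, hawauxSq_of_le]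
      rw [hp]; push_cast; apply le_of_eq; ring
  have hs : ∀ N j, j ≤ N → ∀ p, (hawauxG' h N p).1 j = (hawauxG' h j p).1 j := by
    intro N j hj p
    induction N, hj using Nat.le_induction with
    | base => rfl
    | succ N hN ih =>
      rw [← ih, hawauxG']
      split_ifs with hp
      · rfl
      · rw [hz _ _ (by omega), hA N p (le_of_lt (not_le.mp hp)), hh, hz _ _ (by omega)]
  have h0 : ∀ N y, hawauxG' h N (0, y) = h 0 (0, y) := by
    intro N y
    induction N with
    | zero => simp only [hawauxG']; rw [hawauxSq_zero]
    | succ N ih =>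
      rw [hawauxG', if_pos, ih]
      simp; positivity
  have hBd : ∀ N t, ∀ y ∈ B, hawauxG' h N (t, y) = hawauxW0 b := by
    intro N t y hy
    induction N with
    | zero => simp only [hawauxG']; rw [hB _ _ _ hy]
    | succ N ih =>
      rw [hawauxG']
      split_ifs
      · exact ih
      · exact hB _ _ _ hy
  refine ⟨hawauxMk (fun j => ⟨fun p => (hawauxG' h j p).1 j, ?_⟩) ?_, ?_, ?_, ?_⟩
  · exact (continuous_apply j).comp (continuous_subtype_val.comp (hc j))
  · intro i j hij p
    simp only [ContinuousMap.coe_mk]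
    rw [← hs (max i j) i (le_max_left _ _), ← hs (max i j) j (le_max_right _ _)]
    exact (hawauxG' h (max i j) p).2 i j hij
  · intro y
    apply Subtype.ext; funext j
    simp only [hawauxMk, ContinuousMap.coe_mk, h0]
  · intro y
    apply Subtype.ext; funext j
    simp only [hawauxMk, ContinuousMap.coe_mk]
    rw [hA j (1, y), hh, hz _ _ (by omega)]
    · rfl
    · rw [div_le_iff₀ (by positivity)]; simp
  · intro t y hy
    apply Subtype.ext; funext j
    simp only [hawauxMk, ContinuousMap.coe_mk, hBd _ _ _ hy]

end

lemma hawaux_wmk {S Y : Type*} [TopologicalSpace S] [TopologicalSpace Y] {b : S} (k : ℕ)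
    (A : C(Y, S)) (B : ℕ → C(Y, S)) (hAB : ∀ j, j ≠ k → ∀ p, A p ≠ b → B j p = b)
    (hBB : ∀ i j, i ≠ j → i ≠ k → j ≠ k → ∀ p, B i p = b ∨ B j p = b) :
    ∃ H : C(Y, hawauxW S b), (∀ p, (H p).1 k = A p) ∧ ∀ j, j ≠ k → ∀ p, (H p).1 j = B j p := by
  refine ⟨hawauxMk (fun j => if j = k then A else B j) ?_, ?_, ?_⟩
  · intro i j hij y
    by_cases hi : i = k
    · subst hi
      have hj : j ≠ i := hij.symm
      simp only [if_true, if_neg hj]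
      by_cases h : A y = b
      · exact Or.inl h
      · exact Or.inr (hAB j hj y h)
    · by_cases hj : j = k
      · subst hj
        simp only [if_true, if_neg hi]
        by_cases h : A y = b
        · exact Or.inr h
        · exact Or.inl (hAB i hi y h)
      · simp only [if_neg hi, if_neg hj]
        exact hBB i j hij hi hj y
  · intro p
    simp [hawauxMk]
  · intro j hj p
    simp [hawauxMk, hj]

lemma hawaux_wext {S : Type*} {b : S} (k : ℕ) (v w : hawauxW S b) (h1 : v.1 k = w.1 k)
    (h2 : ∀ j, j ≠ k → v.1 j = w.1 j) : v = w := by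
  apply Subtype.ext; funext j
  by_cases hj : j = k
  · rw [hj, h1]
  · exact h2 j hj

/-- embedding of the cube -/
def hawauxIota2 (n : ℕ) : C(Fin n → I, Fin n → ℝ) := ⟨fun x i => x i, by fun_prop⟩

/-- embedding of the cylinder -/
def hawauxIota1 (n : ℕ) : C(I × (Fin n → I), (Fin n → ℝ) × ℝ) :=
  ⟨fun p => (fun i => p.2 i, p.1), by fun_prop⟩

lemma hawauxIota2_inj (n : ℕ) : Function.Injective (hawauxIota2 n) := by
  intro x y h
  funext i
  exact Subtype.ext (congrFun h i)

lemma hawauxIota1_inj (n : ℕ) : Function.Injective (hawauxIota1 n) := by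
  rintro ⟨t, x⟩ ⟨s, y⟩ h
  have h1 : (fun i => (x i : ℝ)) = fun i => (y i : ℝ) := congrArg Prod.fst h
  have h2 : (t : ℝ) = s := congrArg Prod.snd h
  refine Prod.ext (Subtype.ext h2) (funext fun i => Subtype.ext (congrFun h1 i))

/-- Two coordinates close to the grid put the point close to `T1`. -/
lemma hawaux_twoclose (n K : ℕ) (hK : 0 < K) (ε : ℝ) (hε : 0 < ε) (t : I) (x : Fin n → I)
    (a c : Fin n) (hac : a ≠ c) (ha : ∃ g ∈ hawauxG K, |(x a : ℝ) - g| < ε)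
    (hc : ∃ g ∈ hawauxG K, |(x c : ℝ) - g| < ε) :
    (t, x) ∈ Metric.thickening ε (hawauxIota1 n ⁻¹' hawauxT1 n (hawauxG K)) := by
  have hG : ∀ g ∈ hawauxG K, g ∈ Set.Icc (0 : ℝ) 1 := by
    intro g hg
    simp only [hawauxG, Finset.mem_image, Finset.mem_range] at hg
    obtain ⟨i, hi, rfl⟩ := hg
    have hK' : (0 : ℝ) < K := by exact_mod_cast hK
    refine ⟨by positivity, ?_⟩
    rw [div_le_one hK']
    exact_mod_cast Nat.lt_succ_iff.mp hi
  obtain ⟨g, hg, hga⟩ := ha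
  obtain ⟨g', hg', hgc⟩ := hc
  rw [Metric.mem_thickening_iff]
  refine ⟨(t, Function.update (Function.update x a ⟨g, hG g hg⟩) c ⟨g', hG g' hg'⟩), ?_, ?_⟩
  · refine ⟨a, c, hac, ?_, ?_⟩
    · simpa [hawauxIota1, Function.update_of_ne hac] using hg
    · simpa [hawauxIota1] using hg'
  · rw [Prod.dist_eq, dist_self]
    refine max_lt hε ((dist_pi_lt_iff hε).2 fun i => ?_)
    dsimp only
    by_cases hi : i = c
    · subst hi
      rw [Function.update_self, Subtype.dist_eq, Real.dist_eq]
      exact hgc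
    · rw [Function.update_of_ne hi]
      by_cases hi' : i = a
      · subst hi'
        rw [Function.update_self, Subtype.dist_eq, Real.dist_eq]
        exact hga
      · rw [Function.update_of_ne hi', dist_self]; exact hε

lemma hawaux_step (m k : ℕ) {b : Metric.sphere (0 : EuclideanSpace ℝ (Fin (m + 3))) 1}
    (f : Ω^ (Fin (m + 2)) (hawauxW _ b) (hawauxW0 b))
    (hf : GenLoop.Homotopic (GenLoop.compCM (y := b) (hawauxPc k) rfl f) GenLoop.const) :
    ∃ g : Ω^ (Fin (m + 2)) (hawauxW _ b) (hawauxW0 b),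
      GenLoop.Homotopic f g ∧ ∀ x, (g x).1 k = b := by
  obtain ⟨F⟩ := hf
  let fc : ∀ j : ℕ, C(Fin (m + 2) → I, Metric.sphere (0 : EuclideanSpace ℝ (Fin (m + 3))) 1) :=
    fun j => (hawauxPc j).comp f.1
  have hfc : ∀ j x, fc j x = (f x).1 j := fun j x => rfl
  have hfd : ∀ i j, i ≠ j → ∀ x, fc i x = b ∨ fc j x = b := fun i j hij x => (f x).2 i j hij
  have hfb : ∀ j, ∀ x ∈ Cube.boundary (Fin (m + 2)), fc j x = b := by
    intro j x hx
    rw [hfc, GenLoop.boundary f x hx]; rfl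
  let F0 : C(I × (Fin (m + 2) → I), Metric.sphere (0 : EuclideanSpace ℝ (Fin (m + 3))) 1) :=
    F.toContinuousMap
  have hF0 : ∀ x, F0 (0, x) = fc k x := fun x => F.apply_zero x
  have hF1 : ∀ x, F0 (1, x) = b := fun x => F.apply_one x
  have hFb : ∀ t, ∀ x ∈ Cube.boundary (Fin (m + 2)), F0 (t, x) = b := by
    intro t x hx
    have := F.eq_fst t hx
    exact this.trans (hfb k x hx)
  -- δ and K
  have hbb : dist b (-b) = 2 := by
    rw [Subtype.dist_eq, dist_eq_norm]
    have : ((b : EuclideanSpace ℝ (Fin (m + 3))) - ((-b : Metric.sphere (0 : EuclideanSpace ℝ (Fin (m + 3))) 1) : EuclideanSpace ℝ (Fin (m + 3)))) = (2 : ℝ) • (b : EuclideanSpace ℝ (Fin (m + 3))) := by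
      rw [show ((-b : Metric.sphere (0 : EuclideanSpace ℝ (Fin (m + 3))) 1) : EuclideanSpace ℝ (Fin (m + 3))) = -(b : EuclideanSpace ℝ (Fin (m + 3))) from rfl]
      module
    rw [this, norm_smul, norm_eq_of_mem_sphere]; norm_num
  obtain ⟨δ, hδ, hδU⟩ := (IsClosed.isCompact (s := {x | dist (fc k x) (-b) ≤ 1 / 2})
    (isClosed_le (by fun_prop) continuous_const)).exists_thickening_subset_open
    (t := {x | fc k x ≠ b}) (isOpen_ne_fun (fc k).continuous continuous_const) (by
      intro x hx hxb
      simp only [Set.mem_ofPred_eq] at hx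
      rw [show fc k x = b from hxb, hbb] at hx
      norm_num at hx)
  obtain ⟨K0, hK0⟩ := exists_nat_one_div_lt hδ
  set K := K0 + 1 with hKdef
  have hK : 0 < K := Nat.succ_pos _
  have hKδ : 1 / (K : ℝ) < δ := by rw [hKdef]; push_cast; exact hK0
  obtain ⟨F', ⟨HF⟩, hF'A, O, hO, hTO, hF'O⟩ := hawaux_approx (hawauxIota1 (m + 2))
    (hawauxIota1_inj _) b F0 (hawauxT1 (m + 2) (hawauxG K)) (hawaux_T1_closed _ _)
    (hawaux_thin1 m _)
  have happ := fun j => hawaux_approx (hawauxIota2 (m + 2))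
    (hawauxIota2_inj _) b (fc j) (hawauxT2 (m + 2) (hawauxH K)) (hawaux_T2_closed _ _)
    (hawaux_thin2 m _)
  choose f' hf'h _ O' _ hTO' hf'O using happ
  have hf'h' : ∀ j, Nonempty ((fc j).HomotopyRel (f' j) {z | fc j z = b}) := hf'h
  let Hf := fun j => (hf'h' j).some
  have hHfb : ∀ j s x, fc j x = b → Hf j (s, x) = b := by
    intro j s x hx
    have := (Hf j).eq_fst s (x := x) hx
    exact this.trans hx
  have hf'b : ∀ j x, fc j x = b → f' j x = b := by
    intro j x hx
    rw [← hHfb j 1 x hx]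
    exact ((Hf j).apply_one x).symm
  have hHFb : ∀ s z, F0 z = b → HF (s, z) = b := by
    intro s z hz
    exact (HF.eq_fst s (x := z) hz).trans hz
  have hF'b : ∀ z, F0 z = b → F' z = b := by
    intro z hz
    rw [← hHFb 1 z hz]
    exact (HF.apply_one z).symm
  obtain ⟨η, hη, hηO⟩ := (IsClosed.isCompact ((hawaux_T1_closed (m + 2) (hawauxG K)).preimage
    (hawauxIota1 (m + 2)).continuous)).exists_thickening_subset_open hO hTO
  have hK0' : (0 : ℝ) < K := by exact_mod_cast hK
  set ε := min η (1 / (2 * (K : ℝ))) with hε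
  have hε0 : 0 < ε := lt_min hη (by positivity)
  obtain ⟨τ, hτ0, hτ1, hτd, hτH⟩ := hawaux_grid K hK ε hε0 (min_le_right _ _)
  -- key claim
  have hkey : ∀ t x, F' (t, x) ≠ b → ∀ j, f' j (fun i => τ (x i)) = b := by
    intro t x hne j
    apply hf'O
    apply hTO'
    change ∃ a : Fin (m + 2), ∀ i, i ≠ a → (τ (x i) : ℝ) ∈ hawauxH K
    by_cases hall : ∀ i, ∀ g ∈ hawauxG K, ε ≤ |(x i : ℝ) - g|
    · exact ⟨0, fun i _ => hτH _ (hall i)⟩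
    · push Not at hall
      obtain ⟨a, ha⟩ := hall
      refine ⟨a, fun i hi => hτH _ ?_⟩
      by_contra hcon
      push Not at hcon
      refine hne (hF'O _ (hηO (Metric.thickening_mono (min_le_left _ _) _
        (hawaux_twoclose (m + 2) K hK ε hε0 t x i a hi hcon ha))))
  have hkey2 : ∀ s x, F' (0, x) ≠ b → ∀ j, j ≠ k →
      f' j (fun i => hawauxLin s (x i) (τ (x i))) = b := by
    intro s x hne j hj
    apply hf'b
    have h1 := hF'A _ hne
    rw [hF0] at h1
    have h2 : (fun i => hawauxLin s (x i) (τ (x i))) ∈ {x | fc k x ≠ b} := by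
      apply hδU
      rw [Metric.mem_thickening_iff]
      refine ⟨x, h1, (dist_pi_lt_iff hδ).2 fun i => ?_⟩
      rw [Subtype.dist_eq, Real.dist_eq]
      exact lt_of_le_of_lt ((hawauxLin_dist _ _ _).trans (hτd _)) hKδ
    rcases hfd j k hj (fun i => hawauxLin s (x i) (τ (x i))) with h | h
    · exact h
    · exact absurd h h2
  -- phases
  have hbl : ∀ s, ∀ x ∈ Cube.boundary (Fin (m + 2)),
      (fun i => hawauxLin s (x i) (τ (x i))) ∈ Cube.boundary (Fin (m + 2)) := by
    rintro s x ⟨i, hi⟩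
    refine ⟨i, ?_⟩
    rcases hi with hi | hi
    · left; simp only [hi, hτ0, hawauxLin_self]
    · right; simp only [hi, hτ1, hawauxLin_self]
  have hlc : Continuous fun p : I × (Fin (m + 2) → I) =>
      (fun i => hawauxLin p.1 (p.2 i) (τ (p.2 i))) := by
    refine continuous_pi fun i => hawauxLin_continuous _ _ _ ?_ ?_ ?_ <;> fun_prop
  obtain ⟨H1, h1k, h1j⟩ := hawaux_wmk (b := b) k
    (HF.toContinuousMap.comp ⟨fun p : I × (Fin (m + 2) → I) => (p.1, ((0 : I), p.2)), by fun_prop⟩)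
    (fun j => (Hf j).toContinuousMap) (by
      intro j hj p hp
      apply hHfb
      rcases hfd j k hj p.2 with h | h
      · exact h
      · exact absurd (hHFb p.1 (0, p.2) ((hF0 _).trans h)) hp) (by
      intro i j hij _ _ p
      exact (hfd i j hij p.2).imp (hHfb _ _ _) (hHfb _ _ _))
  obtain ⟨H2, h2k, h2j⟩ := hawaux_wmk (b := b) k
    (F'.comp ⟨fun p : I × (Fin (m + 2) → I) => ((0 : I), p.2), by fun_prop⟩)
    (fun j => (f' j).comp ⟨_, hlc⟩) (by
      intro j hj p hp
      exact hkey2 p.1 p.2 hp j hj) (by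
      intro i j hij _ _ p
      exact (hfd i j hij _).imp (hf'b _ _) (hf'b _ _))
  obtain ⟨H3, h3k, h3j⟩ := hawaux_wmk (b := b) k F'
    (fun j => (f' j).comp ⟨fun p : I × (Fin (m + 2) → I) => fun i => τ (p.2 i), by fun_prop⟩) (by
      intro j hj p hp
      exact hkey p.1 p.2 hp j) (by
      intro i j hij _ _ p
      exact (hfd i j hij _).imp (hf'b _ _) (hf'b _ _))
  have hb1 : ∀ t, ∀ y ∈ Cube.boundary (Fin (m + 2)), H1 (t, y) = hawauxW0 b := by
    intro t y hy
    refine hawaux_wext k _ _ ((h1k _).trans ?_) fun j hj => (h1j j hj _).trans ?_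
    · exact hHFb _ _ (hFb _ _ hy)
    · exact hHfb _ _ _ (hfb _ _ hy)
  have hb2 : ∀ t, ∀ y ∈ Cube.boundary (Fin (m + 2)), H2 (t, y) = hawauxW0 b := by
    intro t y hy
    refine hawaux_wext k _ _ ((h2k _).trans ?_) fun j hj => (h2j j hj _).trans ?_
    · exact hF'b _ (hFb _ _ hy)
    · exact hf'b _ _ (hfb _ _ (hbl t y hy))
  have hb3 : ∀ t, ∀ y ∈ Cube.boundary (Fin (m + 2)), H3 (t, y) = hawauxW0 b := by
    intro t y hy
    refine hawaux_wext k _ _ ((h3k _).trans ?_) fun j hj => (h3j j hj _).trans ?_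
    · exact hF'b _ (hFb _ _ hy)
    · refine hf'b _ _ (hfb _ _ ?_)
      have := hbl 1 y hy
      simp only [hawauxLin_one] at this
      exact this
  have e1 : hawauxSl H1 hb1 0 = f := by
    refine GenLoop.ext _ _ fun y => hawaux_wext k _ _ ((h1k _).trans ?_)
      fun j hj => (h1j j hj _).trans ?_
    · exact (HF.apply_zero (0, y)).trans (hF0 y)
    · exact (Hf j).apply_zero y
  have e2 : hawauxSl H1 hb1 1 = hawauxSl H2 hb2 0 := by
    refine GenLoop.ext _ _ fun y => hawaux_wext k _ _ (((h1k _).trans ?_).trans (h2k _).symm)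
      fun j hj => ((h1j j hj _).trans ?_).trans (h2j j hj _).symm
    · exact HF.apply_one (0, y)
    · refine ((Hf j).apply_one y).trans ?_
      simp only [ContinuousMap.comp_apply, ContinuousMap.coe_mk, hawauxLin_zero]
  have e3 : hawauxSl H2 hb2 1 = hawauxSl H3 hb3 0 := by
    refine GenLoop.ext _ _ fun y => hawaux_wext k _ _ (((h2k _).trans ?_).trans (h3k _).symm)
      fun j hj => ((h2j j hj _).trans ?_).trans (h3j j hj _).symm
    · rfl
    · simp only [ContinuousMap.comp_apply, ContinuousMap.coe_mk, hawauxLin_one]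
  refine ⟨hawauxSl H3 hb3 1, ?_, ?_⟩
  · have t1 := hawauxSl_hom H1 hb1
    rw [e1, e2] at t1
    have t2 := hawauxSl_hom H2 hb2
    rw [e3] at t2
    exact (t1.trans t2).trans (hawauxSl_hom H3 hb3)
  · intro x
    exact (h3k _).trans (hF'b _ (hF1 x))

lemma hawaux_map {X Y N : Type*} [TopologicalSpace X] [TopologicalSpace Y] {x : X} {y : Y}
    (φ : C(X, Y)) (hφ : φ x = y) {f g : Ω^ N X x} (h : GenLoop.Homotopic f g) :
    GenLoop.Homotopic (GenLoop.compCM φ hφ f) (GenLoop.compCM φ hφ g) :=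
  h.map fun F => F.compContinuousMap φ

lemma hawaux_core (m : ℕ) {b : Metric.sphere (0 : EuclideanSpace ℝ (Fin (m + 3))) 1}
    (f : Ω^ (Fin (m + 2)) (hawauxW _ b) (hawauxW0 b))
    (hf : ∀ k, GenLoop.Homotopic (GenLoop.compCM (y := b) (hawauxPc k) rfl f) GenLoop.const) :
    GenLoop.Homotopic f GenLoop.const := by
  let Rt : ℕ → Ω^ (Fin (m + 2)) (hawauxW _ b) (hawauxW0 b) →
    Ω^ (Fin (m + 2)) (hawauxW _ b) (hawauxW0 b) :=
    fun k g => GenLoop.compCM (hawauxRet {j | k ≤ j}) (hawauxRet_zero _) g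
  have hRt1 : ∀ k g x j, k ≤ j → (Rt k g x).1 j = (g x).1 j :=
    fun k g x j h => hawauxRet_mem _ _ _ h
  have hRt2 : ∀ k g x j, j < k → (Rt k g x).1 j = b :=
    fun k g x j h => hawauxRet_notMem _ _ _ (by simpa using h)
  have hRtm : ∀ k {g g'}, GenLoop.Homotopic g g' → GenLoop.Homotopic (Rt k g) (Rt k g') :=
    fun k g g' h => hawaux_map _ _ h
  have hRR : ∀ k l g, k ≤ l → Rt k (Rt l g) = Rt l g := by
    intro k l g hkl
    refine GenLoop.ext _ _ fun x => Subtype.ext (funext fun j => ?_)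
    by_cases h : k ≤ j
    · rw [hRt1 _ _ _ _ h]
    · rw [hRt2 _ _ _ _ (by omega), hRt2 _ _ _ _ (by omega)]
  have hRR' : ∀ k l g, k ≤ l → Rt l (Rt k g) = Rt l g := by
    intro k l g hkl
    refine GenLoop.ext _ _ fun x => Subtype.ext (funext fun j => ?_)
    by_cases h : l ≤ j
    · rw [hRt1 _ _ _ _ h, hRt1 _ _ _ _ h, hRt1 _ _ _ _ (by omega)]
    · rw [hRt2 _ _ _ _ (by omega), hRt2 _ _ _ _ (by omega)]
  have hstep : ∀ k, GenLoop.Homotopic (Rt k f) (Rt (k + 1) f) := by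
    intro k
    obtain ⟨g, hg, hgk⟩ := hawaux_step m k (Rt k f) (by
      convert hf k using 1
      exact GenLoop.ext _ _ fun x => hRt1 k f x k le_rfl)
    have e : Rt k g = Rt (k + 1) g := by
      refine GenLoop.ext _ _ fun x => Subtype.ext (funext fun j => ?_)
      rcases lt_trichotomy j k with h | h | h
      · rw [hRt2 _ _ _ _ (by omega), hRt2 _ _ _ _ (by omega)]
      · subst h
        rw [hRt1 _ _ _ _ le_rfl, hRt2 _ _ _ _ (by omega), hgk]
      · rw [hRt1 _ _ _ _ (by omega), hRt1 _ _ _ _ (by omega)]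
    have t1 := hRtm k hg
    rw [hRR _ _ _ le_rfl, e] at t1
    have t2 := hRtm (k + 1) hg
    rw [hRR' _ _ _ (by omega)] at t2
    exact t1.trans t2.symm
  let Hs := fun k => (hstep k).some
  obtain ⟨H, H0, H1, HB⟩ := hawaux_concat (b := b)
    (fun k => (hawauxRet {j | k ≤ j}).comp (Hs k).toContinuousMap) (by
      intro k y
      have a1 : (Hs k).toContinuousMap (1, y) = Rt (k + 1) f y := (Hs k).apply_one y
      have a2 : (Hs (k + 1)).toContinuousMap (0, y) = Rt (k + 1) f y := (Hs (k + 1)).apply_zero y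
      simp only [ContinuousMap.comp_apply]
      rw [a1, a2]
      have := congrArg (fun g => g y) (hRR k (k + 1) f (by omega))
      have h2 := congrArg (fun g => g y) (hRR (k + 1) (k + 1) f (by omega))
      exact this.trans h2.symm) (by
      intro k j hj p
      exact hawauxRet_notMem _ _ _ (by simpa using hj))
    (Cube.boundary (Fin (m + 2))) (by
      intro k t y hy
      have a1 : (Hs k).toContinuousMap (t, y) = Rt k f y := (Hs k).eq_fst t hy
      simp only [ContinuousMap.comp_apply]
      rw [a1, GenLoop.boundary _ _ hy, hawauxRet_zero])
  have h0 : Rt 0 f = f := GenLoop.ext _ _ fun x => Subtype.ext (funext fun j =>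
    hRt1 _ _ _ _ (Nat.zero_le _))
  refine hawaux_hom _ _ H HB ?_ H1
  intro y
  rw [H0]
  have a1 : (Hs 0).toContinuousMap (0, y) = Rt 0 f y := (Hs 0).apply_zero y
  simp only [ContinuousMap.comp_apply]
  rw [a1, h0]
  exact congrArg (fun g => g y) h0

lemma hawaux_transAt {X Y N : Type*} [DecidableEq N] [TopologicalSpace X] [TopologicalSpace Y]
    {x : X} {y : Y} (φ : C(X, Y)) (hφ : φ x = y) (i : N) (f g : Ω^ N X x) :
    GenLoop.compCM φ hφ (GenLoop.transAt i f g) =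
      GenLoop.transAt i (GenLoop.compCM φ hφ f) (GenLoop.compCM φ hφ g) := by
  refine GenLoop.ext _ _ fun t => ?_
  change φ (GenLoop.transAt i f g t) = _
  simp only [GenLoop.transAt, GenLoop.coe_copy]
  split_ifs <;> rfl

/-- the induced map as a homomorphism -/
def hawauxHom {X Y : Type*} [TopologicalSpace X] [TopologicalSpace Y] {x : X} {y : Y}
    (N : Type*) [DecidableEq N] [Nonempty N] (φ : C(X, Y)) (hφ : φ x = y) :
    HomotopyGroup N X x →* HomotopyGroup N Y y :=
  MonoidHom.mk' (piInduced N φ hφ) (by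
    intro a c
    induction a using Quotient.inductionOn with | _ f => ?_
    induction c using Quotient.inductionOn with | _ g => ?_
    let i : N := Classical.arbitrary N
    have h1 := HomotopyGroup.mul_spec (i := i) (p := f) (q := g)
    have h2 := HomotopyGroup.mul_spec (i := i) (p := GenLoop.compCM φ hφ f) (q := GenLoop.compCM φ hφ g)
    refine (congrArg (piInduced N φ hφ) h1).trans (Eq.trans ?_ h2.symm)
    rw [← hawaux_transAt]
    rfl)

lemma hawaux_inj (m : ℕ) {b : Metric.sphere (0 : EuclideanSpace ℝ (Fin (m + 3))) 1}
    (a c : HomotopyGroup (Fin (m + 2)) (hawauxW _ b) (hawauxW0 b))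
    (h : ∀ j, piInduced (Fin (m + 2)) (y := b) (hawauxPc j) rfl a =
      piInduced (Fin (m + 2)) (y := b) (hawauxPc j) rfl c) : a = c := by
  have h' : ∀ j, hawauxHom (Fin (m + 2)) (x := hawauxW0 b) (y := b) (hawauxPc j) rfl (a * c⁻¹) = 1 := by
    intro j
    rw [map_mul, map_inv, mul_inv_eq_one]
    exact h j
  rw [← mul_inv_eq_one]
  generalize a * c⁻¹ = d at h'
  induction d using Quotient.inductionOn with | _ f => ?_
  rw [HomotopyGroup.one_def]
  refine Quotient.sound (hawaux_core m f fun k => ?_)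
  have := h' k
  rw [HomotopyGroup.one_def] at this
  exact Quotient.exact this

lemma hawaux_pi_comp {X Y Z N : Type*} [TopologicalSpace X] [TopologicalSpace Y]
    [TopologicalSpace Z] {x : X} {y : Y} {z : Z} (φ : C(X, Y)) (hφ : φ x = y) (ψ : C(Y, Z))
    (hψ : ψ y = z) (χ : C(X, Z)) (hχ : χ x = z) (h : ∀ u, ψ (φ u) = χ u)
    (a : HomotopyGroup N X x) :
    piInduced N ψ hψ (piInduced N φ hφ a) = piInduced N χ hχ a := by
  induction a using Quotient.inductionOn with | _ f => ?_
  refine congrArg (Quotient.mk (GenLoop.Homotopic.setoid N z)) ?_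
  exact GenLoop.ext _ _ fun t => h _

lemma hawaux_pi_id {X N : Type*} [TopologicalSpace X] {x : X} (φ : C(X, X)) (hφ : φ x = x)
    (h : ∀ u, φ u = u) (a : HomotopyGroup N X x) : piInduced N φ hφ a = a := by
  induction a using Quotient.inductionOn with | _ f => ?_
  refine congrArg (Quotient.mk (GenLoop.Homotopic.setoid N x)) ?_
  exact GenLoop.ext _ _ fun t => h _

lemma hawaux_pi_const {X Y N : Type*} [TopologicalSpace X] [TopologicalSpace Y] {x : X} {y : Y}
    (φ : C(X, Y)) (hφ : φ x = y) (h : ∀ u, φ u = y) (a : HomotopyGroup N X x) :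
    piInduced N φ hφ a = (Quotient.mk (GenLoop.Homotopic.setoid N y) GenLoop.const) := by
  induction a using Quotient.inductionOn with | _ f => ?_
  refine congrArg (Quotient.mk (GenLoop.Homotopic.setoid N y)) ?_
  exact GenLoop.ext _ _ fun t => h _

lemma hawaux_pi_continuous {X Y N : Type*} [TopologicalSpace X] [TopologicalSpace Y] {x : X}
    {y : Y} (φ : C(X, Y)) (hφ : φ x = y) : Continuous (piInduced N φ hφ) := by
  refine Continuous.quotient_map' ?_ _
  refine Continuous.subtype_mk ?_ _
  exact (ContinuousMap.continuous_postcomp φ).comp continuous_subtype_val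

lemma hawaux_discrete {E : Type*} [NormedAddCommGroup E] [InnerProductSpace ℝ E] (N : Type*)
    [Fintype N] (b : Metric.sphere (0 : E) 1) :
    DiscreteTopology (HomotopyGroup N (Metric.sphere (0 : E) 1) b) := by
  rw [discreteTopology_iff_isOpen_singleton]
  intro a
  refine isOpen_coinduced.2 ?_
  rw [isOpen_iff_mem_nhds]
  intro f hf
  have : (Subtype.val ⁻¹' Metric.ball f.1 1 : Set (Ω^ N (Metric.sphere (0 : E) 1) b)) ∈ 𝓝 f :=
    continuous_subtype_val.continuousAt.preimage_mem_nhds (Metric.ball_mem_nhds _ one_pos)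
  filter_upwards [this] with g hg
  have hg' : dist g.1 f.1 < 1 := hg
  rw [ContinuousMap.dist_lt_iff one_pos] at hg'
  have h1 := hawaux_near g.1 f.1 hg'
  have h2 : GenLoop.Homotopic g f := by
    obtain ⟨H⟩ := h1
    refine ⟨⟨H.toHomotopy, ?_⟩⟩
    intro t y hy
    refine H.prop' t y ?_
    exact (g.2 y hy).trans (f.2 y hy).symm
  have hf' : (Quotient.mk (GenLoop.Homotopic.setoid N b) f) = a := hf
  change (Quotient.mk (GenLoop.Homotopic.setoid N b) g) = a
  rw [← hf']
  exact Quotient.sound h2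

/-- first basis vector -/
def hawauxE0 (n : ℕ) : EuclideanSpace ℝ (Fin (n + 1)) := EuclideanSpace.single 0 1

lemma hawauxE0_norm (n : ℕ) : ‖hawauxE0 n‖ = 1 := by simp [hawauxE0]

/-- base point of the unit sphere -/
def hawauxB (n : ℕ) : Metric.sphere (0 : EuclideanSpace ℝ (Fin (n + 1))) 1 :=
  ⟨-hawauxE0 n, by simp [hawauxE0_norm]⟩

lemma hawaux_mem_sphere (n j : ℕ) (y : EuclideanSpace ℝ (Fin (n + 1))) :
    y ∈ hawSphere n (j + 1) ↔ ‖((j : ℝ) + 1) • y - hawauxE0 n‖ = 1 := by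
  have hj : (0 : ℝ) < (j : ℝ) + 1 := by positivity
  have e : ((j : ℝ) + 1) • y - hawauxE0 n =
      ((j : ℝ) + 1) • (y - EuclideanSpace.single (0 : Fin (n + 1)) ((1 : ℝ) / (j + 1 : ℕ))) := by
    rw [smul_sub]
    congr 1
    ext i
    by_cases h : i = 0
    · subst h; simp [hawauxE0]; field_simp
    · simp [hawauxE0, h]
  rw [e, norm_smul, Real.norm_of_nonneg hj.le, hawSphere, mem_sphere_iff_norm]
  push_cast
  constructor
  · intro h; rw [h]; field_simp
  · intro h; field_simp; linarith

lemma hawaux_disj (n i j : ℕ) (hij : i ≠ j) (y : EuclideanSpace ℝ (Fin (n + 1)))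
    (hi : y ∈ hawSphere n (i + 1)) (hj : y ∈ hawSphere n (j + 1)) : y = 0 := by
  have key : ∀ l : ℕ, y ∈ hawSphere n (l + 1) →
      ((l : ℝ) + 1) * ‖y‖ ^ 2 = 2 * inner ℝ y (hawauxE0 n) := by
    intro l hl
    rw [hawaux_mem_sphere] at hl
    have h2 := norm_sub_sq_real (((l : ℝ) + 1) • y) (hawauxE0 n)
    have hl0 : (0 : ℝ) < (l : ℝ) + 1 := by positivity
    rw [hl, norm_smul, hawauxE0_norm, real_inner_smul_left, Real.norm_of_nonneg hl0.le] at h2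
    have h3 : ((l : ℝ) + 1) * (((l : ℝ) + 1) * ‖y‖ ^ 2 - 2 * inner ℝ y (hawauxE0 n)) = 0 := by
      linarith
    rcases mul_eq_zero.mp h3 with h | h
    · linarith
    · linarith
  have h1 := key i hi
  have h2 := key j hj
  have h3 : ((i : ℝ) - j) * ‖y‖ ^ 2 = 0 := by linarith
  rcases mul_eq_zero.mp h3 with h | h
  · exact absurd (by exact_mod_cast sub_eq_zero.mp h) hij
  · simpa using h

/-- inclusion of the standard sphere as the `j`-th sphere, as a vector -/
def hawauxS {n : ℕ} (j : ℕ) (v : Metric.sphere (0 : EuclideanSpace ℝ (Fin (n + 1))) 1) :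
    EuclideanSpace ℝ (Fin (n + 1)) := ((j : ℝ) + 1)⁻¹ • (v + hawauxE0 n)

lemma hawauxS_base {n : ℕ} (j : ℕ) : hawauxS j (hawauxB n) = 0 := by
  simp [hawauxS, hawauxB]

lemma hawauxS_inv {n : ℕ} (j : ℕ) (v : Metric.sphere (0 : EuclideanSpace ℝ (Fin (n + 1))) 1) :
    ((j : ℝ) + 1) • hawauxS j v - hawauxE0 n = v := by
  have hj : (j : ℝ) + 1 ≠ 0 := by positivity
  rw [hawauxS, smul_smul, mul_inv_cancel₀ hj, one_smul, add_sub_cancel_right]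

lemma hawauxS_mem {n : ℕ} (j : ℕ) (v : Metric.sphere (0 : EuclideanSpace ℝ (Fin (n + 1))) 1) :
    hawauxS j v ∈ hawSphere n (j + 1) := by
  rw [hawaux_mem_sphere, hawauxS_inv, norm_eq_of_mem_sphere]

lemma hawauxS_norm {n : ℕ} (j : ℕ) (v : Metric.sphere (0 : EuclideanSpace ℝ (Fin (n + 1))) 1) :
    ‖hawauxS j v‖ ≤ 2 / ((j : ℝ) + 1) := by
  have hj : (0 : ℝ) < (j : ℝ) + 1 := by positivity
  rw [hawauxS, norm_smul, norm_inv, Real.norm_of_nonneg hj.le, div_eq_inv_mul]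
  have := norm_add_le (v : EuclideanSpace ℝ (Fin (n + 1))) (hawauxE0 n)
  rw [norm_eq_of_mem_sphere, hawauxE0_norm] at this
  gcongr
  linarith

lemma hawauxS_cont {n : ℕ} (j : ℕ) : Continuous (hawauxS (n := n) j) := by
  unfold hawauxS; fun_prop

lemma hawaux_supp {S : Type*} {b : S} (w : hawauxW S b) : ∃ l, ∀ j, j ≠ l → w.1 j = b := by
  by_cases h : ∃ l, w.1 l ≠ b
  · obtain ⟨l, hl⟩ := h
    refine ⟨l, fun j hj => ?_⟩
    rcases w.2 j l hj with h | h
    · exact h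
    · exact absurd h hl
  · push Not at h
    exact ⟨0, fun j _ => h j⟩

lemma hawaux_mem_haw (n j : ℕ) (y : EuclideanSpace ℝ (Fin (n + 1))) (h : y ∈ hawSphere n (j + 1)) :
    y ∈ hawaiian n :=
  Set.mem_biUnion (show (j + 1) ∈ {j : ℕ | 1 ≤ j} by simp) h

lemma hawaux_mem_Y (n i j : ℕ) (hj : j ≤ i) (y : EuclideanSpace ℝ (Fin (n + 1)))
    (h : y ∈ hawSphere n (j + 1)) : y ∈ Ysub n (i + 1) :=
  Set.mem_biUnion (show (j + 1) ∈ (Finset.Icc 1 (i + 1) : Set ℕ) by simp; omega) h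

lemma hawaux_haw_cases (n : ℕ) (y : EuclideanSpace ℝ (Fin (n + 1))) (h : y ∈ hawaiian n) :
    ∃ l : ℕ, y ∈ hawSphere n (l + 1) := by
  simp only [hawaiian, Set.mem_iUnion] at h
  obtain ⟨j, hj, h⟩ := h
  refine ⟨j - 1, ?_⟩
  have : 1 ≤ j := hj
  rwa [Nat.sub_add_cancel this]

lemma hawaux_Y_cases (n i : ℕ) (y : EuclideanSpace ℝ (Fin (n + 1))) (h : y ∈ Ysub n (i + 1)) :
    ∃ l : ℕ, l ≤ i ∧ y ∈ hawSphere n (l + 1) := by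
  simp only [Ysub, Set.mem_iUnion] at h
  obtain ⟨j, hj, h⟩ := h
  rw [Finset.mem_Icc] at hj
  refine ⟨j - 1, by omega, ?_⟩
  rwa [Nat.sub_add_cancel hj.1]

/-- from the wedge to the ambient space -/
def hawauxPsi0 {n : ℕ} (w : hawauxW (Metric.sphere (0 : EuclideanSpace ℝ (Fin (n + 1))) 1)
    (hawauxB n)) : EuclideanSpace ℝ (Fin (n + 1)) := ∑' j, hawauxS j (w.1 j)

lemma hawauxPsi0_eq {n : ℕ} (w : hawauxW (Metric.sphere (0 : EuclideanSpace ℝ (Fin (n + 1))) 1)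
    (hawauxB n)) (l : ℕ) (hl : ∀ j, j ≠ l → w.1 j = hawauxB n) :
    hawauxPsi0 w = hawauxS l (w.1 l) :=
  tsum_eq_single l fun j hj => by rw [hl j hj, hawauxS_base]

lemma hawauxPsi0_cont {n : ℕ} : Continuous (hawauxPsi0 (n := n)) := by
  have : TendstoUniformly (fun (N : ℕ) (w : hawauxW _ (hawauxB n)) =>
      ∑ j ∈ Finset.range N, hawauxS j (w.1 j)) hawauxPsi0 Filter.atTop := by
    rw [Metric.tendstoUniformly_iff]
    intro ε hε
    have h1 : Filter.Tendsto (fun N : ℕ => 2 * (1 / ((N : ℝ) + 1))) Filter.atTop (𝓝 (2 * 0)) :=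
      tendsto_one_div_add_atTop_nhds_zero_nat.const_mul 2
    rw [mul_zero] at h1
    filter_upwards [h1.eventually (gt_mem_nhds hε)] with N hN w
    obtain ⟨l, hl⟩ := hawaux_supp w
    rw [hawauxPsi0_eq w l hl]
    by_cases h : l ∈ Finset.range N
    · rw [Finset.sum_eq_single_of_mem l h fun j _ hj => by rw [hl j hj, hawauxS_base], dist_self]
      exact hε
    · rw [Finset.sum_eq_zero fun j hj => by
        rw [hl j (fun e => h (e ▸ hj)), hawauxS_base], dist_zero_right]
      refine lt_of_le_of_lt (hawauxS_norm _ _) (lt_of_le_of_lt ?_ hN)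
      rw [mul_one_div]
      simp only [Finset.mem_range, not_lt] at h
      gcongr
  refine this.continuous (Filter.Frequently.of_forall fun N => ?_)
  refine continuous_finsetSum _ fun j _ => (hawauxS_cont j).comp ?_
  exact (continuous_apply j).comp continuous_subtype_val

lemma hawaux_data (n : ℕ)
    (R : ∀ i : ℕ, C(↥(hawaiian n), ↥(Ysub n (i+1))))
    (hRfix : ∀ (i : ℕ) (z : ↥(hawaiian n)),
      (z : EuclideanSpace ℝ (Fin (n + 1))) ∈ Ysub n (i+1) →
      ((R i z : ↥(Ysub n (i+1))) : EuclideanSpace ℝ (Fin (n + 1))) = z)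
    (hRcoll : ∀ (i j : ℕ), i + 1 < j → ∀ z : ↥(hawaiian n),
      (z : EuclideanSpace ℝ (Fin (n + 1))) ∈ hawSphere n j →
      ((R i z : ↥(Ysub n (i+1))) : EuclideanSpace ℝ (Fin (n + 1))) = 0) :
    ∃ (Φ : C(↥(hawaiian n), hawauxW _ (hawauxB n))) (Ψ : C(hawauxW _ (hawauxB n), ↥(hawaiian n))),
      Φ (hawaiianPt n) = hawauxW0 (hawauxB n) ∧ Ψ (hawauxW0 (hawauxB n)) = hawaiianPt n ∧
      (∀ z, Ψ (Φ z) = z) ∧ (∀ w, Φ (Ψ w) = w) ∧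
      ∀ (l : ℕ) (z : ↥(hawaiian n)), (z : EuclideanSpace ℝ (Fin (n + 1))) ∈ hawSphere n (l + 1) →
        ∀ j, j ≠ l → (Φ z).1 j = hawauxB n := by
  have hR1 : ∀ i l (z : ↥(hawaiian n)), l ≤ i →
      (z : EuclideanSpace ℝ (Fin (n + 1))) ∈ hawSphere n (l + 1) →
      ((R i z : ↥(Ysub n (i+1))) : EuclideanSpace ℝ (Fin (n + 1))) = z :=
    fun i l z hl hz => hRfix i z (hawaux_mem_Y n i l hl _ hz)
  have hR2 : ∀ i l (z : ↥(hawaiian n)), i < l →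
      (z : EuclideanSpace ℝ (Fin (n + 1))) ∈ hawSphere n (l + 1) →
      ((R i z : ↥(Ysub n (i+1))) : EuclideanSpace ℝ (Fin (n + 1))) = 0 :=
    fun i l z hl hz => hRcoll i (l + 1) (by omega) z hz
  have hc : ∀ j, ∃ c : ↥(hawaiian n) → EuclideanSpace ℝ (Fin (n + 1)), Continuous c ∧
      ∀ l (z : ↥(hawaiian n)), (z : EuclideanSpace ℝ (Fin (n + 1))) ∈ hawSphere n (l + 1) →
        c z = if j = l then (z : EuclideanSpace ℝ (Fin (n + 1))) else 0 := by
    intro j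
    cases j with
    | zero =>
      refine ⟨fun z => R 0 z, by fun_prop, fun l z hz => ?_⟩
      split_ifs with h
      · exact hR1 _ _ _ (by omega) hz
      · exact hR2 _ _ _ (by omega) hz
    | succ j =>
      refine ⟨fun z => (R (j + 1) z : EuclideanSpace ℝ (Fin (n + 1))) - R j z, by fun_prop,
        fun l z hz => ?_⟩
      dsimp only
      split_ifs with h
      · rw [hR1 _ _ _ (by omega) hz, hR2 _ _ _ (by omega) hz, sub_zero]
      · rcases lt_or_gt_of_ne h with h | h
        · rw [hR2 _ _ _ (by omega) hz, hR2 _ _ _ (by omega) hz, sub_zero]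
        · rw [hR1 _ _ _ (by omega) hz, hR1 _ _ _ (by omega) hz, sub_self]
  choose c hcc hcv using hc
  have hcn : ∀ (j : ℕ) z, ((j : ℝ) + 1) • c j z - hawauxE0 n ∈
      Metric.sphere (0 : EuclideanSpace ℝ (Fin (n + 1))) 1 := by
    intro j z
    obtain ⟨l, hl⟩ := hawaux_haw_cases n z.1 z.2
    rw [mem_sphere_zero_iff_norm, hcv j l z hl]
    split_ifs with h
    · subst h
      exact (hawaux_mem_sphere n j z).1 hl
    · simp [hawauxE0_norm]
  let v : ∀ j : ℕ, C(↥(hawaiian n), Metric.sphere (0 : EuclideanSpace ℝ (Fin (n + 1))) 1) :=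
    fun j => ⟨fun z => ⟨((j : ℝ) + 1) • c j z - hawauxE0 n, hcn j z⟩, by
      have := hcc j
      fun_prop⟩
  have hv0 : ∀ (l : ℕ) (z : ↥(hawaiian n)),
      (z : EuclideanSpace ℝ (Fin (n + 1))) ∈ hawSphere n (l + 1) →
      ∀ j, j ≠ l → v j z = hawauxB n := by
    intro l z hz j hj
    apply Subtype.ext
    change ((j : ℝ) + 1) • c j z - hawauxE0 n = -hawauxE0 n
    rw [hcv j l z hz, if_neg hj, smul_zero, zero_sub]
  have hv1 : ∀ (l : ℕ) (z : ↥(hawaiian n)),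
      (z : EuclideanSpace ℝ (Fin (n + 1))) ∈ hawSphere n (l + 1) →
      (v l z : EuclideanSpace ℝ (Fin (n + 1))) = ((l : ℝ) + 1) • (z : EuclideanSpace ℝ (Fin (n + 1))) - hawauxE0 n := by
    intro l z hz
    change ((l : ℝ) + 1) • c l z - hawauxE0 n = _
    rw [hcv l l z hz, if_pos rfl]
  let Φ : C(↥(hawaiian n), hawauxW _ (hawauxB n)) := hawauxMk v (by
    intro i j hij z
    obtain ⟨l, hl⟩ := hawaux_haw_cases n z.1 z.2
    by_cases h : i = l
    · right; exact hv0 l z hl j (fun e => hij (h.trans e.symm))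
    · left; exact hv0 l z hl i h)
  have hΦ : ∀ z j, (Φ z).1 j = v j z := fun z j => rfl
  have hmem : ∀ w : hawauxW _ (hawauxB n), hawauxPsi0 w ∈ hawaiian n := by
    intro w
    obtain ⟨l, hl⟩ := hawaux_supp w
    rw [hawauxPsi0_eq w l hl]
    exact hawaux_mem_haw n l _ (hawauxS_mem l _)
  let Ψ : C(hawauxW _ (hawauxB n), ↥(hawaiian n)) :=
    ⟨fun w => ⟨hawauxPsi0 w, hmem w⟩, Continuous.subtype_mk hawauxPsi0_cont hmem⟩
  have hΨ : ∀ w, (Ψ w : EuclideanSpace ℝ (Fin (n + 1))) = hawauxPsi0 w := fun w => rfl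
  have hΨΦ : ∀ z, Ψ (Φ z) = z := by
    intro z
    obtain ⟨l, hl⟩ := hawaux_haw_cases n z.1 z.2
    apply Subtype.ext
    rw [hΨ, hawauxPsi0_eq _ l (fun j hj => hv0 l z hl j hj), hΦ, hawauxS, hv1 l z hl,
      sub_add_cancel, smul_smul, inv_mul_cancel₀ (by positivity), one_smul]
  have hΦΨ : ∀ w, Φ (Ψ w) = w := by
    intro w
    obtain ⟨l, hl⟩ := hawaux_supp w
    have h1 : (Ψ w : EuclideanSpace ℝ (Fin (n + 1))) = hawauxS l (w.1 l) := hawauxPsi0_eq w l hl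
    have h2 : (Ψ w : EuclideanSpace ℝ (Fin (n + 1))) ∈ hawSphere n (l + 1) := by
      rw [h1]; exact hawauxS_mem l _
    refine hawaux_wext l _ _ ?_ fun j hj => ?_
    · apply Subtype.ext
      rw [hΦ, hv1 l _ h2, h1, hawauxS_inv]
    · rw [hΦ, hv0 l _ h2 j hj, hl j hj]
  have hΨ0 : Ψ (hawauxW0 (hawauxB n)) = hawaiianPt n := by
    apply Subtype.ext
    rw [hΨ, hawauxPsi0_eq _ 0 fun j _ => rfl]
    exact hawauxS_base 0
  exact ⟨Φ, Ψ, by rw [← hΨ0, hΦΨ], hΨ0, hΨΦ, hΦΨ, hv0⟩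

lemma hawaux_pi_retr {X Y N : Type*} [TopologicalSpace X] [TopologicalSpace Y]
    {x : X} {y : Y} (φ : C(X, Y)) (hφ : φ x = y) (ψ : C(Y, X))
    (hψ : ψ y = x) (h : ∀ u, ψ (φ u) = u) (a : HomotopyGroup N X x) :
    piInduced N ψ hψ (piInduced N φ hφ a) = a := by
  induction a using Quotient.inductionOn with | _ f => ?_
  refine congrArg (Quotient.mk (GenLoop.Homotopic.setoid N x)) ?_
  exact GenLoop.ext _ _ fun t => h _

lemma hawaux_section (n : ℕ) (hn : 0 < n) {k : ℕ} (b : Metric.sphere (0 : EuclideanSpace ℝ (Fin k)) 1)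
    {Γ : Type*} [TopologicalSpace Γ]
    (q : ℕ → Γ → HomotopyGroup (Fin n) (Metric.sphere (0 : EuclideanSpace ℝ (Fin k)) 1) b)
    (hq : ∀ j, Continuous (q j)) :
    ∃ s : Γ → HomotopyGroup (Fin n) (hawauxW _ b) (hawauxW0 b), Continuous s ∧
      ∀ γ j, piInduced (Fin n) (y := b) (hawauxPc j) rfl (s γ) = q j γ := by
  have := hawaux_discrete (Fin n) b
  let o : HomotopyGroup (Fin n) (Metric.sphere (0 : EuclideanSpace ℝ (Fin k)) 1) b →
    Ω^ (Fin n) (Metric.sphere (0 : EuclideanSpace ℝ (Fin k)) 1) b := fun a => Quotient.out a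
  have ho : ∀ a, Quotient.mk (GenLoop.Homotopic.setoid (Fin n) b) (o a) = a :=
    fun a => Quotient.out_eq a
  have hoc : ∀ j, Continuous fun γ => o (q j γ) := fun j => continuous_of_discreteTopology.comp (hq j)
  let i0 : Fin n := ⟨0, hn⟩
  let τ : ℕ → Fin n → C(I, I) := fun j i => if i = i0 then hawauxSq j else ContinuousMap.id I
  have hτ0 : ∀ j i, τ j i 0 = 0 := by
    intro j i
    simp only [τ]
    split_ifs
    · exact hawauxSq_zero j
    · rfl
  have hτ1 : ∀ j i, τ j i 1 = 1 := by
    intro j i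
    simp only [τ]
    split_ifs
    · exact hawauxSq_one j
    · rfl
  have hτi : ∀ j, τ j i0 = hawauxSq j := fun j => if_pos rfl
  let v : ∀ j : ℕ, C(Γ × (Fin n → I), Metric.sphere (0 : EuclideanSpace ℝ (Fin k)) 1) :=
    fun j => ⟨fun p => o (q j p.1) (fun i => τ j i (p.2 i)), by
      refine Continuous.eval ((hoc j).comp continuous_fst) ?_
      fun_prop⟩
  have hvb : ∀ j γ, ∀ x ∈ Cube.boundary (Fin n), v j (γ, x) = b := by
    intro j γ x hx
    exact GenLoop.boundary (hawauxPre (τ j) (hτ0 j) (hτ1 j) (o (q j γ))) x hx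
  have hvn : ∀ j p, v j p ≠ b → (j : ℝ) / (j + 1) < p.2 i0 ∧ (p.2 i0 : ℝ) < ((j : ℝ) + 1) / (j + 2) := by
    intro j p hp
    constructor
    · by_contra h
      refine hp (GenLoop.boundary (o (q j p.1)) _ ⟨i0, Or.inl ?_⟩)
      dsimp only
      rw [hτi, hawauxSq_of_le _ _ (not_lt.mp h)]
    · by_contra h
      refine hp (GenLoop.boundary (o (q j p.1)) _ ⟨i0, Or.inr ?_⟩)
      dsimp only
      rw [hτi, hawauxSq_of_ge _ _ (not_lt.mp h)]
  have hlt : ∀ i j, i < j → ∀ p, v i p = b ∨ v j p = b := by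
    intro i j hij p
    by_contra hcon
    push Not at hcon
    have h1 := (hvn i p hcon.1).2
    have h2 := (hvn j p hcon.2).1
    have h3 := h2.trans h1
    have h4 : (i : ℝ) + 1 ≤ j := by exact_mod_cast hij
    rw [div_lt_div_iff₀ (by positivity) (by positivity)] at h3
    nlinarith
  let V : C(Γ × (Fin n → I), hawauxW _ b) := hawauxMk v (by
    intro i j hij p
    rcases lt_or_gt_of_ne hij with h | h
    · exact hlt i j h p
    · exact (hlt j i h p).symm)
  have hVb : ∀ γ, ∀ x ∈ Cube.boundary (Fin n), V (γ, x) = hawauxW0 b := by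
    intro γ x hx
    exact Subtype.ext (funext fun j => hvb j γ x hx)
  let L : Γ → Ω^ (Fin n) (hawauxW _ b) (hawauxW0 b) := fun γ => ⟨V.curry γ, fun x hx => hVb γ x hx⟩
  have hL : Continuous L := Continuous.subtype_mk V.curry.continuous _
  refine ⟨fun γ => Quotient.mk (GenLoop.Homotopic.setoid (Fin n) (hawauxW0 b)) (L γ),
    continuous_quotient_mk'.comp hL, ?_⟩
  intro γ j
  rw [← ho (q j γ)]
  refine Quotient.sound ?_
  exact (hawauxPre_hom (τ j) (hτ0 j) (hτ1 j) (o (q j γ))).symm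

/-- For `n = m+2 ≥ 2`, the map `β_n : π_n^{top}(ℋ_n, 0) → ∏_{i} π_n^{top}(Y_{i+1}^{(n)}, 0)`,
`γ ↦ ((R_i)_*(γ))_i`, is a homeomorphism onto the inverse-limit subspace of families
compatible under the retractions `r_k^i` (product and subspace topologies). -/
theorem beta_homeomorph_onto_invLim (m : ℕ)
    (R : ∀ i : ℕ, C(↥(hawaiian (m+2)), ↥(Ysub (m+2) (i+1))))
    (hRfix : ∀ (i : ℕ) (z : ↥(hawaiian (m+2))),
      (z : EuclideanSpace ℝ (Fin (m+3))) ∈ Ysub (m+2) (i+1) →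
      ((R i z : ↥(Ysub (m+2) (i+1))) : EuclideanSpace ℝ (Fin (m+3))) = z)
    (hRcoll : ∀ (i j : ℕ), i + 1 < j → ∀ z : ↥(hawaiian (m+2)),
      (z : EuclideanSpace ℝ (Fin (m+3))) ∈ hawSphere (m+2) j →
      ((R i z : ↥(Ysub (m+2) (i+1))) : EuclideanSpace ℝ (Fin (m+3))) = 0)
    (hR0 : ∀ i : ℕ, R i (hawaiianPt (m+2)) = YsubPt (m+2) i)
    (r : ∀ i k : ℕ, k ≤ i → C(↥(Ysub (m+2) (i+1)), ↥(Ysub (m+2) (k+1))))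
    (hrfix : ∀ (i k : ℕ) (hki : k ≤ i) (z : ↥(Ysub (m+2) (i+1))),
      (z : EuclideanSpace ℝ (Fin (m+3))) ∈ Ysub (m+2) (k+1) →
      ((r i k hki z : ↥(Ysub (m+2) (k+1))) : EuclideanSpace ℝ (Fin (m+3))) = z)
    (hrcoll : ∀ (i k : ℕ) (hki : k ≤ i) (j : ℕ), k + 1 < j → j ≤ i + 1 →
      ∀ z : ↥(Ysub (m+2) (i+1)),
      (z : EuclideanSpace ℝ (Fin (m+3))) ∈ hawSphere (m+2) j →
      ((r i k hki z : ↥(Ysub (m+2) (k+1))) : EuclideanSpace ℝ (Fin (m+3))) = 0)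
    (hr0 : ∀ (i k : ℕ) (hki : k ≤ i), r i k hki (YsubPt (m+2) i) = YsubPt (m+2) k)
    :
    ∃ e : HomotopyGroup (Fin (m+2)) (hawaiian (m+2)) (hawaiianPt (m+2)) ≃ₜ
      {γ : ∀ i : ℕ, HomotopyGroup (Fin (m+2)) (Ysub (m+2) (i+1)) (YsubPt (m+2) i) //
        ∀ (k i : ℕ) (hki : k ≤ i),
          piInduced (Fin (m+2)) (r i k hki) (hr0 i k hki) (γ i) = γ k},
      ∀ g (i : ℕ), (e g : ∀ i : ℕ,
          HomotopyGroup (Fin (m+2)) (Ysub (m+2) (i+1)) (YsubPt (m+2) i)) i =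
        piInduced (Fin (m+2)) (R i) (hR0 i) g := by
  obtain ⟨Φ, Ψ, hΦ0, hΨ0, hΨΦ, hΦΨ, hsup⟩ := hawaux_data (m + 2) R hRfix hRcoll
  -- coordinates
  let P : ∀ j : ℕ, C(↥(hawaiian (m+2)), Metric.sphere (0 : EuclideanSpace ℝ (Fin (m + 3))) 1) :=
    fun j => (hawauxPc j).comp Φ
  have hP0 : ∀ j, P j (hawaiianPt (m+2)) = hawauxB (m+2) := by
    intro j
    change (Φ (hawaiianPt (m+2))).1 j = _
    rw [hΦ0]; rfl
  have hPsup : ∀ (l : ℕ) (z : ↥(hawaiian (m+2))),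
      (z : EuclideanSpace ℝ (Fin (m+3))) ∈ hawSphere (m+2) (l + 1) →
      ∀ j, j ≠ l → P j z = hawauxB (m+2) := hsup
  -- inclusions
  have hYH : ∀ i, Ysub (m+2) (i+1) ⊆ hawaiian (m+2) := by
    intro i y hy
    obtain ⟨l, _, hl⟩ := hawaux_Y_cases _ _ _ hy
    exact hawaux_mem_haw _ _ _ hl
  let inc : ∀ i : ℕ, C(↥(Ysub (m+2) (i+1)), ↥(hawaiian (m+2))) :=
    fun i => ⟨Set.inclusion (hYH i), continuous_inclusion (hYH i)⟩
  have hinc : ∀ i y, (inc i y : EuclideanSpace ℝ (Fin (m+3))) = y := fun i y => rfl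
  have hinc0 : ∀ i, inc i (YsubPt (m+2) i) = hawaiianPt (m+2) := fun i => rfl
  have hRinc : ∀ i y, R i (inc i y) = y := by
    intro i y
    apply Subtype.ext
    rw [hRfix i (inc i y) y.2, hinc]
  have hPR : ∀ i j, j ≤ i → ∀ z, P j (inc i (R i z)) = P j z := by
    intro i j hj z
    obtain ⟨l, hl⟩ := hawaux_haw_cases _ z.1 z.2
    by_cases h : l ≤ i
    · congr 1
      apply Subtype.ext
      rw [hinc, hRfix i z (hawaux_mem_Y _ _ _ h _ hl)]
    · rw [hPsup l z hl j (by omega), ← hP0 j]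
      congr 1
      apply Subtype.ext
      rw [hinc, hRcoll i (l+1) (by omega) z hl]; rfl
  have hPr : ∀ i j (hj : j ≤ i) y, P j (inc j (r i j hj y)) = P j (inc i y) := by
    intro i j hj y
    obtain ⟨l, hli, hl⟩ := hawaux_Y_cases _ _ y.1 y.2
    by_cases h : l ≤ j
    · congr 1
      apply Subtype.ext
      rw [hinc, hinc, hrfix i j hj y (hawaux_mem_Y _ _ _ h _ hl)]
    · rw [hPsup l (inc i y) hl j (by omega), ← hP0 j]
      congr 1
      apply Subtype.ext
      rw [hinc, hrcoll i j hj (l+1) (by omega) (by omega) y hl]; rfl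
  have hPgt : ∀ i j, i < j → ∀ y, P j (inc i y) = hawauxB (m+2) := by
    intro i j hij y
    obtain ⟨l, hli, hl⟩ := hawaux_Y_cases _ _ y.1 y.2
    exact hPsup l (inc i y) hl j (by omega)
  have hrR : ∀ i k (hk : k ≤ i) z, r i k hk (R i z) = R k z := by
    intro i k hk z
    obtain ⟨l, hl⟩ := hawaux_haw_cases _ z.1 z.2
    apply Subtype.ext
    by_cases h : l ≤ i
    · have e : (R i z : EuclideanSpace ℝ (Fin (m+3))) = z :=
        hRfix i z (hawaux_mem_Y _ _ _ h _ hl)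
      by_cases h' : l ≤ k
      · rw [hrfix i k hk (R i z) (by rw [e]; exact hawaux_mem_Y _ _ _ h' _ hl), e,
          hRfix k z (hawaux_mem_Y _ _ _ h' _ hl)]
      · rw [hrcoll i k hk (l+1) (by omega) (by omega) (R i z) (by rw [e]; exact hl),
          hRcoll k (l+1) (by omega) z hl]
    · have e : R i z = YsubPt (m+2) i := Subtype.ext (hRcoll i (l+1) (by omega) z hl)
      rw [e, hr0, hRcoll k (l+1) (by omega) z hl]; rfl
  -- injectivity
  have injH : ∀ a c : HomotopyGroup (Fin (m+2)) (hawaiian (m+2)) (hawaiianPt (m+2)),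
      (∀ j, piInduced (Fin (m+2)) (P j) (hP0 j) a = piInduced (Fin (m+2)) (P j) (hP0 j) c) →
      a = c := by
    intro a c h
    have h1 : piInduced (Fin (m+2)) Φ hΦ0 a = piInduced (Fin (m+2)) Φ hΦ0 c := by
      refine hawaux_inj m (b := hawauxB (m+2)) _ _ fun j => ?_
      have h3 := fun d => hawaux_pi_comp (N := Fin (m+2)) Φ hΦ0 (hawauxPc j) rfl (P j) (hP0 j)
        (fun _ => rfl) d
      exact (h3 a).trans ((h j).trans (h3 c).symm)
    have h2 := congrArg (piInduced (Fin (m+2)) Ψ hΨ0) h1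
    rw [hawaux_pi_retr Φ hΦ0 Ψ hΨ0 hΨΦ, hawaux_pi_retr Φ hΦ0 Ψ hΨ0 hΨΦ] at h2
    exact h2
  have hPi0 : ∀ i j, ((P j).comp (inc i)) (YsubPt (m+2) i) = hawauxB (m+2) := fun i j => hP0 j
  have injY : ∀ i (a c : HomotopyGroup (Fin (m+2)) (Ysub (m+2) (i+1)) (YsubPt (m+2) i)),
      (∀ j, piInduced (Fin (m+2)) ((P j).comp (inc i)) (hPi0 i j) a =
        piInduced (Fin (m+2)) ((P j).comp (inc i)) (hPi0 i j) c) → a = c := by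
    intro i a c h
    have h1 : piInduced (Fin (m+2)) (inc i) (hinc0 i) a = piInduced (Fin (m+2)) (inc i) (hinc0 i) c := by
      refine injH _ _ fun j => ?_
      rw [hawaux_pi_comp (inc i) (hinc0 i) (P j) (hP0 j) ((P j).comp (inc i)) (hPi0 i j) (fun _ => rfl),
        hawaux_pi_comp (inc i) (hinc0 i) (P j) (hP0 j) ((P j).comp (inc i)) (hPi0 i j) (fun _ => rfl)]
      exact h j
    have h2 := congrArg (piInduced (Fin (m+2)) (R i) (hR0 i)) h1
    rw [hawaux_pi_retr (inc i) (hinc0 i) (R i) (hR0 i) (hRinc i),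
      hawaux_pi_retr (inc i) (hinc0 i) (R i) (hR0 i) (hRinc i)] at h2
    exact h2
  -- the section
  obtain ⟨s, hsc, hs⟩ := hawaux_section (m + 2) (by omega) (hawauxB (m+2))
    (fun (j : ℕ) (γ : {γ : ∀ i : ℕ, HomotopyGroup (Fin (m+2)) (Ysub (m+2) (i+1)) (YsubPt (m+2) i) //
        ∀ (k i : ℕ) (hki : k ≤ i),
          piInduced (Fin (m+2)) (r i k hki) (hr0 i k hki) (γ i) = γ k}) =>
      piInduced (Fin (m+2)) ((P j).comp (inc j)) (hPi0 j j) (γ.1 j))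
    (fun j => (hawaux_pi_continuous _ _).comp ((continuous_apply j).comp continuous_subtype_val))
  have hPs : ∀ γ j, piInduced (Fin (m+2)) (P j) (hP0 j) (piInduced (Fin (m+2)) Ψ hΨ0 (s γ)) =
      piInduced (Fin (m+2)) ((P j).comp (inc j)) (hPi0 j j) (γ.1 j) := by
    intro γ j
    refine (hawaux_pi_comp Ψ hΨ0 (P j) (hP0 j) (hawauxPc j) rfl ?_ (s γ)).trans (hs γ j)
    intro w
    change (Φ (Ψ w)).1 j = w.1 j
    rw [hΦΨ]
  refine ⟨⟨⟨fun g => ⟨fun i => piInduced (Fin (m+2)) (R i) (hR0 i) g, ?_⟩,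
    fun γ => piInduced (Fin (m+2)) Ψ hΨ0 (s γ), ?_, ?_⟩, ?_, ?_⟩, fun g i => rfl⟩
  · intro k i hki
    exact hawaux_pi_comp _ _ _ _ _ _ (hrR i k hki) g
  · intro g
    refine injH _ _ fun j => ?_
    rw [hPs]
    exact hawaux_pi_comp _ _ _ _ _ _ (hPR j j le_rfl) g
  · intro γ
    apply Subtype.ext
    funext i
    refine injY i _ _ fun j => ?_
    by_cases hj : j ≤ i
    · dsimp only
      rw [hawaux_pi_comp (R i) (hR0 i) _ (hPi0 i j) (P j) (hP0 j) (hPR i j hj), hPs,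
        ← γ.2 j i hj]
      exact hawaux_pi_comp _ _ _ _ _ _ (hPr i j hj) _
    · rw [hawaux_pi_const _ _ (hPgt i j (by omega)), hawaux_pi_const _ _ (hPgt i j (by omega))]
  · refine Continuous.subtype_mk (continuous_pi fun i => hawaux_pi_continuous _ _) _
  · exact (hawaux_pi_continuous _ _).comp hsc
end
end

section
/- Let n ≥ 2 be an integer. The family of subgroups ker((R_k)_* : π_n(ℋ_n, 0) → π_n(Y_k^{(n)}, 0)), for k ≥ 1, forms a neighborhood basis of the identity element in π_n^top(ℋ_n, 0): each such kernel is a neighborhood of the identity, and every neighborhood of the identity contains ker((R_k)_*) for some k. -/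
open scoped Topology Topology.Homotopy unitInterval

noncomputable section

/-! ### Inversion -/

/-- Inversion in the unit sphere, with `0 ↦ 0`. -/
def hinv {m : ℕ} (v : EuclideanSpace ℝ (Fin m)) : EuclideanSpace ℝ (Fin m) := (‖v‖ ^ 2)⁻¹ • v

section inversion
variable {m : ℕ}

lemma hinv_zero : hinv (0 : EuclideanSpace ℝ (Fin m)) = 0 := by simp [hinv]

lemma hinv_eq_zero {v : EuclideanSpace ℝ (Fin m)} : hinv v = 0 ↔ v = 0 := by
  simp [hinv]

lemma norm_hinv (v : EuclideanSpace ℝ (Fin m)) : ‖hinv v‖ = ‖v‖⁻¹ := by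
  by_cases h : v = 0
  · simp [h, hinv]
  · have : ‖v‖ ≠ 0 := by simpa using h
    rw [hinv, norm_smul]
    simp
    field_simp

lemma hinv_hinv (v : EuclideanSpace ℝ (Fin m)) : hinv (hinv v) = v := by
  by_cases h : v = 0
  · simp [h, hinv]
  · have : ‖v‖ ≠ 0 := by simpa using h
    rw [hinv, norm_hinv, hinv, smul_smul]
    convert one_smul ℝ v
    field_simp

lemma hinv_smul (c : ℝ) (v : EuclideanSpace ℝ (Fin m)) : hinv (c • v) = c⁻¹ • hinv v := by
  by_cases h : c = 0
  · simp [h, hinv]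
  · rw [hinv, hinv, norm_smul, smul_smul, smul_smul, mul_pow, Real.norm_eq_abs, sq_abs]
    congr 1
    rw [mul_inv]
    field_simp

lemma continuousAt_hinv {v : EuclideanSpace ℝ (Fin m)} (h : v ≠ 0) : ContinuousAt hinv v := by
  unfold hinv
  have : ‖v‖ ^ 2 ≠ 0 := by simpa using h
  fun_prop (disch := assumption)

lemma norm_hinv_sub (z z' : EuclideanSpace ℝ (Fin m)) (h : z ≠ 0) (h' : z' ≠ 0) :
    ‖hinv z - hinv z'‖ = ‖z - z'‖ / (‖z‖ * ‖z'‖) := by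
  have := EuclideanGeometry.dist_inversion_inversion (c := (0 : EuclideanSpace ℝ (Fin m)))
    h h' 1
  have e : ∀ y : EuclideanSpace ℝ (Fin m),
      EuclideanGeometry.inversion (0 : EuclideanSpace ℝ (Fin m)) 1 y = hinv y := by
    intro y
    simp [EuclideanGeometry.inversion, hinv]
  rw [e, e, dist_zero_right, dist_zero_right, dist_eq_norm, dist_eq_norm] at this
  rw [this]; ring

lemma hinv_close {η : ℝ} (hη : 0 < η) : ∃ δ > 0, ∀ z z' : EuclideanSpace ℝ (Fin m),
    η ≤ ‖z‖ → ‖z - z'‖ < δ → z' ≠ 0 ∧ ‖hinv z - hinv z'‖ < 1 / 4 := by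
  refine ⟨min (η / 2) (η ^ 2 / 16), by positivity, fun z z' hz hzz => ?_⟩
  have h1 : ‖z - z'‖ < η / 2 := lt_of_lt_of_le hzz (min_le_left _ _)
  have h2 : ‖z - z'‖ < η ^ 2 / 16 := lt_of_lt_of_le hzz (min_le_right _ _)
  have h3 : η / 2 < ‖z'‖ := by
    have := norm_sub_norm_le z z'
    linarith
  have hz' : z' ≠ 0 := by
    intro h; rw [h, norm_zero] at h3; linarith
  have hz0 : z ≠ 0 := by
    intro h; rw [h, norm_zero] at hz; linarith
  refine ⟨hz', ?_⟩
  rw [norm_hinv_sub z z' hz0 hz']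
  have : 0 < ‖z‖ * ‖z'‖ := by positivity
  rw [div_lt_iff₀ this]
  nlinarith [mul_le_mul hz h3.le (by positivity) (by positivity)]

end inversion

section spheres
variable {n : ℕ}

/-- The first basis vector. -/
def ezero (n : ℕ) : EuclideanSpace ℝ (Fin (n+1)) := EuclideanSpace.single 0 1

/-- The projection killing the first coordinate. -/
def Pt (v : EuclideanSpace ℝ (Fin (n+1))) : EuclideanSpace ℝ (Fin (n+1)) := v - v 0 • ezero n

lemma ezero_apply : (ezero n) 0 = 1 := by simp [ezero]

lemma norm_ezero : ‖ezero n‖ = 1 := by simp [ezero]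

lemma Pt_apply (v : EuclideanSpace ℝ (Fin (n+1))) : (Pt v) 0 = 0 := by
  simp [Pt, ezero_apply]

lemma continuous_Pt : Continuous (Pt (n := n)) := by
  unfold Pt; fun_prop

lemma Pt_add (v : EuclideanSpace ℝ (Fin (n+1))) : v 0 • ezero n + Pt v = v := by
  simp [Pt]

lemma norm_sq_split (a : ℝ) (w : EuclideanSpace ℝ (Fin (n+1))) (hw : w 0 = 0) :
    ‖a • ezero n + w‖ ^ 2 = a ^ 2 + ‖w‖ ^ 2 := by
  rw [norm_add_sq_real, norm_smul, norm_ezero, inner_smul_left]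
  have : inner ℝ (ezero n) w = 0 := by
    rw [ezero, EuclideanSpace.inner_single_left]; simp [hw]
  simp [this]

lemma mem_hawSphere {j : ℕ} (hj : 1 ≤ j) (z : EuclideanSpace ℝ (Fin (n+1))) :
    z ∈ hawSphere n j ↔ z = 0 ∨ (hinv z) 0 = j / 2 := by
  have hj0 : (0 : ℝ) < j := by exact_mod_cast hj
  have e1 : EuclideanSpace.single (0 : Fin (n+1)) ((1 : ℝ)/j) = ((1 : ℝ) / j) • ezero n := by
    ext i; simp [ezero]
  have hin : inner ℝ z (ezero n) = z 0 := by
    rw [ezero, EuclideanSpace.inner_single_right]; simp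
  rw [hawSphere, Metric.mem_sphere, dist_eq_norm, e1]
  rw [← sq_eq_sq₀ (norm_nonneg _) (by positivity), norm_sub_sq_real, inner_smul_right, hin,
    norm_smul, norm_ezero, Real.norm_eq_abs, mul_one, sq_abs]
  by_cases hz : z = 0
  · simp [hz]
  · have : ‖z‖ ≠ 0 := by simpa using hz
    simp only [hz, false_or, hinv, PiLp.smul_apply, smul_eq_mul]
    field_simp
    constructor <;> intro h <;> nlinarith

/-- The second point is the basepoint or on the same sphere as the first one. -/
def Sph (z z' : EuclideanSpace ℝ (Fin (n+1))) : Prop :=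
  z' = 0 ∨ (z ≠ 0 ∧ (hinv z') 0 = (hinv z) 0)

/-- Unions of spheres of the earring. -/
structure IsFam (S : Set (EuclideanSpace ℝ (Fin (n+1)))) : Prop where
  zero : 0 ∈ S
  sph : ∀ z ∈ S, ∀ z', Sph z z' → z' ∈ S
  idx : ∀ z ∈ S, z ≠ 0 → ∃ j : ℕ, 1 ≤ j ∧ (hinv z) 0 = j / 2

lemma isFam_union (J : Set ℕ) (hJ : ∀ j ∈ J, 1 ≤ j) (hne : J.Nonempty) :
    IsFam (⋃ j ∈ J, hawSphere n j) := by
  obtain ⟨j0, hj0⟩ := hne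
  refine ⟨Set.mem_biUnion hj0 (zero_mem_hawSphere n j0), ?_, ?_⟩
  · intro z hz z' h
    obtain rfl | ⟨h0, h⟩ := h
    · exact Set.mem_biUnion hj0 (zero_mem_hawSphere n j0)
    · simp only [Set.mem_iUnion] at hz
      obtain ⟨j, hj, hz⟩ := hz
      refine Set.mem_biUnion hj ?_
      rw [mem_hawSphere (hJ j hj)] at hz ⊢
      right
      rw [h]
      exact hz.resolve_left h0
  · intro z hz h0
    simp only [Set.mem_iUnion] at hz
    obtain ⟨j, hj, hz⟩ := hz
    rw [mem_hawSphere (hJ j hj)] at hz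
    exact ⟨j, hJ j hj, hz.resolve_left h0⟩

lemma isFam_hawaiian (n : ℕ) : IsFam (hawaiian n) :=
  isFam_union _ (fun _ h => h) ⟨1, by simp⟩

lemma isFam_Ysub (n i : ℕ) : IsFam (Ysub n (i+1)) := by
  have := isFam_union (n := n) (↑(Finset.Icc 1 (i+1)) : Set ℕ)
    (fun j h => (Finset.mem_Icc.mp h).1) ⟨1, by simp⟩
  simpa [Ysub] using this

lemma idx_eq_of_close {S : Set (EuclideanSpace ℝ (Fin (n+1)))} (hS : IsFam S)
    {z z' : EuclideanSpace ℝ (Fin (n+1))} (hz : z ∈ S) (hz' : z' ∈ S) (h0 : z ≠ 0) (h0' : z' ≠ 0)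
    (h : ‖hinv z - hinv z'‖ < 1 / 4) : (hinv z') 0 = (hinv z) 0 := by
  obtain ⟨j, -, hj⟩ := hS.idx z hz h0
  obtain ⟨j', -, hj'⟩ := hS.idx z' hz' h0'
  have h1 := (PiLp.norm_apply_le (hinv z - hinv z') 0).trans_lt h
  rw [PiLp.sub_apply, hj, hj', Real.norm_eq_abs, abs_lt] at h1
  rw [hj, hj']
  have : j = j' := by
    have a1 : (j : ℝ) < j' + 1 := by linarith
    have a2 : (j' : ℝ) < j + 1 := by linarith
    have b1 : j < j' + 1 := by exact_mod_cast a1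
    have b2 : j' < j + 1 := by exact_mod_cast a2
    omega
  rw [this]

/-- Continuity criterion for maps modified away from the zero set. -/
lemma contH {Y : Type*} [TopologicalSpace Y] {f h : Y → EuclideanSpace ℝ (Fin (n+1))}
    (hf : Continuous f) (hh : ∀ y, f y ≠ 0 → ContinuousAt h y)
    {δ : ℝ} (hδ : 0 < δ) (hb : ∀ y, ‖f y‖ ≤ δ → ‖h y‖ ≤ 2 * ‖f y‖) : Continuous h := by
  rw [continuous_iff_continuousAt]
  intro y
  by_cases hy : f y = 0
  · have hh0 : h y = 0 := by
      have := hb y (by rw [hy, norm_zero]; exact hδ.le)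
      rw [hy, norm_zero] at this
      simpa using this
    rw [ContinuousAt, hh0]
    have t1 : Filter.Tendsto (fun y => 2 * ‖f y‖) (𝓝 y) (𝓝 0) := by
      have : Continuous fun y => 2 * ‖f y‖ := by fun_prop
      simpa [hy] using this.tendsto y
    refine squeeze_zero_norm' ?_ t1
    have : ∀ᶠ y' in 𝓝 y, ‖f y'‖ < δ := by
      refine (hf.norm.tendsto y).eventually (gt_mem_nhds ?_)
      rw [hy, norm_zero]; exact hδ
    filter_upwards [this] with y' hy'
    exact hb y' hy'.le
  · exact hh y hy

lemma continuousAt_const_of_idx {Y : Type*} [TopologicalSpace Y]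
    {S : Set (EuclideanSpace ℝ (Fin (n+1)))} (hS : IsFam S)
    {f : Y → EuclideanSpace ℝ (Fin (n+1))} (hf : Continuous f) (hfS : ∀ y, f y ∈ S)
    {y : Y} (hy : f y ≠ 0) : ∀ᶠ y' in 𝓝 y, f y' ≠ 0 ∧ (hinv (f y')) 0 = (hinv (f y)) 0 := by
  obtain ⟨δ, hδ, h⟩ := hinv_close (m := n+1) (norm_pos_iff.mpr hy)
  have : ∀ᶠ y' in 𝓝 y, ‖f y - f y'‖ < δ := by
    have c : Continuous fun y' => ‖f y - f y'‖ := by fun_prop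
    refine (c.tendsto y).eventually (gt_mem_nhds ?_)
    simpa using hδ
  filter_upwards [this] with y' hy'
  obtain ⟨h1, h2⟩ := h _ _ le_rfl hy'
  exact ⟨h1, idx_eq_of_close hS (hfS y) (hfS y') hy h1 h2⟩

lemma small_bound {u v : EuclideanSpace ℝ (Fin (n+1))} {z : EuclideanSpace ℝ (Fin (n+1))}
    (hz : z ≠ 0) (hz4 : ‖z‖ ≤ 1 / 4) (hu : u = hinv v) (hv : ‖hinv z‖ - 2 ≤ ‖v‖) :
    ‖u‖ ≤ 2 * ‖z‖ := by
  have hz' : 0 < ‖z‖ := by positivity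
  rw [norm_hinv] at hv
  have h4 : 4 ≤ ‖z‖⁻¹ := by
    rw [le_inv_comm₀ (by norm_num) hz']; linarith
  rw [hu, norm_hinv]
  have h5 : ‖z‖⁻¹ / 2 ≤ ‖v‖ := by linarith
  calc ‖v‖⁻¹ ≤ (‖z‖⁻¹ / 2)⁻¹ := inv_anti₀ (by linarith) h5
    _ = 2 * ‖z‖ := by field_simp

end spheres
section emap
variable {n : ℕ}

/-- Expansion (in inverted coordinates) of the disc of radius `ρ` about `q`. -/
def eMap (q : EuclideanSpace ℝ (Fin (n+1))) (ρ t : ℝ) (v : EuclideanSpace ℝ (Fin (n+1))) :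
    EuclideanSpace ℝ (Fin (n+1)) :=
  (max 0 (1 - t * ‖Pt v - q‖ / ρ)) •
    hinv ((max 0 (1 - t * ‖Pt v - q‖ / ρ)) • (v 0 • ezero n + q) + (Pt v - q))

lemma eMap_zero (q : EuclideanSpace ℝ (Fin (n+1))) (ρ : ℝ) (v : EuclideanSpace ℝ (Fin (n+1))) :
    eMap q ρ 0 v = hinv v := by
  simp only [eMap, zero_mul, zero_div, sub_zero]
  rw [max_eq_right zero_le_one, one_smul, one_smul]
  congr 1
  rw [Pt]; abel

lemma eMap_eq_zero (q : EuclideanSpace ℝ (Fin (n+1))) {ρ : ℝ} (hρ : 0 < ρ) {t : ℝ}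
    {v : EuclideanSpace ℝ (Fin (n+1))} (h : ρ ≤ t * ‖Pt v - q‖) : eMap q ρ t v = 0 := by
  have : max 0 (1 - t * ‖Pt v - q‖ / ρ) = 0 := by
    apply max_eq_left
    have : 1 ≤ t * ‖Pt v - q‖ / ρ := by rwa [le_div_iff₀ hρ, one_mul]
    linarith
  rw [eMap, this, zero_smul]

lemma hinv_eMap (q : EuclideanSpace ℝ (Fin (n+1))) {ρ : ℝ} (hρ : 0 < ρ) {t : ℝ} (ht : 0 ≤ t)
    (v : EuclideanSpace ℝ (Fin (n+1))) : eMap q ρ t v = 0 ∨ ∃ s : ℝ, 1 ≤ s ∧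
    eMap q ρ t v = hinv (v 0 • ezero n + q + s • (Pt v - q)) := by
  unfold eMap
  set c := max 0 (1 - t * ‖Pt v - q‖ / ρ) with hc
  by_cases h0 : c = 0
  · left; rw [h0, zero_smul]
  · right
    have hc0 : 0 ≤ c := le_max_left _ _
    have hc1 : c ≤ 1 := by
      apply max_le zero_le_one
      have : 0 ≤ t * ‖Pt v - q‖ / ρ := by positivity
      linarith
    refine ⟨c⁻¹, (one_le_inv₀ (lt_of_le_of_ne hc0 (Ne.symm h0))).mpr hc1, ?_⟩
    have : v 0 • ezero n + q + c⁻¹ • (Pt v - q) =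
        c⁻¹ • (c • (v 0 • ezero n + q) + (Pt v - q)) := by
      rw [smul_add c⁻¹, smul_smul, inv_mul_cancel₀ h0, one_smul]
    rw [this, hinv_smul, inv_inv]

lemma eMap_sph {q : EuclideanSpace ℝ (Fin (n+1))} (hq : q 0 = 0) {ρ : ℝ} (hρ : 0 < ρ) {t : ℝ}
    (ht : 0 ≤ t) (v : EuclideanSpace ℝ (Fin (n+1))) :
    eMap q ρ t v = 0 ∨ (hinv (eMap q ρ t v)) 0 = v 0 := by
  obtain h | ⟨s, -, h⟩ := hinv_eMap q hρ ht v
  · exact Or.inl h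
  · right
    rw [h, hinv_hinv]
    simp [Pt_apply, hq, ezero_apply]

lemma eMap_bound {q : EuclideanSpace ℝ (Fin (n+1))} (hq : q 0 = 0) (hq1 : ‖q‖ ≤ 1)
    {ρ : ℝ} (hρ : 0 < ρ) {t : ℝ} (ht : 0 ≤ t) {z : EuclideanSpace ℝ (Fin (n+1))}
    (hz : z ≠ 0) (hz4 : ‖z‖ ≤ 1 / 4) : ‖eMap q ρ t (hinv z)‖ ≤ 2 * ‖z‖ := by
  obtain h | ⟨s, hs, h⟩ := hinv_eMap q hρ ht (hinv z)
  · rw [h, norm_zero]; positivity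
  · refine small_bound hz hz4 h ?_
    set v := hinv z
    have h1 := norm_sq_split (v 0) (Pt v - q) (by simp [Pt_apply, hq])
    have h2 := norm_sq_split (v 0) (s • (Pt v - q)) (by simp [Pt_apply, hq])
    rw [norm_smul, Real.norm_eq_abs, mul_pow, sq_abs] at h2
    have h3 : ‖v 0 • ezero n + (Pt v - q)‖ ≤ ‖v 0 • ezero n + s • (Pt v - q)‖ := by
      rw [← sq_le_sq₀ (norm_nonneg _) (norm_nonneg _), h1, h2]
      nlinarith [sq_nonneg ‖Pt v - q‖, mul_nonneg (by nlinarith : 0 ≤ s ^ 2 - 1)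
        (sq_nonneg ‖Pt v - q‖)]
    have h4 : v 0 • ezero n + (Pt v - q) = v - q := by
      rw [← add_sub_assoc, Pt_add]
    have h5 : ‖v 0 • ezero n + s • (Pt v - q)‖ ≤
        ‖v 0 • ezero n + q + s • (Pt v - q)‖ + ‖q‖ := by
      have e : v 0 • ezero n + s • (Pt v - q) =
          v 0 • ezero n + q + s • (Pt v - q) - q := by abel
      rw [e]
      exact norm_sub_le _ _
    rw [h4] at h3
    have h6 := norm_sub_norm_le v q
    linarith

lemma eMap_continuousAt {Y : Type*} [TopologicalSpace Y] {q : EuclideanSpace ℝ (Fin (n+1))}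
    (hq : q 0 = 0) {ρ t : Y → ℝ}
    {v : Y → EuclideanSpace ℝ (Fin (n+1))} {y : Y} (hρ : ContinuousAt ρ y)
    (ht : ContinuousAt t y) (hv : ContinuousAt v y) (hρ0 : 0 < ρ y) (hv0 : v y 0 ≠ 0) :
    ContinuousAt (fun y => eMap q (ρ y) (t y) (v y)) y := by
  have hP : ContinuousAt (fun y => Pt (v y)) y := continuous_Pt.continuousAt.comp hv
  have hv' : ContinuousAt (fun y => v y 0) y := by fun_prop
  have hc : ContinuousAt (fun y => max 0 (1 - t y * ‖Pt (v y) - q‖ / ρ y)) y := by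
    refine continuousAt_const.max ?_
    refine continuousAt_const.sub (ContinuousAt.div (by fun_prop) hρ hρ0.ne')
  refine hc.smul ?_
  have hT : ContinuousAt (fun y => (max 0 (1 - t y * ‖Pt (v y) - q‖ / ρ y)) •
    ((v y) 0 • ezero n + q) + (Pt (v y) - q)) y := by
    refine (hc.smul (by fun_prop)).add (by fun_prop)
  refine ContinuousAt.comp' (continuousAt_hinv ?_) hT
  intro h0
  have h1 := congrArg (fun u => u 0) h0
  simp only [PiLp.add_apply, PiLp.smul_apply, PiLp.sub_apply, ezero_apply, hq, Pt_apply,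
    PiLp.zero_apply, smul_eq_mul, mul_one, add_zero, sub_zero, mul_eq_zero, hv0, or_false] at h1
  rw [h1, zero_smul, zero_add] at h0
  rw [h0] at h1
  simp at h1

/-- The expansion homotopy applied to a map into the earring. -/
def eHom {X : Type*} (q : EuclideanSpace ℝ (Fin (n+1))) (ρ : ℝ → ℝ)
    (f : X → EuclideanSpace ℝ (Fin (n+1))) (p : I × X) : EuclideanSpace ℝ (Fin (n+1)) :=
  if f p.2 = 0 then 0 else eMap q (ρ ((hinv (f p.2)) 0)) p.1 (hinv (f p.2))

variable {S : Set (EuclideanSpace ℝ (Fin (n+1)))}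

lemma IsFam.idx_ne (hS : IsFam S) {z : EuclideanSpace ℝ (Fin (n+1))} (hz : z ∈ S) (h0 : z ≠ 0) :
    (hinv z) 0 ≠ 0 := by
  obtain ⟨j, hj, h⟩ := hS.idx z hz h0
  rw [h]
  have : (0 : ℝ) < j := by exact_mod_cast hj
  positivity

lemma continuous_eHom {X : Type*} [TopologicalSpace X] (hS : IsFam S)
    {q : EuclideanSpace ℝ (Fin (n+1))} (hq : q 0 = 0) (hq1 : ‖q‖ ≤ 1) {ρ : ℝ → ℝ}
    (hρ : ∀ a, 0 < ρ a) {f : X → EuclideanSpace ℝ (Fin (n+1))} (hf : Continuous f)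
    (hfS : ∀ x, f x ∈ S) : Continuous (eHom q ρ f) := by
  refine contH (f := fun p : I × X => f p.2) (by fun_prop) ?_ (δ := 1 / 4) (by norm_num) ?_
  · rintro p hp
    have hev := continuousAt_const_of_idx hS (f := fun p : I × X => f p.2) (by fun_prop)
      (fun p => hfS p.2) hp
    have hc : ContinuousAt (fun p' : I × X => eMap q (ρ ((hinv (f p.2)) 0)) p'.1
        (hinv (f p'.2))) p := by
      refine eMap_continuousAt hq continuousAt_const (by fun_prop) ?_ (hρ _) ?_
      · exact ContinuousAt.comp' (continuousAt_hinv hp) (by fun_prop)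
      · exact hS.idx_ne (hfS _) hp
    refine hc.congr ?_
    filter_upwards [hev] with p' hp'
    rw [eHom, if_neg hp'.1, hp'.2]
  · intro p hp
    unfold eHom
    split_ifs with h
    · simp
    · exact eMap_bound hq hq1 (hρ _) p.1.2.1 h hp

lemma eHom_sph {X : Type*} {q : EuclideanSpace ℝ (Fin (n+1))} (hq : q 0 = 0)
    {ρ : ℝ → ℝ} (hρ : ∀ a, 0 < ρ a) (f : X → EuclideanSpace ℝ (Fin (n+1))) (p : I × X) :
    Sph (f p.2) (eHom q ρ f p) := by
  unfold eHom
  split_ifs with h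
  · exact Or.inl rfl
  · obtain h1 | h1 := eMap_sph hq (hρ ((hinv (f p.2)) 0)) p.1.2.1 (hinv (f p.2))
    · exact Or.inl h1
    · exact Or.inr ⟨h, h1⟩

lemma eHom_zero {X : Type*} (q : EuclideanSpace ℝ (Fin (n+1)))
    (ρ : ℝ → ℝ) (f : X → EuclideanSpace ℝ (Fin (n+1))) (x : X) :
    eHom q ρ f (0, x) = f x := by
  unfold eHom
  split_ifs with h
  · exact h.symm
  · simp [eMap_zero, hinv_hinv]

/-- A homotopy staying on spheres gives a homotopy of loops. -/
lemma homotopic_of {N : Type*} (hS : IsFam S) {pt : ↥S} (hpt : (pt : EuclideanSpace ℝ (Fin (n+1))) = 0)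
    (f g : Ω^ N ↥S pt) (h : I × (I^N) → EuclideanSpace ℝ (Fin (n+1))) (hc : Continuous h)
    (h0 : ∀ x, h (0, x) = f x) (h1 : ∀ x, h (1, x) = g x)
    (hs : ∀ p, Sph (f p.2 : EuclideanSpace ℝ (Fin (n+1))) (h p)) : GenLoop.Homotopic f g := by
  refine ⟨⟨⟨⟨fun p => ⟨h p, hS.sph _ (f p.2).2 _ (hs p)⟩, by fun_prop⟩, ?_, ?_⟩, ?_⟩⟩
  · intro x; exact Subtype.ext (h0 x)
  · intro x; exact Subtype.ext (h1 x)
  · intro t x hx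
    apply Subtype.ext
    have hfx : f x = pt := f.2 x hx
    have := hs (t, x)
    change h (t, x) = (f x : EuclideanSpace ℝ (Fin (n+1)))
    rw [hfx, hpt]
    simp only [hfx, hpt, Sph] at this
    simpa using this

/-- Build a loop from a map staying on the spheres of a given loop. -/
def loopOf {N : Type*} (hS : IsFam S) {pt : ↥S} (hpt : (pt : EuclideanSpace ℝ (Fin (n+1))) = 0)
    (f : Ω^ N ↥S pt) (g : (I^N) → EuclideanSpace ℝ (Fin (n+1))) (hc : Continuous g)
    (hs : ∀ x, Sph (f x : EuclideanSpace ℝ (Fin (n+1))) (g x)) : Ω^ N ↥S pt :=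
  ⟨⟨fun x => ⟨g x, hS.sph _ (f x).2 _ (hs x)⟩, by fun_prop⟩, by
    intro x hx
    apply Subtype.ext
    have hfx : f x = pt := f.2 x hx
    have := hs x
    change g x = _
    rw [hpt]
    simp only [hfx, hpt, Sph] at this
    simpa using this⟩

/-- The expanded loop. -/
def eLoop {N : Type*} (hS : IsFam S) {pt : ↥S} (hpt : (pt : EuclideanSpace ℝ (Fin (n+1))) = 0)
    {q : EuclideanSpace ℝ (Fin (n+1))} (hq : q 0 = 0) (hq1 : ‖q‖ ≤ 1) {ρ : ℝ → ℝ}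
    (hρ : ∀ a, 0 < ρ a) (f : Ω^ N ↥S pt) : Ω^ N ↥S pt :=
  loopOf hS hpt f (fun x => eHom q ρ (fun x => (f x : EuclideanSpace ℝ (Fin (n+1)))) (1, x))
    ((continuous_eHom hS hq hq1 hρ (by fun_prop) (fun x => (f x).2)).comp (by fun_prop))
    (fun x => eHom_sph hq hρ (fun x => (f x : EuclideanSpace ℝ (Fin (n+1)))) (1, x))

lemma eLoop_homotopic {N : Type*} (hS : IsFam S) {pt : ↥S}
    (hpt : (pt : EuclideanSpace ℝ (Fin (n+1))) = 0)
    {q : EuclideanSpace ℝ (Fin (n+1))} (hq : q 0 = 0) (hq1 : ‖q‖ ≤ 1) {ρ : ℝ → ℝ}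
    (hρ : ∀ a, 0 < ρ a) (f : Ω^ N ↥S pt) :
    GenLoop.Homotopic f (eLoop hS hpt hq hq1 hρ f) :=
  homotopic_of hS hpt _ _ (eHom q ρ (fun x => (f x : EuclideanSpace ℝ (Fin (n+1)))))
    (continuous_eHom hS hq hq1 hρ (by fun_prop) (fun x => (f x).2))
    (fun x => eHom_zero _ _ _ x) (fun _ => rfl) (fun p => eHom_sph hq hρ _ p)

lemma eLoop_apply {N : Type*} (hS : IsFam S) {pt : ↥S}
    (hpt : (pt : EuclideanSpace ℝ (Fin (n+1))) = 0)
    {q : EuclideanSpace ℝ (Fin (n+1))} (hq : q 0 = 0) (hq1 : ‖q‖ ≤ 1) {ρ : ℝ → ℝ}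
    (hρ : ∀ a, 0 < ρ a) (f : Ω^ N ↥S pt) (x : I^N) :
    (eLoop hS hpt hq hq1 hρ f x : EuclideanSpace ℝ (Fin (n+1))) =
      eHom q ρ (fun x => (f x : EuclideanSpace ℝ (Fin (n+1)))) (1, x) := rfl

end emap
section close
variable {n : ℕ} {S : Set (EuclideanSpace ℝ (Fin (n+1)))}

lemma norm_Pt_ge (v : EuclideanSpace ℝ (Fin (n+1))) : ‖v‖ - |v 0| ≤ ‖Pt v‖ := by
  have h := norm_add_le (v 0 • ezero n) (Pt v)
  rw [Pt_add, norm_smul, norm_ezero, mul_one, Real.norm_eq_abs] at h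
  linarith

lemma close_homotopic {N : Type*} (hS : IsFam S) {pt : ↥S}
    (hpt : (pt : EuclideanSpace ℝ (Fin (n+1))) = 0) {K : ℝ} (hK : 0 ≤ K)
    (hSK : ∀ z ∈ S, z ≠ 0 → (hinv z) 0 ≤ K) :
    ∃ ε > 0, ∀ a b : Ω^ N ↥S pt, (∀ x, dist (a x) (b x) < ε) → GenLoop.Homotopic a b := by
  obtain ⟨η, hη⟩ : ∃ η : ℝ, η = (2 * (K + 2))⁻¹ := ⟨_, rfl⟩
  have hη0 : 0 < η := by rw [hη]; positivity
  obtain ⟨δ, hδ, hcl⟩ := hinv_close (m := n+1) hη0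
  refine ⟨min δ η, by positivity, fun a b hab => ?_⟩
  have habs : ∀ z ∈ S, z ≠ 0 → |(hinv z) 0| ≤ K := by
    intro z hz h0
    obtain ⟨j, hj, h⟩ := hS.idx z hz h0
    rw [abs_of_nonneg]
    · exact hSK z hz h0
    · rw [h]; positivity
  -- vanishing
  have hvan : ∀ v : EuclideanSpace ℝ (Fin (n+1)), |v 0| ≤ K → K + 1 ≤ ‖v‖ →
      eMap 0 1 1 v = 0 := by
    intro v h1 h2
    apply eMap_eq_zero _ one_pos
    have := norm_Pt_ge v
    rw [sub_zero, one_mul]; linarith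
  have hbig : ∀ z : EuclideanSpace ℝ (Fin (n+1)), z ≠ 0 → ‖z‖ < 2 * η → K + 2 < ‖hinv z‖ := by
    intro z h0 hz
    rw [norm_hinv, lt_inv_comm₀ (by positivity) (by positivity)]
    refine hz.trans_le (le_of_eq ?_)
    rw [hη]; field_simp
  have hsub : ∀ x, ‖(a x : EuclideanSpace ℝ (Fin (n+1))) - b x‖ < min δ η := by
    intro x
    have := hab x
    rwa [Subtype.dist_eq, dist_eq_norm] at this
  have hab' : ∀ x, η < ‖(a x : EuclideanSpace ℝ (Fin (n+1)))‖ →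
      (a x : EuclideanSpace ℝ (Fin (n+1))) ≠ 0 ∧ (b x : EuclideanSpace ℝ (Fin (n+1))) ≠ 0 ∧
      (hinv (b x : EuclideanSpace ℝ (Fin (n+1)))) 0 = (hinv (a x : EuclideanSpace ℝ (Fin (n+1)))) 0 ∧
      ‖hinv (a x : EuclideanSpace ℝ (Fin (n+1))) - hinv (b x : EuclideanSpace ℝ (Fin (n+1)))‖
        < 1 / 4 := by
    intro x hx
    have hax : (a x : EuclideanSpace ℝ (Fin (n+1))) ≠ 0 := by
      rw [← norm_pos_iff]; linarith
    obtain ⟨h1, h2⟩ := hcl _ _ hx.le ((hsub x).trans_le (min_le_left _ _))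
    exact ⟨hax, h1, idx_eq_of_close hS (a x).2 (b x).2 hax h1 h2, h2⟩
  have hone : ∀ _ : ℝ, (0 : ℝ) < 1 := fun _ => one_pos
  have hz0 : (0 : EuclideanSpace ℝ (Fin (n+1))) 0 = 0 := rfl
  have hz1 : ‖(0 : EuclideanSpace ℝ (Fin (n+1)))‖ ≤ 1 := by simp
  refine (eLoop_homotopic hS hpt hz0 hz1 hone a).trans
    (GenLoop.Homotopic.trans ?_ (eLoop_homotopic hS hpt hz0 hz1 hone b).symm)
  have hesmall : ∀ z ∈ S, ‖z‖ < 2 * η → z ≠ 0 → eMap 0 1 1 (hinv z) = 0 := by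
    intro z hz h1 h0
    exact hvan _ (habs z hz h0) (by linarith [hbig z h0 h1])
  let F : I × (I^N) → EuclideanSpace ℝ (Fin (n+1)) := fun p =>
    if η < ‖(a p.2 : EuclideanSpace ℝ (Fin (n+1)))‖ then
      eMap 0 1 1 (hinv (a p.2 : EuclideanSpace ℝ (Fin (n+1))) + (p.1 : ℝ) •
        (hinv (b p.2 : EuclideanSpace ℝ (Fin (n+1))) - hinv (a p.2 : EuclideanSpace ℝ (Fin (n+1)))))
    else 0
  have hlin0 : ∀ p : I × (I^N), η < ‖(a p.2 : EuclideanSpace ℝ (Fin (n+1)))‖ →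
      (hinv (a p.2 : EuclideanSpace ℝ (Fin (n+1))) + (p.1 : ℝ) •
        (hinv (b p.2 : EuclideanSpace ℝ (Fin (n+1))) -
          hinv (a p.2 : EuclideanSpace ℝ (Fin (n+1))))) 0 =
      (hinv (a p.2 : EuclideanSpace ℝ (Fin (n+1)))) 0 := by
    intro p hp
    obtain ⟨h1, h2, h3, h4⟩ := hab' _ hp
    simp [h3]
  have hFsmall : ∀ p : I × (I^N), ‖(a p.2 : EuclideanSpace ℝ (Fin (n+1)))‖ < 2 * η → F p = 0 := by
    intro p hp
    simp only [F]
    split_ifs with h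
    · obtain ⟨h1, h2, h3, h4⟩ := hab' _ h
      apply hvan
      · rw [hlin0 p h]
        exact habs _ (a p.2).2 h1
      · have h5 := hbig _ h1 hp
        have h6 := norm_sub_le_norm_add (hinv (a p.2 : EuclideanSpace ℝ (Fin (n+1)))) ((p.1 : ℝ) •
          (hinv (b p.2 : EuclideanSpace ℝ (Fin (n+1))) -
            hinv (a p.2 : EuclideanSpace ℝ (Fin (n+1)))))
        rw [norm_smul, norm_sub_rev, Real.norm_eq_abs, abs_of_nonneg p.1.2.1] at h6
        have h7 := p.1.2.2
        have h8 := p.1.2.1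
        nlinarith [norm_nonneg (hinv (a p.2 : EuclideanSpace ℝ (Fin (n+1))) -
          hinv (b p.2 : EuclideanSpace ℝ (Fin (n+1))))]
    · rfl
  have hac : Continuous fun p : I × (I^N) => (a p.2 : EuclideanSpace ℝ (Fin (n+1))) := by fun_prop
  have hbc : Continuous fun p : I × (I^N) => (b p.2 : EuclideanSpace ℝ (Fin (n+1))) := by fun_prop
  have hFc : Continuous F := by
    rw [continuous_iff_continuousAt]
    intro p
    by_cases hp : ‖(a p.2 : EuclideanSpace ℝ (Fin (n+1)))‖ < 2 * η
    · have : ∀ᶠ p' in 𝓝 p, ‖(a p'.2 : EuclideanSpace ℝ (Fin (n+1)))‖ < 2 * η :=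
        (hac.norm.tendsto p).eventually (gt_mem_nhds hp)
      have h0 : ContinuousAt (fun _ : I × (I^N) => (0 : EuclideanSpace ℝ (Fin (n+1)))) p :=
        continuousAt_const
      refine h0.congr ?_
      filter_upwards [this] with p' hp'
      exact (hFsmall p' hp').symm
    · have hp' : η < ‖(a p.2 : EuclideanSpace ℝ (Fin (n+1)))‖ := by linarith
      have hev : ∀ᶠ p' in 𝓝 p, η < ‖(a p'.2 : EuclideanSpace ℝ (Fin (n+1)))‖ :=
        (hac.norm.tendsto p).eventually (lt_mem_nhds hp')
      obtain ⟨h1, h2, h3, h4⟩ := hab' _ hp'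
      have ca : ContinuousAt (fun p : I × (I^N) =>
          hinv (a p.2 : EuclideanSpace ℝ (Fin (n+1)))) p :=
        ContinuousAt.comp' (continuousAt_hinv h1) hac.continuousAt
      have cb : ContinuousAt (fun p : I × (I^N) =>
          hinv (b p.2 : EuclideanSpace ℝ (Fin (n+1)))) p :=
        ContinuousAt.comp' (continuousAt_hinv h2) hbc.continuousAt
      have ct : ContinuousAt (fun p : I × (I^N) => (p.1 : ℝ)) p := by fun_prop
      have := eMap_continuousAt (q := (0 : EuclideanSpace ℝ (Fin (n+1)))) hz0
        (ρ := fun _ : I × (I^N) => 1) (t := fun _ => 1) (y := p)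
        continuousAt_const continuousAt_const (ca.add (ct.smul (cb.sub ca))) one_pos
        (by
          change (hinv (a p.2 : EuclideanSpace ℝ (Fin (n+1))) + (p.1 : ℝ) •
            (hinv (b p.2 : EuclideanSpace ℝ (Fin (n+1))) -
            hinv (a p.2 : EuclideanSpace ℝ (Fin (n+1))))) 0 ≠ 0
          rw [hlin0 p hp']
          exact hS.idx_ne (a p.2).2 h1)
      refine this.congr ?_
      filter_upwards [hev] with p' hp'
      simp only [F]
      rw [if_pos hp']
      rfl
  have hesph : ∀ p : I × (I^N), Sph (a p.2 : EuclideanSpace ℝ (Fin (n+1))) (F p) := by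
    intro p
    simp only [F]
    split_ifs with h
    · obtain h1 | h1 := eMap_sph hz0 one_pos zero_le_one (hinv (a p.2 : EuclideanSpace ℝ (Fin (n+1)))
        + (p.1 : ℝ) • (hinv (b p.2 : EuclideanSpace ℝ (Fin (n+1))) -
        hinv (a p.2 : EuclideanSpace ℝ (Fin (n+1)))))
      · exact Or.inl h1
      · rw [hlin0 p h] at h1
        exact Or.inr ⟨(hab' _ h).1, h1⟩
    · exact Or.inl rfl
  have hea : ∀ x, F (0, x) = eLoop hS hpt hz0 hz1 hone a x := by
    intro x
    rw [eLoop_apply, eHom]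
    by_cases h : η < ‖(a x : EuclideanSpace ℝ (Fin (n+1)))‖
    · have h1 := (hab' _ h).1
      simp [F, h, h1]
    · split_ifs with h0
      · exact hFsmall (0, x) (by simp only [h0, norm_zero]; positivity)
      · rw [hFsmall (0, x) (by change ‖(a x : EuclideanSpace ℝ (Fin (n+1)))‖ < _; linarith)]
        exact (hesmall _ (a x).2 (by linarith) h0).symm
  have heb : ∀ x, F (1, x) = eLoop hS hpt hz0 hz1 hone b x := by
    intro x
    rw [eLoop_apply, eHom]
    by_cases h : η < ‖(a x : EuclideanSpace ℝ (Fin (n+1)))‖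
    · have h1 := (hab' _ h).2.1
      simp [F, h, h1]
    · rw [hFsmall (1, x) (by change ‖(a x : EuclideanSpace ℝ (Fin (n+1)))‖ < _; linarith)]
      split_ifs with h0
      · rfl
      · refine (hesmall _ (b x).2 ?_ h0).symm
        have h2 := norm_sub_norm_le (b x : EuclideanSpace ℝ (Fin (n+1))) (a x)
        have h3 := (hsub x).trans_le (min_le_right _ _)
        rw [norm_sub_rev] at h3
        linarith
  -- the homotopy stays on the same spheres as `a`
  refine ⟨⟨⟨⟨fun p => ⟨F p, hS.sph _ (a p.2).2 _ (hesph p)⟩, by fun_prop⟩, ?_, ?_⟩, ?_⟩⟩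
  · intro x; exact Subtype.ext (hea x)
  · intro x; exact Subtype.ext (heb x)
  · intro t x hx
    have h1 : a x = pt := a.2 x hx
    have h2 : eLoop hS hpt hz0 hz1 hone a x = pt := (eLoop hS hpt hz0 hz1 hone a).2 x hx
    apply Subtype.ext
    change F (t, x) = (eLoop hS hpt hz0 hz1 hone a x : EuclideanSpace ℝ (Fin (n+1)))
    rw [h2, hpt]
    apply hFsmall
    simp only [h1, hpt, norm_zero]; positivity

end close
section algebra

variable {N X Y : Type*} [TopologicalSpace X] [TopologicalSpace Y] {x : X} {y : Y}

/-- The class of a loop. -/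
def hmk (f : Ω^ N X x) : HomotopyGroup N X x := Quotient.mk (GenLoop.Homotopic.setoid N x) f

lemma hmk_surj (γ : HomotopyGroup N X x) : ∃ f, hmk f = γ := Quotient.exists_rep γ

lemma hmk_eq {f g : Ω^ N X x} : hmk f = hmk g ↔ GenLoop.Homotopic f g := by
  unfold hmk
  exact Quotient.eq

lemma piInduced_hmk (φ : C(X, Y)) (hφ : φ x = y) (f : Ω^ N X x) :
    piInduced N φ hφ (hmk f) = hmk (GenLoop.compCM φ hφ f) := rfl

lemma hmk_const [DecidableEq N] [Nonempty N] :
    hmk (GenLoop.const : Ω^ N X x) = 1 := rfl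

lemma hmk_transAt [DecidableEq N] [Nonempty N] (i : N) (f g : Ω^ N X x) :
    hmk (GenLoop.transAt i f g) = hmk g * hmk f :=
  (HomotopyGroup.mul_spec (i := i) (p := g) (q := f)).symm

lemma compCM_transAt [DecidableEq N] (φ : C(X, Y)) (hφ : φ x = y) (i : N) (f g : Ω^ N X x) :
    GenLoop.compCM φ hφ (GenLoop.transAt i f g) =
      GenLoop.transAt i (GenLoop.compCM φ hφ f) (GenLoop.compCM φ hφ g) := by
  ext t
  change φ (GenLoop.transAt i f g t) = _
  simp only [GenLoop.transAt, GenLoop.coe_copy]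
  split_ifs <;> rfl

/-- The grid cell with dyadic depths `d` and indices `v`. -/
def cell (d v : N → ℕ) : Set (I^N) :=
  {y | ∀ i, (v i : ℝ) ≤ 2 ^ d i * (y i : ℝ) ∧ 2 ^ d i * (y i : ℝ) ≤ v i + 1}

/-- The dyadic grid with depths `d`. -/
def grid (d : N → ℕ) : Set (I^N) := {y | ∃ i, ∃ p : ℕ, 2 ^ d i * (y i : ℝ) = p}

/-- left half of the interval -/
def lh (t : I) : I := ⟨(t : ℝ) / 2, by have := t.2.1; have := t.2.2; constructor <;> linarith⟩
/-- right half of the interval -/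
def rh (t : I) : I := ⟨((t : ℝ) + 1) / 2, by have := t.2.1; have := t.2.2; constructor <;> linarith⟩

lemma continuous_lh : Continuous lh := by unfold lh; fun_prop
lemma continuous_rh : Continuous rh := by unfold rh; fun_prop

lemma upd_lh_grid [DecidableEq N] {d : N → ℕ} {i : N} {e : ℕ} (hd : d i = e + 1) {t : I^N}
    (ht : t ∈ grid (Function.update d i e)) : Function.update t i (lh (t i)) ∈ grid d := by
  obtain ⟨j, p, hp⟩ := ht
  by_cases hj : j = i
  · subst hj
    refine ⟨j, p, ?_⟩
    simp only [Function.update_self] at hp ⊢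
    rw [← hp, hd, lh, pow_succ]; ring
  · refine ⟨j, p, ?_⟩
    simp only [Function.update_of_ne hj] at hp ⊢
    exact hp

lemma upd_rh_grid [DecidableEq N] {d : N → ℕ} {i : N} {e : ℕ} (hd : d i = e + 1) {t : I^N}
    (ht : t ∈ grid (Function.update d i e)) : Function.update t i (rh (t i)) ∈ grid d := by
  obtain ⟨j, p, hp⟩ := ht
  by_cases hj : j = i
  · subst hj
    refine ⟨j, p + 2 ^ e, ?_⟩
    simp only [Function.update_self] at hp ⊢
    push_cast
    rw [← hp, hd, rh, pow_succ]; ring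
  · refine ⟨j, p, ?_⟩
    simp only [Function.update_of_ne hj] at hp ⊢
    exact hp

lemma upd_lh_cell [DecidableEq N] {d v : N → ℕ} {i : N} {e : ℕ} (hd : d i = e + 1) {t : I^N}
    (ht : t ∈ cell (Function.update d i e) v) : Function.update t i (lh (t i)) ∈ cell d v := by
  intro j
  have hp := ht j
  by_cases hj : j = i
  · subst hj
    simp only [Function.update_self] at hp ⊢
    have : (2 : ℝ) ^ d j * (lh (t j) : ℝ) = 2 ^ e * t j := by rw [hd, lh, pow_succ]; ring
    rwa [this]
  · simp only [Function.update_of_ne hj] at hp ⊢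
    exact hp

lemma upd_rh_cell [DecidableEq N] {d v : N → ℕ} {i : N} {e : ℕ} (hd : d i = e + 1) {t : I^N}
    (ht : t ∈ cell (Function.update d i e) v) :
    Function.update t i (rh (t i)) ∈ cell d (Function.update v i (v i + 2 ^ e)) := by
  intro j
  have hp := ht j
  by_cases hj : j = i
  · subst hj
    simp only [Function.update_self] at hp ⊢
    have : (2 : ℝ) ^ d j * (rh (t j) : ℝ) = 2 ^ e * t j + 2 ^ e := by rw [hd, rh, pow_succ]; ring
    rw [this]
    push_cast
    constructor <;> linarith [hp.1, hp.2]
  · simp only [Function.update_of_ne hj] at hp ⊢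
    exact hp

lemma boundary_grid (d : N → ℕ) {t : I^N} (ht : t ∈ Cube.boundary N) : t ∈ grid d := by
  obtain ⟨i, h | h⟩ := ht
  · exact ⟨i, 0, by simp [h]⟩
  · exact ⟨i, 2 ^ d i, by simp [h]⟩

lemma dyadic_split [DecidableEq N] [Nontrivial N] (α β : C(X, X)) (hα : α x = x) (hβ : β x = x) :
    ∀ (s : ℕ) (d : N → ℕ) [Fintype N] (_ : ∑ i, d i = s) (g : Ω^ N X x)
    (_ : ∀ t ∈ grid d, g t = x)
    (_ : ∀ v : N → ℕ, (∀ t ∈ cell d v, α (g t) = g t ∧ β (g t) = x) ∨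
      (∀ t ∈ cell d v, α (g t) = x ∧ β (g t) = g t)),
    hmk g = piInduced N α hα (hmk g) * piInduced N β hβ (hmk g) := by
  intro s
  induction s with
  | zero =>
    intro d _ hd g hg hv
    have hd0 : ∀ i, d i = 0 := by
      intro i
      have := (Finset.sum_eq_zero_iff.mp hd) i (Finset.mem_univ _)
      exact this
    have hcell : ∀ t : I^N, t ∈ cell d (fun _ => 0) := by
      intro t i
      have h1 := (t i).2.1
      have h2 := (t i).2.2
      simp [hd0 i]
      exact ⟨h1, h2⟩
    simp only [piInduced_hmk]
    obtain h | h := hv (fun _ => 0)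
    · have e1 : GenLoop.compCM α hα g = g := by
        ext t; exact (h t (hcell t)).1
      have e2 : GenLoop.compCM β hβ g = GenLoop.const := by
        ext t; exact (h t (hcell t)).2
      rw [e1, e2, hmk_const, mul_one]
    · have e1 : GenLoop.compCM α hα g = GenLoop.const := by
        ext t; exact (h t (hcell t)).1
      have e2 : GenLoop.compCM β hβ g = g := by
        ext t; exact (h t (hcell t)).2
      rw [e1, e2, hmk_const, one_mul]
  | succ s ih =>
    intro d _ hd g hg hv
    obtain ⟨i, hi⟩ : ∃ i, d i ≠ 0 := by
      by_contra! h
      simp [h] at hd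
    obtain ⟨e, he⟩ := Nat.exists_eq_succ_of_ne_zero hi
    have hsum : ∑ j, Function.update d i e j = s := by
      have h1 := Finset.sum_update_of_mem (Finset.mem_univ i) d e
      have h2 := Finset.add_sum_erase Finset.univ d (Finset.mem_univ i)
      rw [Finset.sdiff_singleton_eq_erase] at h1
      omega
    let gl : Ω^ N X x := ⟨⟨fun t => g (Function.update t i (lh (t i))), by
        have := continuous_lh
        fun_prop⟩, fun t ht => hg _ (upd_lh_grid he (boundary_grid _ ht))⟩
    let gr : Ω^ N X x := ⟨⟨fun t => g (Function.update t i (rh (t i))), by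
        have := continuous_rh
        fun_prop⟩, fun t ht => hg _ (upd_rh_grid he (boundary_grid _ ht))⟩
    have hgl : hmk gl = _ := ih (Function.update d i e) hsum gl
      (fun t ht => hg _ (upd_lh_grid he ht))
      (fun v => (hv v).imp (fun h t ht => h _ (upd_lh_cell he ht))
        (fun h t ht => h _ (upd_lh_cell he ht)))
    have hgr : hmk gr = _ := ih (Function.update d i e) hsum gr
      (fun t ht => hg _ (upd_rh_grid he ht))
      (fun v => (hv (Function.update v i (v i + 2 ^ e))).imp
        (fun h t ht => h _ (upd_rh_cell he ht))
        (fun h t ht => h _ (upd_rh_cell he ht)))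
    have hgt : g = GenLoop.transAt i gl gr := by
      ext t
      simp only [GenLoop.transAt, GenLoop.coe_copy]
      have t0 := (t i).2.1
      have t1 := (t i).2.2
      split_ifs with h
      · change g t = g _
        congr 1
        rw [Function.update_idem, Function.update_self]
        symm
        convert Function.update_eq_self i t
        apply Subtype.ext
        rw [lh, Set.projIcc_of_mem _ (⟨by linarith, by linarith⟩ : 2 * (t i : ℝ) ∈ Set.Icc (0:ℝ) 1)]
        simp
      · change g t = g _
        congr 1
        rw [Function.update_idem, Function.update_self]
        symm
        convert Function.update_eq_self i t
        apply Subtype.ext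
        rw [rh, Set.projIcc_of_mem _
          (⟨by linarith, by linarith⟩ : 2 * (t i : ℝ) - 1 ∈ Set.Icc (0:ℝ) 1)]
        simp
    rw [hgt]
    simp only [piInduced_hmk] at hgl hgr ⊢
    rw [compCM_transAt, compCM_transAt, hmk_transAt, hmk_transAt, hmk_transAt]
    have comm : ∀ a b c d : HomotopyGroup N X x, (a * b) * (c * d) = (a * c) * (b * d) := by
      intro a b c d
      exact @mul_mul_mul_comm _ (HomotopyGroup.commGroup (N := N) (X := X) (x := x)).toCommMonoid.toCommSemigroup a b c d
    rw [← comm, ← hgl, ← hgr]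

end algebra
section smoothing

lemma exists_diff_selection {D F : Type*} [NormedAddCommGroup D] [NormedSpace ℝ D]
    [FiniteDimensional ℝ D] [NormedAddCommGroup F] [NormedSpace ℝ F]
    {U : Set D} (hU : IsOpen U) (t : D → Set F) (ht : ∀ y ∈ U, Convex ℝ (t y))
    (hloc : ∀ y ∈ U, ∃ c : F, ∀ᶠ y' in 𝓝 y, c ∈ t y') :
    ∃ g : D → F, DifferentiableOn ℝ g U ∧ ∀ y ∈ U, g y ∈ t y := by
  classical
  let M : TopologicalSpace.Opens D := ⟨U, hU⟩
  have : LocallyCompactSpace D := by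
    have := FiniteDimensional.proper_real D
    infer_instance
  have : SecondCountableTopology D := by
    have := FiniteDimensional.proper_real D
    infer_instance
  have : LocallyCompactSpace M := hU.locallyCompactSpace
  have : SecondCountableTopology M := inferInstanceAs (SecondCountableTopology U)
  have : SigmaCompactSpace M := inferInstance
  obtain ⟨g, hg⟩ := exists_contMDiffMap_forall_mem_convex_of_local_const (n := 1)
    (M := M) (modelWithCornersSelf ℝ D) (t := fun y : M => t y) (fun y => ht y y.2) (by
      intro y
      obtain ⟨c, hc⟩ := hloc y y.2
      exact ⟨c, continuous_subtype_val.continuousAt.eventually hc⟩)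
  refine ⟨fun y => if h : y ∈ U then g ⟨y, h⟩ else 0, ?_, ?_⟩
  · intro y hy
    apply DifferentiableAt.differentiableWithinAt
    have h3 : (fun x : M => (fun y => if h : y ∈ U then g ⟨y, h⟩ else 0) (x : D)) = g := by
      funext x
      have : (x : D) ∈ U := x.2
      simp [this]
    have h4 : ContMDiffAt (modelWithCornersSelf ℝ D) (modelWithCornersSelf ℝ F) (1 : ℕ∞)
        (fun y => if h : y ∈ U then g ⟨y, h⟩ else 0) ((⟨y, hy⟩ : M) : D) := by
      rw [← contMDiffAt_subtype_iff, h3]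
      exact g.contMDiff _
    exact (contMDiffAt_iff_contDiffAt.mp h4).differentiableAt (by simp)
  · intro y hy
    simp only [hy, dif_pos]
    exact hg ⟨y, hy⟩

end smoothing
section smoothing2
variable {n : ℕ} {S : Set (EuclideanSpace ℝ (Fin (n+1)))}

/-- The inclusion of the cube. -/
def cubeCoe {N : Type*} (x : I^N) : N → ℝ := fun i => (x i : ℝ)

lemma continuous_cubeCoe {N : Type*} : Continuous (cubeCoe (N := N)) := by
  unfold cubeCoe; fun_prop

lemma smooth_loop (hS : IsFam S) {pt : ↥S} (hpt : (pt : EuclideanSpace ℝ (Fin (n+1))) = 0)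
    (f : Ω^ (Fin n) ↥S pt) : ∃ f0 : Ω^ (Fin n) ↥S pt, GenLoop.Homotopic f f0 ∧
      ∃ (U : Set (Fin n → ℝ)) (g : (Fin n → ℝ) → EuclideanSpace ℝ (Fin (n+1))),
        DifferentiableOn ℝ g U ∧ ∀ x, (f0 x : EuclideanSpace ℝ (Fin (n+1))) ≠ 0 →
          cubeCoe x ∈ U ∧ hinv (f0 x : EuclideanSpace ℝ (Fin (n+1))) = g (cubeCoe x) := by
  classical
  obtain ⟨P, hPc, hP⟩ : ∃ P : (Fin n → ℝ) → (I^(Fin n)), Continuous P ∧ ∀ x, P (cubeCoe x) = x := by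
    refine ⟨fun y i => Set.projIcc 0 1 zero_le_one (y i), ?_, ?_⟩
    · exact continuous_pi fun i => continuous_projIcc.comp (continuous_apply i)
    · intro x; funext i; exact Set.projIcc_val _ _
  let fE : (I^(Fin n)) → EuclideanSpace ℝ (Fin (n+1)) := fun x => (f x : EuclideanSpace ℝ (Fin (n+1)))
  have hfE : Continuous fE := by fun_prop
  have hfES : ∀ x, fE x ∈ S := fun x => (f x).2
  let F : (Fin n → ℝ) → EuclideanSpace ℝ (Fin (n+1)) := fun y => fE (P y)
  have hF : Continuous F := hfE.comp hPc
  have hFS : ∀ y, F y ∈ S := fun y => (f (P y)).2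
  have hU : IsOpen {y | F y ≠ 0} := isOpen_ne_fun hF continuous_const
  obtain ⟨g, hgd, hg⟩ := exists_diff_selection hU
    (fun y => {u : EuclideanSpace ℝ (Fin (n+1)) | u 0 = (hinv (F y)) 0} ∩ Metric.ball (hinv (F y)) 1)
    (by
      intro y _
      refine Convex.inter ?_ (convex_ball _ _)
      intro a ha b hb s t hs ht hst
      simp only [Set.mem_ofPred_eq] at ha hb ⊢
      simp only [PiLp.add_apply, PiLp.smul_apply, smul_eq_mul, ha, hb]
      rw [← add_mul, hst, one_mul])
    (by
      intro y hy
      refine ⟨hinv (F y), ?_⟩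
      have h1 := continuousAt_const_of_idx hS hF hFS hy
      have h2 : ContinuousAt (fun y' => hinv (F y')) y :=
        (continuousAt_hinv hy).comp hF.continuousAt
      have h3 := h2.eventually (Metric.ball_mem_nhds _ one_pos)
      filter_upwards [h1, h3] with y' h1 h3
      exact ⟨h1.2.symm, by rw [Metric.mem_ball, dist_comm]; exact h3⟩)
  have hFc : ∀ x, F (cubeCoe x) = fE x := fun x => by simp only [F, hP]
  have hg0 : ∀ x, fE x ≠ 0 → g (cubeCoe x) 0 = (hinv (fE x)) 0 := by
    intro x hx
    have := (hg (cubeCoe x) (by rw [Set.mem_ofPred_eq, hFc]; exact hx)).1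
    rwa [Set.mem_ofPred_eq, hFc] at this
  have hg1 : ∀ x, fE x ≠ 0 → ‖g (cubeCoe x) - hinv (fE x)‖ < 1 := by
    intro x hx
    have := (hg (cubeCoe x) (by rw [Set.mem_ofPred_eq, hFc]; exact hx)).2
    rwa [Metric.mem_ball, hFc, dist_eq_norm] at this
  let V : I × (I^(Fin n)) → EuclideanSpace ℝ (Fin (n+1)) := fun p =>
    hinv (fE p.2) + (p.1 : ℝ) • (g (cubeCoe p.2) - hinv (fE p.2))
  have hV0 : ∀ p, fE p.2 ≠ 0 → (V p) 0 = (hinv (fE p.2)) 0 := by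
    intro p hp
    simp [V, hg0 p.2 hp]
  have hVne : ∀ p, fE p.2 ≠ 0 → V p ≠ 0 := by
    intro p hp h
    have := hV0 p hp
    rw [h] at this
    exact hS.idx_ne (hfES p.2) hp this.symm
  let h : I × (I^(Fin n)) → EuclideanSpace ℝ (Fin (n+1)) := fun p =>
    if fE p.2 = 0 then 0 else hinv (V p)
  have hc : Continuous h := by
    refine contH (f := fun p : I × (I^(Fin n)) => fE p.2) (by fun_prop) ?_ (δ := 1/4) (by norm_num) ?_
    · intro p hp
      have e1 : ∀ᶠ p' : I × (I^(Fin n)) in 𝓝 p, fE p'.2 ≠ 0 :=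
        (isOpen_ne_fun (by fun_prop) continuous_const).mem_nhds hp
      have e2 : h =ᶠ[𝓝 p] fun p => hinv (V p) := by
        filter_upwards [e1] with p' hp'
        simp [h, hp']
      refine ContinuousAt.congr ?_ e2.symm
      have hgc : ContinuousAt (fun p : I × (I^(Fin n)) => g (cubeCoe p.2)) p := by
        have : ContinuousAt g (cubeCoe p.2) :=
          ((hgd (cubeCoe p.2) (by rw [Set.mem_ofPred_eq, hFc]; exact hp)).differentiableAt
            (hU.mem_nhds (by rw [Set.mem_ofPred_eq, hFc]; exact hp))).continuousAt
        exact ContinuousAt.comp (f := fun p : I × (I^(Fin n)) => cubeCoe p.2) this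
          (continuous_cubeCoe.comp continuous_snd).continuousAt
      have hvc : ContinuousAt (fun p : I × (I^(Fin n)) => hinv (fE p.2)) p :=
        ContinuousAt.comp (f := fun p : I × (I^(Fin n)) => fE p.2) (continuousAt_hinv hp)
          (hfE.comp continuous_snd).continuousAt
      have hVc : ContinuousAt V p := by
        have : ContinuousAt (fun p : I × (I^(Fin n)) => (p.1 : ℝ)) p := by fun_prop
        exact hvc.add (this.smul (hgc.sub hvc))
      exact ContinuousAt.comp (f := V) (continuousAt_hinv (hVne p hp)) hVc
    · intro p hp
      by_cases h0 : fE p.2 = 0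
      · simp [h, h0]
      · simp only [h, h0, if_false]
        refine small_bound h0 hp rfl ?_
        have a1 := hg1 p.2 h0
        have a2 : ‖(p.1 : ℝ) • (g (cubeCoe p.2) - hinv (fE p.2))‖ ≤ 1 := by
          rw [norm_smul, Real.norm_eq_abs, abs_of_nonneg p.1.2.1]
          have := p.1.2.2
          have := p.1.2.1
          nlinarith [norm_nonneg (g (cubeCoe p.2) - hinv (fE p.2))]
        have a3 := norm_sub_norm_le (hinv (fE p.2)) (-((p.1 : ℝ) • (g (cubeCoe p.2) - hinv (fE p.2))))
        rw [norm_neg, sub_neg_eq_add] at a3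
        change _ ≤ ‖hinv (fE p.2) + (p.1 : ℝ) • (g (cubeCoe p.2) - hinv (fE p.2))‖
        linarith
  have hs : ∀ p, Sph (fE p.2) (h p) := by
    intro p
    by_cases h0 : fE p.2 = 0
    · left; simp [h, h0]
    · right
      refine ⟨h0, ?_⟩
      simp only [h, h0, if_false, hinv_hinv]
      exact hV0 p h0
  have hhom := homotopic_of hS hpt f
    (loopOf hS hpt f (fun x => h (1, x)) (by fun_prop) (fun x => hs (1, x))) h hc ?_ (fun x => rfl) hs
  · refine ⟨_, hhom, {y | F y ≠ 0}, g, hgd, ?_⟩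
    intro x hx
    have hx : h (1, x) ≠ 0 := hx
    change _ ∧ hinv (h (1, x)) = _
    by_cases h0 : fE x = 0
    · exact absurd (by simp [h, h0]) hx
    · refine ⟨by rw [Set.mem_ofPred_eq, hFc]; exact h0, ?_⟩
      simp [h, h0, hinv_hinv, V]
  · intro x
    by_cases h0 : fE x = 0
    · simp only [h, h0, if_true]; exact h0.symm
    · simp only [h, h0, if_false, V]
      simp [hinv_hinv, fE]

end smoothing2
section generic
variable {n : ℕ} {S : Set (EuclideanSpace ℝ (Fin (n+1)))}

lemma exists_generic (d : Fin n → ℕ) {U : Set (Fin n → ℝ)}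
    {g : (Fin n → ℝ) → EuclideanSpace ℝ (Fin (n+1))} (hg : DifferentiableOn ℝ g U) :
    ∃ q : EuclideanSpace ℝ (Fin (n+1)), q 0 = 0 ∧ ‖q‖ ≤ 1 ∧
      ∀ y ∈ U, (∃ i, ∃ p : ℕ, 2 ^ d i * y i = p) → Pt (g y) ≠ q := by
  let G : Set (Fin n → ℝ) := {y | ∃ i, ∃ p : ℕ, 2 ^ d i * y i = p}
  have hG : MeasureTheory.volume G = 0 := by
    have e : G = ⋃ i, ⋃ p : ℕ, {y : Fin n → ℝ | y i = p / 2 ^ d i} := by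
      ext y
      simp only [G, Set.mem_iUnion]
      refine exists_congr fun i => exists_congr fun p => ?_
      change _ ↔ y i = p / 2 ^ d i
      rw [eq_div_iff (by positivity), mul_comm]
    rw [e]
    refine MeasureTheory.measure_iUnion_null fun i => MeasureTheory.measure_iUnion_null fun p => ?_
    exact MeasureTheory.Measure.pi_hyperplane _ i _
  let tu : EuclideanSpace ℝ (Fin (n+1)) → (Fin n → ℝ) := fun u i => u i.succ
  have htu : Differentiable ℝ tu := by
    rw [differentiable_pi]
    intro i
    fun_prop
  have himg : MeasureTheory.volume ((tu ∘ g) '' (G ∩ U)) = 0 := by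
    apply MeasureTheory.addHaar_image_eq_zero_of_differentiableOn_of_addHaar_eq_zero
    · exact (htu.comp_differentiableOn hg).mono Set.inter_subset_right
    · exact MeasureTheory.measure_mono_null Set.inter_subset_left hG
  let sg : (Fin n → ℝ) → EuclideanSpace ℝ (Fin (n+1)) := fun w => WithLp.toLp 2 (Fin.cons 0 w)
  have hsg : Continuous sg := by
    refine (PiLp.continuous_toLp 2 _).comp ?_
    refine continuous_pi fun i => ?_
    refine Fin.cases ?_ (fun i => ?_) i
    · simp only [Fin.cons_zero]; fun_prop
    · simp only [Fin.cons_succ]; fun_prop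
  have hsg0 : sg 0 = 0 := by
    ext i
    refine Fin.cases ?_ (fun i => ?_) i <;> simp [sg]
  have hopen : IsOpen {w | ‖sg w‖ < 1} := isOpen_lt (by fun_prop) continuous_const
  have hpos : 0 < MeasureTheory.volume {w | ‖sg w‖ < 1} :=
    hopen.measure_pos _ ⟨0, by simp [hsg0]⟩
  obtain ⟨w, hw1, hw2⟩ : ∃ w, ‖sg w‖ < 1 ∧ w ∉ (tu ∘ g) '' (G ∩ U) := by
    by_contra! hcon
    have := MeasureTheory.measure_mono_null (μ := MeasureTheory.volume) (s := {w | ‖sg w‖ < 1}) hcon himg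
    exact hpos.ne' this
  refine ⟨sg w, by simp [sg], hw1.le, ?_⟩
  intro y hy hyG h
  apply hw2
  refine ⟨y, ⟨hyG, hy⟩, ?_⟩
  funext i
  have := congrArg (fun u : EuclideanSpace ℝ (Fin (n+1)) => u i.succ) h
  simpa [Pt, ezero, sg, tu] using this

lemma isClosed_grid {N : Type*} [Finite N] (d : N → ℕ) : IsClosed (grid d) := by
  have e : grid d = ⋃ i, (fun y : I^N => 2 ^ d i * (y i : ℝ)) ⁻¹' (Set.range (fun p : ℕ => (p : ℝ))) := by
    ext y
    simp only [grid, Set.mem_iUnion, Set.mem_preimage, Set.mem_range]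
    refine exists_congr fun i => exists_congr fun p => ?_
    exact eq_comm
  rw [e]
  refine isClosed_iUnion_of_finite fun i => ?_
  exact Nat.isClosedEmbedding_coe_real.isClosed_range.preimage (by fun_prop)

lemma exists_rho {N : Type*} [Finite N] (hS : IsFam S) (d : N → ℕ)
    {f : (I^N) → EuclideanSpace ℝ (Fin (n+1))} (hf : Continuous f) (hfS : ∀ x, f x ∈ S)
    {q : EuclideanSpace ℝ (Fin (n+1))} (hq : q 0 = 0)
    (h : ∀ x ∈ grid d, f x ≠ 0 → Pt (hinv (f x)) ≠ q) (a : ℝ) :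
    ∃ ρ, 0 < ρ ∧ ρ ≤ 1 ∧ ∀ x ∈ grid d, f x ≠ 0 → (hinv (f x)) 0 = a → ρ ≤ ‖Pt (hinv (f x)) - q‖ := by
  by_cases ha : a = 0
  · refine ⟨1, one_pos, le_rfl, fun x _ h0 h1 => ?_⟩
    exact absurd (h1.trans ha) (hS.idx_ne (hfS x) h0)
  · have hne : a • ezero n + q ≠ 0 := by
      intro h0
      have := congrArg (fun u : EuclideanSpace ℝ (Fin (n+1)) => u 0) h0
      simp [hq, ezero_apply] at this
      exact ha this
    have hcl : IsClosed (f '' grid d) := ((isClosed_grid d).isCompact.image hf).isClosed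
    have hz : hinv (a • ezero n + q) ∉ f '' grid d := by
      rintro ⟨x, hx, hxe⟩
      have h1 : hinv (f x) = a • ezero n + q := by rw [hxe, hinv_hinv]
      have h0 : f x ≠ 0 := by rw [hxe]; exact fun h => hne (hinv_eq_zero.mp h)
      apply h x hx h0
      rw [h1]
      simp [Pt, hq, ezero_apply]
    have hev := (continuousAt_hinv hne).eventually (hcl.isOpen_compl.mem_nhds hz)
    obtain ⟨r, hr, hball⟩ := Metric.eventually_nhds_iff.mp hev
    refine ⟨min r 1, by positivity, min_le_right _ _, fun x hx h0 h1 => ?_⟩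
    by_contra! hlt
    have h2 : dist (hinv (f x)) (a • ezero n + q) < r := by
      rw [dist_eq_norm, ← Pt_add (hinv (f x)), h1]
      have : a • ezero n + Pt (hinv (f x)) - (a • ezero n + q) = Pt (hinv (f x)) - q := by abel
      rw [this]
      exact hlt.trans_le (min_le_left _ _)
    have := hball h2
    rw [hinv_hinv] at this
    exact this ⟨x, hx, rfl⟩

lemma exists_depth {N : Type*} [Fintype N] {f : (I^N) → EuclideanSpace ℝ (Fin (n+1))}
    (hf : Continuous f) {δ : ℝ} (hδ : 0 < δ) : ∃ M : ℕ, ∀ v : N → ℕ, ∀ x ∈ cell (fun _ => M) v,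
      ∀ x' ∈ cell (fun _ => M) v, ‖f x - f x'‖ < δ := by
  have huc := CompactSpace.uniformContinuous_of_continuous hf
  obtain ⟨ε, hε, h⟩ := Metric.uniformContinuous_iff.mp huc δ hδ
  obtain ⟨M, hM⟩ := exists_pow_lt_of_lt_one hε (by norm_num : (1/2 : ℝ) < 1)
  refine ⟨M, fun v x hx x' hx' => ?_⟩
  rw [← dist_eq_norm]
  apply h
  refine lt_of_le_of_lt ?_ hM
  rw [dist_pi_le_iff (by positivity)]
  intro i
  rw [Subtype.dist_eq, Real.dist_eq, abs_le]
  have h1 := hx i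
  have h2 := hx' i
  have h3 : (0 : ℝ) < 2 ^ M := by positivity
  have h4 : (1/2 : ℝ) ^ M * 2 ^ M = 1 := by rw [← mul_pow]; norm_num
  simp only at h1 h2
  constructor
  · by_contra! hc
    nlinarith [mul_lt_mul_of_pos_right hc h3]
  · by_contra! hc
    nlinarith [mul_lt_mul_of_pos_right hc h3]

end generic
section decomposition
variable {n : ℕ}

lemma Ysub_idx {k : ℕ} {z : EuclideanSpace ℝ (Fin (n+1))} (hz : z ∈ Ysub n (k+1)) (h0 : z ≠ 0) :
    (hinv z) 0 ≤ ((k : ℝ) + 1) / 2 := by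
  simp only [Ysub, Set.mem_iUnion] at hz
  obtain ⟨j, hj, hz⟩ := hz
  rw [Finset.mem_Icc] at hj
  obtain h | h := (mem_hawSphere hj.1 z).mp hz
  · exact absurd h h0
  · rw [h]
    have : (j : ℝ) ≤ k + 1 := by exact_mod_cast hj.2
    linarith

lemma split_pi [Nontrivial (Fin n)] (k : ℕ)
    (α β : C(↥(hawaiian n), ↥(hawaiian n))) (hα : α (hawaiianPt n) = hawaiianPt n)
    (hβ : β (hawaiianPt n) = hawaiianPt n)
    (h1 : ∀ z : ↥(hawaiian n), (z : EuclideanSpace ℝ (Fin (n+1))) ∈ Ysub n (k+1) →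
      α z = z ∧ β z = hawaiianPt n)
    (h2 : ∀ z : ↥(hawaiian n), (z : EuclideanSpace ℝ (Fin (n+1))) ∉ Ysub n (k+1) →
      α z = hawaiianPt n ∧ β z = z)
    (γ : HomotopyGroup (Fin n) (hawaiian n) (hawaiianPt n)) :
    γ = piInduced (Fin n) α hα γ * piInduced (Fin n) β hβ γ := by
  obtain ⟨f, rfl⟩ := hmk_surj γ
  have hS := isFam_hawaiian n
  have hpt : ((hawaiianPt n : ↥(hawaiian n)) : EuclideanSpace ℝ (Fin (n+1))) = 0 := rfl
  obtain ⟨f0, hf0, U, g, hgd, hg⟩ := smooth_loop hS hpt f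
  have hf0c : Continuous (fun x => (f0 x : EuclideanSpace ℝ (Fin (n+1)))) := by fun_prop
  obtain ⟨B, hB⟩ : ∃ B : ℝ, B = ((k : ℝ) + 1) / 2 + 2 := ⟨_, rfl⟩
  have hB0 : 0 < B := by rw [hB]; positivity
  obtain ⟨δ, hδ, hclose⟩ := hinv_close (m := n+1) (inv_pos.mpr hB0)
  obtain ⟨M, hM⟩ := exists_depth hf0c hδ
  obtain ⟨q, hq0, hq1, hq⟩ := exists_generic (fun _ => M) hgd
  have hρe := exists_rho hS (fun _ => M) hf0c (fun x => (f0 x).2) hq0 (by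
    intro x hx hx0
    obtain ⟨hxU, hxe⟩ := hg x hx0
    rw [hxe]
    exact hq _ hxU hx)
  choose ρ hρ0 hρ1 hρ using hρe
  have hf1 := eLoop_homotopic hS hpt hq0 hq1 hρ0 f0
  have happ : ∀ x, (eLoop hS hpt hq0 hq1 hρ0 f0 x : EuclideanSpace ℝ (Fin (n+1))) =
      eHom q ρ (fun x => (f0 x : EuclideanSpace ℝ (Fin (n+1)))) (1, x) :=
    eLoop_apply hS hpt hq0 hq1 hρ0 f0
  obtain ⟨f1, hf1e⟩ : ∃ f1, f1 = eLoop hS hpt hq0 hq1 hρ0 f0 := ⟨_, rfl⟩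
  rw [← hf1e] at hf1 happ
  have hγ : hmk f = hmk f1 := hmk_eq.mpr (hf0.trans hf1)
  rw [hγ]
  have hsph : ∀ x, Sph (f0 x : EuclideanSpace ℝ (Fin (n+1))) (f1 x : EuclideanSpace ℝ (Fin (n+1))) := by
    intro x
    rw [happ]
    exact eHom_sph hq0 hρ0 (fun x => (f0 x : EuclideanSpace ℝ (Fin (n+1)))) (1, x)
  have hnz : ∀ x, (f1 x : EuclideanSpace ℝ (Fin (n+1))) ≠ 0 →
      (f0 x : EuclideanSpace ℝ (Fin (n+1))) ≠ 0 ∧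
      ‖Pt (hinv (f0 x : EuclideanSpace ℝ (Fin (n+1)))) - q‖ <
        ρ ((hinv (f0 x : EuclideanSpace ℝ (Fin (n+1)))) 0) := by
    intro x hx
    rw [happ, eHom] at hx
    by_cases h0 : (f0 x : EuclideanSpace ℝ (Fin (n+1))) = 0
    · simp [h0] at hx
    · refine ⟨h0, ?_⟩
      by_contra! hle
      apply hx
      simp only [h0, if_false]
      exact eMap_eq_zero q (hρ0 _) (by simpa using hle)
  refine dyadic_split α β hα hβ _ (fun _ => M) rfl f1 ?_ ?_
  · intro x hx
    apply Subtype.ext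
    by_contra hne
    obtain ⟨h0, hlt⟩ := hnz x hne
    exact absurd (hρ _ x hx h0 rfl) (not_le.mpr hlt)
  · intro v
    by_cases hex : ∃ x ∈ cell (fun _ => M) v, (f1 x : EuclideanSpace ℝ (Fin (n+1))) ≠ 0 ∧
        (f1 x : EuclideanSpace ℝ (Fin (n+1))) ∈ Ysub n (k+1)
    · left
      obtain ⟨x, hx, hx0, hxY⟩ := hex
      intro x' hx'
      apply h1
      obtain ⟨h0, hlt⟩ := hnz x hx0
      have hidx : (hinv (f1 x : EuclideanSpace ℝ (Fin (n+1)))) 0 =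
          (hinv (f0 x : EuclideanSpace ℝ (Fin (n+1)))) 0 := by
        obtain h | h := hsph x
        · exact absurd h hx0
        · exact h.2
      have hle := Ysub_idx hxY hx0
      rw [hidx] at hle
      have hpos : 0 ≤ (hinv (f0 x : EuclideanSpace ℝ (Fin (n+1)))) 0 := by
        obtain ⟨j, -, hj⟩ := hS.idx _ (f0 x).2 h0
        rw [hj]; positivity
      have hbd : ‖hinv (f0 x : EuclideanSpace ℝ (Fin (n+1)))‖ ≤ B := by
        have a1 := norm_Pt_ge (hinv (f0 x : EuclideanSpace ℝ (Fin (n+1))))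
        have a2 := norm_sub_norm_le (Pt (hinv (f0 x : EuclideanSpace ℝ (Fin (n+1))))) q
        have a3 := hρ1 ((hinv (f0 x : EuclideanSpace ℝ (Fin (n+1)))) 0)
        rw [abs_of_nonneg hpos] at a1
        rw [hB]
        linarith
      have hη : B⁻¹ ≤ ‖(f0 x : EuclideanSpace ℝ (Fin (n+1)))‖ := by
        rw [norm_hinv] at hbd
        exact inv_le_of_inv_le₀ (norm_pos_iff.mpr h0) hbd
      obtain ⟨h0', hcl⟩ := hclose _ _ hη (hM v x hx x' hx')
      have hidx' := idx_eq_of_close hS (f0 x).2 (f0 x').2 h0 h0' hcl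
      refine (isFam_Ysub n k).sph _ hxY _ ?_
      obtain h | h := hsph x'
      · exact Or.inl h
      · exact Or.inr ⟨hx0, by rw [h.2, hidx', hidx]⟩
    · right
      intro x hx
      by_cases hx0 : (f1 x : EuclideanSpace ℝ (Fin (n+1))) = 0
      · have : f1 x = hawaiianPt n := Subtype.ext hx0
        rw [this]
        exact ⟨hα, hβ⟩
      · apply h2
        intro hY
        exact hex ⟨x, hx, hx0, hY⟩

end decomposition

section final

lemma isOpen_hmk {N X : Type*} [TopologicalSpace X] {x : X} {s : Set (HomotopyGroup N X x)} :
    IsOpen s ↔ IsOpen {f : Ω^ N X x | hmk f ∈ s} := Iff.rfl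

lemma loop_ball_mem_nhds {N X : Type*} [PseudoMetricSpace X] {x : X} (f : Ω^ N X x) {ε : ℝ}
    (hε : 0 < ε) : {b : Ω^ N X x | ∀ t, dist (f t) (b t) < ε} ∈ 𝓝 f := by
  have h1 : {c : C(I^N, X) | dist c f.1 < ε} ∈ 𝓝 f.1 := Metric.ball_mem_nhds _ hε
  have h2 : ContinuousAt (fun b : Ω^ N X x => b.1) f := continuous_subtype_val.continuousAt
  filter_upwards [h2 h1] with b hb t
  have hb : dist b.1 f.1 < ε := hb
  rw [dist_comm]
  exact (ContinuousMap.dist_apply_le_dist t).trans_lt hb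

lemma exists_ball_of_mem_nhds {N X : Type*} [PseudoMetricSpace X] {x : X} (f : Ω^ N X x)
    {s : Set (Ω^ N X x)} (hs : s ∈ 𝓝 f) :
    ∃ ε > 0, ∀ b : Ω^ N X x, (∀ t, dist (b t) (f t) < ε) → b ∈ s := by
  rw [nhds_subtype_eq_comap, Filter.mem_comap] at hs
  obtain ⟨u, hu, hus⟩ := hs
  obtain ⟨ε, hε, hb⟩ := Metric.mem_nhds_iff.mp hu
  refine ⟨ε, hε, fun b h => hus (hb ?_)⟩
  rw [Metric.mem_ball, ContinuousMap.dist_lt_iff hε]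
  exact h

lemma continuous_compCM {N X Y : Type*} [TopologicalSpace X] [TopologicalSpace Y] {x : X} {y : Y}
    (φ : C(X, Y)) (hφ : φ x = y) :
    Continuous (GenLoop.compCM φ hφ : Ω^ N X x → Ω^ N Y y) := by
  refine Continuous.subtype_mk ?_ _
  exact (ContinuousMap.continuous_postcomp φ).comp continuous_subtype_val

lemma norm_le_of_notMem_Ysub {n k : ℕ} {z : EuclideanSpace ℝ (Fin (n+1))} (hz : z ∈ hawaiian n)
    (hY : z ∉ Ysub n (k+1)) : ∃ j : ℕ, k + 1 < j ∧ z ∈ hawSphere n j ∧ ‖z‖ ≤ 2 / ((k : ℝ) + 1) := by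
  simp only [hawaiian, Set.mem_iUnion] at hz
  obtain ⟨j, hj, hz⟩ := hz
  have hj : 1 ≤ j := hj
  have hkj : k + 1 < j := by
    by_contra! hle
    apply hY
    simp only [Ysub, Set.mem_iUnion]
    exact ⟨j, Finset.mem_Icc.mpr ⟨hj, hle⟩, hz⟩
  refine ⟨j, hkj, hz, ?_⟩
  obtain h | h := (mem_hawSphere hj z).mp hz
  · rw [h, norm_zero]; positivity
  · have h3 := PiLp.norm_apply_le (hinv z) 0
    rw [h, norm_hinv, Real.norm_eq_abs, abs_of_nonneg (by positivity)] at h3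
    have h4 : ((k : ℝ) + 1) / 2 ≤ ‖z‖⁻¹ := by
      have : (k : ℝ) + 1 ≤ j := by exact_mod_cast hkj.le
      linarith
    have := inv_anti₀ (by positivity) h4
    rwa [inv_inv, inv_div] at this

lemma Ysub_subset (n k : ℕ) : Ysub n (k+1) ⊆ hawaiian n := by
  intro z hz
  simp only [Ysub, hawaiian, Set.mem_iUnion] at hz ⊢
  obtain ⟨j, hj, hz⟩ := hz
  exact ⟨j, (Finset.mem_Icc.mp hj).1, hz⟩

end final

/-- For `n = m+2 ≥ 2`, the kernels `ker((R_k)_*)` of the homomorphisms induced by the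
retractions `R_k : ℋ_n → Y_{k+1}^{(n)}` form a neighborhood basis of the identity of
`π_n^{top}(ℋ_n, 0)`: each kernel is a neighborhood of the identity, and every neighborhood
of the identity contains one of the kernels. -/
theorem kernels_nhds_basis (m : ℕ)
    (R : ∀ i : ℕ, C(↥(hawaiian (m+2)), ↥(Ysub (m+2) (i+1))))
    (hRfix : ∀ (i : ℕ) (z : ↥(hawaiian (m+2))),
      (z : EuclideanSpace ℝ (Fin (m+3))) ∈ Ysub (m+2) (i+1) →
      ((R i z : ↥(Ysub (m+2) (i+1))) : EuclideanSpace ℝ (Fin (m+3))) = z)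
    (hRcoll : ∀ (i j : ℕ), i + 1 < j → ∀ z : ↥(hawaiian (m+2)),
      (z : EuclideanSpace ℝ (Fin (m+3))) ∈ hawSphere (m+2) j →
      ((R i z : ↥(Ysub (m+2) (i+1))) : EuclideanSpace ℝ (Fin (m+3))) = 0)
    (hR0 : ∀ i : ℕ, R i (hawaiianPt (m+2)) = YsubPt (m+2) i)
    :
    (∀ k : ℕ,
      {γ : HomotopyGroup (Fin (m+2)) (hawaiian (m+2)) (hawaiianPt (m+2)) |
        piInduced (Fin (m+2)) (R k) (hR0 k) γ = 1} ∈
        nhds (1 : HomotopyGroup (Fin (m+2)) (hawaiian (m+2)) (hawaiianPt (m+2)))) ∧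
    ∀ W ∈ nhds (1 : HomotopyGroup (Fin (m+2)) (hawaiian (m+2)) (hawaiianPt (m+2))),
      ∃ k : ℕ,
        {γ : HomotopyGroup (Fin (m+2)) (hawaiian (m+2)) (hawaiianPt (m+2)) |
          piInduced (Fin (m+2)) (R k) (hR0 k) γ = 1} ⊆ W := by
  have hpt : ((hawaiianPt (m+2) : ↥(hawaiian (m+2))) : EuclideanSpace ℝ (Fin (m+3))) = 0 := rfl
  constructor
  · intro k
    refine IsOpen.mem_nhds ?_ ?_
    · rw [isOpen_hmk, isOpen_iff_mem_nhds]
      intro f hf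
      obtain ⟨ε, hε, hclose⟩ := close_homotopic (N := Fin (m+2)) (isFam_Ysub (m+2) k)
        (pt := YsubPt (m+2) k) rfl (K := ((k : ℝ) + 1) / 2) (by positivity)
        (fun z hz h0 => Ysub_idx hz h0)
      have h1 := (continuous_compCM (N := Fin (m+2)) (R k) (hR0 k)).continuousAt (x := f)
        (loop_ball_mem_nhds _ hε)
      filter_upwards [h1] with b hb
      have hb' := hclose _ _ hb
      have hf : piInduced (Fin (m+2)) (R k) (hR0 k) (hmk f) = 1 := hf
      change piInduced (Fin (m+2)) (R k) (hR0 k) (hmk b) = 1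
      rw [piInduced_hmk] at hf ⊢
      rw [← hf]
      exact (hmk_eq.mpr hb').symm
    · change piInduced (Fin (m+2)) (R k) (hR0 k) 1 = 1
      rw [← hmk_const, ← hmk_const, piInduced_hmk]
      congr 1
      ext t
      exact congrArg (fun z : ↥(Ysub (m+2) (k+1)) => (z : EuclideanSpace ℝ (Fin (m+3))) _) (hR0 k)
  · intro W hW
    obtain ⟨O, hOW, hO, h1O⟩ := mem_nhds_iff.mp hW
    rw [isOpen_hmk] at hO
    obtain ⟨ε, hε, hball⟩ := exists_ball_of_mem_nhds
      (GenLoop.const : Ω^ (Fin (m+2)) (hawaiian (m+2)) (hawaiianPt (m+2)))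
      (hO.mem_nhds (by exact h1O))
    obtain ⟨k, hk⟩ := exists_nat_gt (2 / ε)
    have hk' : 2 / ((k : ℝ) + 1) < ε := by
      rw [div_lt_iff₀ hε] at hk
      rw [div_lt_iff₀ (by positivity)]
      nlinarith
    refine ⟨k, fun γ hγ => hOW ?_⟩
    have hγ : piInduced (Fin (m+2)) (R k) (hR0 k) γ = 1 := hγ
    -- the two self-maps
    have hdich : ∀ z : ↥(hawaiian (m+2)), (z : EuclideanSpace ℝ (Fin (m+3))) ∉ Ysub (m+2) (k+1) →
        ((R k z : ↥(Ysub (m+2) (k+1))) : EuclideanSpace ℝ (Fin (m+3))) = 0 := by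
      intro z hz
      obtain ⟨j, hj, hzj, -⟩ := norm_le_of_notMem_Ysub z.2 hz
      exact hRcoll k j hj z hzj
    let inc : C(↥(Ysub (m+2) (k+1)), ↥(hawaiian (m+2))) :=
      ⟨fun z => ⟨z, Ysub_subset (m+2) k z.2⟩, by fun_prop⟩
    have hinc : inc (YsubPt (m+2) k) = hawaiianPt (m+2) := rfl
    let α : C(↥(hawaiian (m+2)), ↥(hawaiian (m+2))) := inc.comp (R k)
    let β : C(↥(hawaiian (m+2)), ↥(hawaiian (m+2))) :=
      ⟨fun z => ⟨(z : EuclideanSpace ℝ (Fin (m+3))) -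
          ((R k z : ↥(Ysub (m+2) (k+1))) : EuclideanSpace ℝ (Fin (m+3))), by
        by_cases hz : (z : EuclideanSpace ℝ (Fin (m+3))) ∈ Ysub (m+2) (k+1)
        · rw [hRfix k z hz, sub_self]
          exact zero_mem_hawaiian _
        · rw [hdich z hz, sub_zero]
          exact z.2⟩, by fun_prop⟩
    have hα : α (hawaiianPt (m+2)) = hawaiianPt (m+2) := by
      change inc (R k _) = _
      rw [hR0, hinc]
    have hβv : ∀ z, ((β z : ↥(hawaiian (m+2))) : EuclideanSpace ℝ (Fin (m+3))) =
      (z : EuclideanSpace ℝ (Fin (m+3))) -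
          ((R k z : ↥(Ysub (m+2) (k+1))) : EuclideanSpace ℝ (Fin (m+3))) := fun _ => rfl
    have h1 : ∀ z : ↥(hawaiian (m+2)), (z : EuclideanSpace ℝ (Fin (m+3))) ∈ Ysub (m+2) (k+1) →
        α z = z ∧ β z = hawaiianPt (m+2) := by
      intro z hz
      refine ⟨Subtype.ext (hRfix k z hz), Subtype.ext ?_⟩
      rw [hβv, hRfix k z hz, sub_self, hpt]
    have h2 : ∀ z : ↥(hawaiian (m+2)), (z : EuclideanSpace ℝ (Fin (m+3))) ∉ Ysub (m+2) (k+1) →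
        α z = hawaiianPt (m+2) ∧ β z = z := by
      intro z hz
      refine ⟨Subtype.ext (hdich z hz), Subtype.ext ?_⟩
      rw [hβv, hdich z hz, sub_zero]
    have hβ : β (hawaiianPt (m+2)) = hawaiianPt (m+2) := (h1 _ (zero_mem_Ysub _ _)).2
    have hsplit := split_pi k α β hα hβ h1 h2 γ
    have hα1 : piInduced (Fin (m+2)) α hα γ = 1 := by
      have e : piInduced (Fin (m+2)) α hα γ =
          piInduced (Fin (m+2)) inc hinc (piInduced (Fin (m+2)) (R k) (hR0 k) γ) := by
        obtain ⟨f, rfl⟩ := hmk_surj γ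
        rfl
      rw [e, hγ, ← hmk_const, ← hmk_const, piInduced_hmk]
      rfl
    rw [hα1, one_mul] at hsplit
    rw [hsplit]
    obtain ⟨f, rfl⟩ := hmk_surj γ
    rw [piInduced_hmk]
    refine hball _ fun t => lt_of_le_of_lt ?_ hk'
    change dist (β (f t)) (hawaiianPt (m+2)) ≤ _
    rw [Subtype.dist_eq, hpt, dist_zero_right]
    by_cases hz : ((f t : ↥(hawaiian (m+2))) : EuclideanSpace ℝ (Fin (m+3))) ∈ Ysub (m+2) (k+1)
    · rw [(h1 _ hz).2, hpt, norm_zero]; positivity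
    · rw [(h2 _ hz).2]
      obtain ⟨j, -, -, h⟩ := norm_le_of_notMem_Ysub (f t).2 hz
      exact h
end
end
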